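/- Let M be a non-quasianalytic regular weight sequence of moderate growth and let d ≥ 1. Then the ring of germs at 0 ∈ ℝ^d of complex-valued E^{M}-functions has property (D): for every function f defined on an open neighborhood of 0 in ℝ^d and every integer j ≥ 1, if f^j and f^{j+1} are of class E^{M} on some open neighborhood of 0, then f is of class E^{M} on some open neighborhood of 0. -/

import Mathlib

/-!
Regularity of `M` provides a growth scale `Λ n = m (n + 1) / m n`, for which derivative bounds by
`C * σ ^ k * M k` are tested on discs of radius comparable to `1 / Λ n`. Along a line, let `p` and
`q` be the Taylor polynomials of degree `n` of `f ^ j` and `f ^ (j + 1)`. On such a disc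
`p ^ (j + 1)` and `q ^ j` agree up to a geometrically small error. To divide `q` by `p` one takes
the Cauchy transform of a regularization of `q / p`; its `∂̄`-derivative is dominated by `p' / p`,
whose `L¹` norm is at most proportional to `deg p`. The quotient is an almost `j`-th root of `p`,
because multiplication by `p ^ j` can be undone after reflecting the zeros of `p` out of the disc.

This gives holomorphic functions `G n`, on shrinking discs, with `‖G n - f‖ = O(κ ^ n)` for any
prescribed `κ > 0`. Telescoping the `G n` and applying Cauchy's estimates to each piece bounds the
`k`-th differences of `f` along lines by `D * S ^ k * M k * t ^ k`. Such bounds pass to the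
mollifications of `f`, hence by polarization to all their derivatives, and from there to `f`.
-/

open Filter Set Asymptotics MeasureTheory

noncomputable section

/-- `M` is a weight sequence: `M 0 = 1`, positive, `M 1 ≥ 1`, log-convex and
`M k ^ (1/k) → ∞`. -/
def IsWeightSeq (M : ℕ → ℝ) : Prop :=
  M 0 = 1 ∧ (∀ k, 0 < M k) ∧ 1 ≤ M 1 ∧
    (∀ k : ℕ, 1 ≤ k → M k ^ 2 ≤ M (k - 1) * M (k + 1)) ∧
    Tendsto (fun k : ℕ => M k ^ (1 / (k : ℝ))) atTop atTop

/-- The sequence `m k = M k / k!`. -/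
def mseq (M : ℕ → ℝ) : ℕ → ℝ := fun k => M k / (Nat.factorial k : ℝ)

/-- Log-convexity of a sequence. -/
def LogConvexSeq (m : ℕ → ℝ) : Prop := ∀ k : ℕ, 1 ≤ k → m k ^ 2 ≤ m (k - 1) * m (k + 1)

/-- `m k ^ (1/k) → ∞`. -/
def RootTendsToInfty (m : ℕ → ℝ) : Prop :=
  Tendsto (fun k : ℕ => m k ^ (1 / (k : ℝ))) atTop atTop

/-- Moderate growth of a sequence. -/
def ModerateGrowth (M : ℕ → ℝ) : Prop :=
  ∃ C : ℝ, 0 < C ∧ ∀ j k : ℕ, M (j + k) ≤ C ^ (j + k) * M j * M k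

/-- Derivation closedness of a sequence. -/
def DerivClosed (M : ℕ → ℝ) : Prop :=
  ∃ C : ℝ, 0 < C ∧ ∀ k : ℕ, M (k + 1) ≤ C ^ (k + 1) * M k

/-- Non-quasianalyticity: `∑_{k≥1} M (k-1) / M k = ∑_{k≥1} 1/μ_k < ∞`. -/
def NonQuasianalytic (M : ℕ → ℝ) : Prop := Summable fun k : ℕ => M k / M (k + 1)

/-- Quasianalyticity: `∑_{k≥1} 1/μ_k = ∞`. -/
def Quasianalytic (M : ℕ → ℝ) : Prop := ¬ NonQuasianalytic M

/-- The associated function `h_m (t) = inf_k m k * t ^ k`. -/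
def hFun (m : ℕ → ℝ) (t : ℝ) : ℝ := ⨅ k : ℕ, m k * t ^ k

/-- `Γ̄_m (t) = min {k | h_m t = m k * t ^ k}`. -/
def GammaBar (m : ℕ → ℝ) (t : ℝ) : ℕ := sInf {k : ℕ | hFun m t = m k * t ^ k}

/-- `Γ̲_m (t) = min {k | m (k+1) / m k ≥ 1 / t}`. -/
def GammaLow (m : ℕ → ℝ) (t : ℝ) : ℕ := sInf {k : ℕ | 1 / t ≤ m (k + 1) / m k}

/-- The set whose supremum is `mg (M, N)`. -/
def mgSet (M N : ℕ → ℝ) : Set ℝ :=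
  {x | ∃ j k : ℕ, 1 ≤ j + k ∧ x = (M (j + k) / (N j * N k)) ^ (1 / (j + k : ℝ))}

/-- `mg (M, N) = sup_{j+k ≥ 1} (M (j+k) / (N j * N k)) ^ (1/(j+k))`. -/
def mg (M N : ℕ → ℝ) : ℝ := sSup (mgSet M N)

/-- `mg (M, N) < ∞`. -/
def MgFinite (M N : ℕ → ℝ) : Prop := BddAbove (mgSet M N)

/-- A weight sequence is regular: `m k ^ (1/k) → ∞`, derivation closed, and
`Γ̄_m (C t) ≤ Γ̲_m t` for some `C ≥ 1`. -/
def RegularWS (M : ℕ → ℝ) : Prop :=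
  RootTendsToInfty (mseq M) ∧ DerivClosed M ∧
    ∃ C : ℝ, 1 ≤ C ∧ ∀ t : ℝ, 0 < t → GammaBar (mseq M) (C * t) ≤ GammaLow (mseq M) t

/-- `f` is of class `E^{M}` (Roumieu) on the open set `U`. -/
def RoumieuOn {E : Type*} [NormedAddCommGroup E] [NormedSpace ℝ E]
    (M : ℕ → ℝ) (f : E → ℂ) (U : Set E) : Prop :=
  ContDiffOn ℝ (⊤ : ℕ∞) f U ∧
    ∀ V : Set E, IsOpen V → IsCompact (closure V) → closure V ⊆ U →
      ∃ C σ : ℝ, 0 < C ∧ 0 < σ ∧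
        ∀ x ∈ V, ∀ k : ℕ, ‖iteratedFDerivWithin ℝ k f U x‖ ≤ C * σ ^ k * M k

/-- `f` is of class `E^{(M)}` (Beurling) on the open set `U`. -/
def BeurlingOn {E : Type*} [NormedAddCommGroup E] [NormedSpace ℝ E]
    (M : ℕ → ℝ) (f : E → ℂ) (U : Set E) : Prop :=
  ContDiffOn ℝ (⊤ : ℕ∞) f U ∧
    ∀ V : Set E, IsOpen V → IsCompact (closure V) → closure V ⊆ U →
      ∀ σ : ℝ, 0 < σ → ∃ C : ℝ, 0 < C ∧
        ∀ x ∈ V, ∀ k : ℕ, ‖iteratedFDerivWithin ℝ k f U x‖ ≤ C * σ ^ k * M k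

/-- A weight matrix: a nonempty, pointwise totally ordered family of weight sequences. -/
def IsWeightMatrix (W : Set (ℕ → ℝ)) : Prop :=
  W.Nonempty ∧ (∀ M ∈ W, IsWeightSeq M) ∧
    ∀ M ∈ W, ∀ N ∈ W, (∀ k, M k ≤ N k) ∨ (∀ k, N k ≤ M k)

/-- R-regularity of a weight matrix. -/
def RRegular (W : Set (ℕ → ℝ)) : Prop :=
  (∀ M ∈ W, RootTendsToInfty (mseq M)) ∧
    (∀ M ∈ W, ∃ N ∈ W, ∃ C : ℝ, 1 ≤ C ∧ ∀ j : ℕ, M (j + 1) ≤ C ^ (j + 1) * N j) ∧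
    (∀ M ∈ W, ∃ N ∈ W, ∃ C : ℝ, 1 ≤ C ∧
      ∀ t : ℝ, 0 < t → GammaBar (mseq N) (C * t) ≤ GammaLow (mseq M) t)

/-- B-regularity of a weight matrix. -/
def BRegular (W : Set (ℕ → ℝ)) : Prop :=
  (∀ M ∈ W, RootTendsToInfty (mseq M)) ∧
    (∀ M ∈ W, ∃ N ∈ W, ∃ C : ℝ, 1 ≤ C ∧ ∀ j : ℕ, N (j + 1) ≤ C ^ j * M j) ∧
    (∀ M ∈ W, ∃ N ∈ W, ∃ C : ℝ, 1 ≤ C ∧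
      ∀ t : ℝ, 0 < t → GammaBar (mseq M) (C * t) ≤ GammaLow (mseq N) t)

/-- R-moderate growth of a weight matrix. -/
def RModerateGrowth (W : Set (ℕ → ℝ)) : Prop := ∀ M ∈ W, ∃ N ∈ W, MgFinite M N

/-- B-moderate growth of a weight matrix. -/
def BModerateGrowth (W : Set (ℕ → ℝ)) : Prop := ∀ M ∈ W, ∃ N ∈ W, MgFinite N M

/-- `f` is of class `E^{W}` (Roumieu, weight matrix) on the open set `U`. -/
def MatrixRoumieuOn {E : Type*} [NormedAddCommGroup E] [NormedSpace ℝ E]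
    (W : Set (ℕ → ℝ)) (f : E → ℂ) (U : Set E) : Prop :=
  ContDiffOn ℝ (⊤ : ℕ∞) f U ∧
    ∀ V : Set E, IsOpen V → IsCompact (closure V) → closure V ⊆ U →
      ∃ M ∈ W, ∃ C σ : ℝ, 0 < C ∧ 0 < σ ∧
        ∀ x ∈ V, ∀ k : ℕ, ‖iteratedFDerivWithin ℝ k f U x‖ ≤ C * σ ^ k * M k

/-- `f` is of class `E^{(W)}` (Beurling, weight matrix) on the open set `U`. -/
def MatrixBeurlingOn {E : Type*} [NormedAddCommGroup E] [NormedSpace ℝ E]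
    (W : Set (ℕ → ℝ)) (f : E → ℂ) (U : Set E) : Prop :=
  ContDiffOn ℝ (⊤ : ℕ∞) f U ∧
    ∀ V : Set E, IsOpen V → IsCompact (closure V) → closure V ⊆ U →
      ∀ M ∈ W, ∀ σ : ℝ, 0 < σ → ∃ C : ℝ, 0 < C ∧
        ∀ x ∈ V, ∀ k : ℕ, ‖iteratedFDerivWithin ℝ k f U x‖ ≤ C * σ ^ k * M k

/-- `ω` is a weight function. -/
def IsWeightFunction (ω : ℝ → ℝ) : Prop :=
  ContinuousOn ω (Ici 0) ∧ MonotoneOn ω (Ici 0) ∧ (∀ t ∈ Ici (0 : ℝ), 0 ≤ ω t) ∧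
    ((fun t => ω (2 * t)) =O[atTop] ω) ∧ (ω =o[atTop] fun t : ℝ => t) ∧
    ((fun t => Real.log t) =o[atTop] ω) ∧ ConvexOn ℝ (Ici 0) fun t => ω (Real.exp t)

/-- The Young conjugate `φ*_ω (s) = sup_{t ≥ 0} (s t - ω (e^t))`. -/
def phiStar (ω : ℝ → ℝ) (s : ℝ) : ℝ := sSup ((fun t => s * t - ω (Real.exp t)) '' Ici 0)

/-- Non-quasianalyticity of a weight function. -/
def NonQuasianalyticW (ω : ℝ → ℝ) : Prop := IntegrableOn (fun t => ω t / t ^ 2) (Ici 1)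

/-- `f` is of class `E^{ω}` (Roumieu) on the open set `U`. -/
def OmegaRoumieuOn {E : Type*} [NormedAddCommGroup E] [NormedSpace ℝ E]
    (ω : ℝ → ℝ) (f : E → ℂ) (U : Set E) : Prop :=
  ContDiffOn ℝ (⊤ : ℕ∞) f U ∧
    ∀ V : Set E, IsOpen V → IsCompact (closure V) → closure V ⊆ U →
      ∃ C ρ : ℝ, 0 < C ∧ 0 < ρ ∧
        ∀ x ∈ V, ∀ k : ℕ,
          ‖iteratedFDerivWithin ℝ k f U x‖ ≤ C * Real.exp (phiStar ω (ρ * k) / ρ)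

/-- `f` is of class `E^{(ω)}` (Beurling) on the open set `U`. -/
def OmegaBeurlingOn {E : Type*} [NormedAddCommGroup E] [NormedSpace ℝ E]
    (ω : ℝ → ℝ) (f : E → ℂ) (U : Set E) : Prop :=
  ContDiffOn ℝ (⊤ : ℕ∞) f U ∧
    ∀ V : Set E, IsOpen V → IsCompact (closure V) → closure V ⊆ U →
      ∀ ρ : ℝ, 0 < ρ → ∃ C : ℝ, 0 < C ∧
        ∀ x ∈ V, ∀ k : ℕ,
          ‖iteratedFDerivWithin ℝ k f U x‖ ≤ C * Real.exp (phiStar ω (ρ * k) / ρ)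

/-- The open ellipse `Ω_ε` with vertices `± cosh ε` and co-vertices `± i sinh ε`. -/
def OmegaE (ε : ℝ) : Set ℂ :=
  {z : ℂ | (z.re / Real.cosh ε) ^ 2 + (z.im / Real.sinh ε) ^ 2 < 1}

/-- The sequence space `Λ^{M}`. -/
def Lambda (M : ℕ → ℝ) : Set (ℕ → ℂ) :=
  {c | ∃ ρ : ℝ, 0 < ρ ∧ ∃ C : ℝ, ∀ k, ‖c k‖ ≤ C * ρ ^ k * M k}

/-- `L(M)`: all non-quasianalytic weight sequences `N ≥ M` with `n = N/k!` log-convex. -/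
def LM (M : ℕ → ℝ) : Set (ℕ → ℝ) :=
  {N | IsWeightSeq N ∧ NonQuasianalytic N ∧ (∀ k, M k ≤ N k) ∧ LogConvexSeq (mseq N)}

/-- A quasianalytic weight sequence `M` is intersectable if `Λ^{M} = ⋂_{N ∈ L(M)} Λ^{N}`. -/
def Intersectable (M : ℕ → ℝ) : Prop := Lambda M = ⋂ N ∈ LM M, Lambda N

open scoped fwdDiff ContDiff Topology Convolution

section FiniteDifferences

theorem fwdDiff_iter_comp_line {R E G : Type*} [Ring R] [AddCommGroup E] [Module R E]
    [AddCommGroup G] (g : E → G) (x v : E) (t : R) (k : ℕ) :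
    Δ_[t] ^[k] (fun s : R => g (x + s • v)) 0 = Δ_[t • v] ^[k] g x := by
  simp only [fwdDiff_iter_eq_sum_shift, zero_add, smul_assoc]

variable {E F : Type*} [NormedAddCommGroup E] [NormedSpace ℝ E]
  [NormedAddCommGroup F] [NormedSpace ℝ F]

theorem norm_fwdDiff_iter_sub_le {k : ℕ} {G : ℕ → ℝ → F} {c : F} {ε t x : ℝ} (ht : 0 ≤ t)
    (hG : ∀ i < k, ∀ s ∈ Icc x (x + k * t), HasDerivAt (G i) (G (i + 1) s) s)
    (hε : ∀ s ∈ Icc x (x + k * t), ‖G k s - c‖ ≤ ε) :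
    ‖Δ_[t] ^[k] (G 0) x - t ^ k • c‖ ≤ t ^ k * ε := by
  induction k generalizing G c ε with
  | zero => simpa using hε x (by simp)
  | succ k ih =>
    have hlen : x + (k + 1 : ℕ) * t = x + k * t + t := by push_cast; ring
    rw [hlen] at hG hε
    have hshift : ∀ s ∈ Icc x (x + k * t), Icc s (s + t) ⊆ Icc x (x + k * t + t) := fun s hs =>
      Icc_subset_Icc hs.1 (by linarith [hs.2])
    have hderiv : ∀ i < k, ∀ s ∈ Icc x (x + k * t),
        HasDerivAt (Δ_[t] (G i)) (Δ_[t] (G (i + 1)) s) s := fun i hi s hs =>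
      ((hG i (by omega) (s + t) (hshift s hs ⟨by linarith, le_rfl⟩)).comp_add_const s t).sub
        (hG i (by omega) s (hshift s hs ⟨le_rfl, by linarith⟩))
    have hlast : ∀ s ∈ Icc x (x + k * t), ‖Δ_[t] (G k) s - t • c‖ ≤ t * ε := by
      intro s hs
      have hmean := (convex_Icc s (s + t)).norm_image_sub_le_of_norm_hasDerivWithin_le
        (f := fun r => G k r - r • c) (f' := fun r => G (k + 1) r - c) (C := ε)
        (x := s) (y := s + t)
        (fun r hr => by
          simpa using! ((hG k k.lt_succ_self r (hshift s hs hr)).sub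
            ((hasDerivAt_id r).smul_const c)).hasDerivWithinAt)
        (fun r hr => hε r (hshift s hs hr)) ⟨le_rfl, by linarith⟩ ⟨by linarith, le_rfl⟩
      rw [add_sub_cancel_left, Real.norm_of_nonneg ht] at hmean
      rw [mul_comm t ε]
      refine le_of_eq_of_le (congrArg norm ?_) hmean
      simp only [fwdDiff]
      module
    have := ih hderiv hlast
    rw [Function.iterate_succ_apply]
    simpa only [smul_smul, ← pow_succ, mul_assoc, ← mul_assoc] using this

theorem iteratedDeriv_comp_line {k : ℕ} {g : E → F} (hg : ContDiff ℝ k g) (x v : E) (s : ℝ) :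
    iteratedDeriv k (fun t : ℝ => g (x + t • v)) s =
      iteratedFDeriv ℝ k g (x + s • v) (fun _ => v) := by
  have hcomp : (fun t : ℝ => g (x + t • v)) =
      (fun z => g (x + z)) ∘ (ContinuousLinearMap.toSpanSingleton ℝ v) := by
    funext t; simp
  have htrans : ContDiff ℝ k (fun z => g (x + z)) := hg.comp (by fun_prop)
  rw [iteratedDeriv_eq_iteratedFDeriv, hcomp,
    ContinuousLinearMap.iteratedFDeriv_comp_right _ htrans _ le_rfl, iteratedFDeriv_comp_add_left]
  simp

theorem norm_iteratedFDeriv_apply_le_of_fwdDiff {k : ℕ} {g : E → F} (hg : ContDiff ℝ k g)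
    {x v : E} {B T : ℝ} (hT : 0 < T)
    (hB : ∀ t : ℝ, 0 < t → t < T → ‖Δ_[t • v] ^[k] g x‖ ≤ B * t ^ k) :
    ‖iteratedFDeriv ℝ k g x (fun _ => v)‖ ≤ B := by
  set φ : ℝ → F := fun s => g (x + s • v)
  have hφ : ContDiff ℝ k φ := hg.comp (by fun_prop)
  set c := iteratedDeriv k φ 0 with hc
  have hφ0 : c = iteratedFDeriv ℝ k g x (fun _ => v) := by
    simpa using iteratedDeriv_comp_line hg x v 0
  rw [← hφ0]
  refine le_of_forall_pos_le_add fun ε hε => ?_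
  obtain ⟨δ, hδ, hclose⟩ := Metric.continuous_iff.mp (hφ.continuous_iteratedDeriv' k) 0 ε hε
  obtain ⟨t, ht0, htlt⟩ : ∃ t : ℝ, 0 < t ∧ t < min T (δ / (k + 1)) :=
    exists_between (by positivity)
  have htδ : (k + 1) * t < δ := by
    have := htlt.trans_le (min_le_right _ _)
    rwa [lt_div_iff₀ (by positivity), mul_comm] at this
  have hdiff : ‖Δ_[t] ^[k] φ 0 - t ^ k • c‖ ≤ t ^ k * ε := by
    refine norm_fwdDiff_iter_sub_le (G := fun i => iteratedDeriv i φ) ht0.le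
      (fun i hi s _ => ?_) fun s hs => ?_
    · rw [iteratedDeriv_succ]
      exact (hφ.differentiable_iteratedDeriv i (by exact_mod_cast hi) s).hasDerivAt
    · rw [hc, ← dist_eq_norm]
      refine (hclose s ?_).le
      rw [Real.dist_eq, sub_zero, abs_of_nonneg hs.1]
      linarith [hs.2]
  rw [fwdDiff_iter_comp_line] at hdiff
  have hnorm : ‖t ^ k • c‖ = t ^ k * ‖c‖ := by
    rw [norm_smul, Real.norm_of_nonneg (pow_nonneg ht0.le k)]
  have hsum : t ^ k * ‖c‖ ≤ t ^ k * (B + ε) := by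
    linarith [hB t ht0 (htlt.trans_le (min_le_left _ _)),
      norm_le_norm_add_norm_sub (Δ_[t • v] ^[k] g x) (t ^ k • c)]
  exact le_of_mul_le_mul_left hsum (by positivity)

end FiniteDifferences

section Polarization

variable {E F : Type*} [NormedAddCommGroup E] [NormedSpace ℝ E]
  [NormedAddCommGroup F] [NormedSpace ℝ F]

theorem iteratedFDeriv_add_two_apply {n : ℕ} {f : E → F} (hf : ContDiff ℝ (n + 2 : ℕ) f) (x : E)
    (v : Fin (n + 2) → E) :
    iteratedFDeriv ℝ (n + 2) f x v =
      fderiv ℝ (fderiv ℝ (iteratedFDeriv ℝ n f)) x (v 0) (v 1) (Fin.tail (Fin.tail v)) := by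
  have hsecond : ContDiff ℝ 2 (iteratedFDeriv ℝ n f) :=
    hf.iteratedFDeriv_right (by norm_cast; omega)
  have hfirst : DifferentiableAt ℝ (fderiv ℝ (iteratedFDeriv ℝ n f)) x :=
    (hsecond.fderiv_right (m := 1) (by norm_num)).differentiable (by norm_num) x
  have hinner : (fun y => iteratedFDeriv ℝ (n + 1) f y (Fin.tail v)) =
      fun y => (fderiv ℝ (iteratedFDeriv ℝ n f) y (v 1)) (Fin.tail (Fin.tail v)) := by
    funext y
    rw [iteratedFDeriv_succ_apply_left]
    rfl
  rw [iteratedFDeriv_succ_apply_left,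
    ← fderiv_continuousMultilinear_apply_const_apply
      ((hf.differentiable_iteratedFDeriv (by norm_cast; omega)) x), hinner,
    fderiv_continuousMultilinear_apply_const_apply
      (hfirst.clm_apply (differentiableAt_const _)),
    fderiv_clm_apply hfirst (differentiableAt_const _)]
  simp

theorem iteratedFDeriv_comp_swap_succ {n : ℕ} {f : E → F} (hf : ContDiff ℝ (n + 1 : ℕ) f)
    (i : Fin n) (x : E) (v : Fin (n + 1) → E) :
    iteratedFDeriv ℝ (n + 1) f x (v ∘ Equiv.swap i.castSucc i.succ) =
      iteratedFDeriv ℝ (n + 1) f x v := by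
  induction n generalizing x with
  | zero => exact i.elim0
  | succ n ih =>
    cases i using Fin.cases with
    | zero =>
      have hsymm : IsSymmSndFDerivAt ℝ (iteratedFDeriv ℝ n f) x :=
        (hf.iteratedFDeriv_right (m := 2) (by norm_cast; omega)).contDiffAt.isSymmSndFDerivAt
          (by simp)
      have htail : Fin.tail (Fin.tail (v ∘ Equiv.swap (0 : Fin (n + 1)).castSucc
          (0 : Fin (n + 1)).succ)) = Fin.tail (Fin.tail v) := by
        funext l
        simp only [Fin.tail, Function.comp]
        rw [Equiv.swap_apply_of_ne_of_ne] <;> simp [Fin.ext_iff]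
      rw [iteratedFDeriv_add_two_apply hf, iteratedFDeriv_add_two_apply hf, htail]
      simpa using congrArg (fun z => z (Fin.tail (Fin.tail v))) (hsymm (v 1) (v 0))
    | succ i =>
      have hhead : (v ∘ Equiv.swap i.succ.castSucc i.succ.succ) 0 = v 0 := by
        simp only [Function.comp]
        rw [Equiv.swap_apply_of_ne_of_ne] <;> simp [Fin.ext_iff]
      have htail : Fin.tail (v ∘ Equiv.swap i.succ.castSucc i.succ.succ) =
          Fin.tail v ∘ Equiv.swap i.castSucc i.succ := by
        funext l
        simp only [Fin.tail, Function.comp, ← Fin.succ_castSucc]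
        exact congrArg v ((Fin.succ_injective _).swap_apply _ _ _)
      have hdiff := hf.differentiable_iteratedFDeriv (m := n + 1) (by norm_cast; omega) x
      rw [iteratedFDeriv_succ_apply_left, iteratedFDeriv_succ_apply_left,
        ← fderiv_continuousMultilinear_apply_const_apply hdiff,
        ← fderiv_continuousMultilinear_apply_const_apply hdiff, hhead, htail]
      congr 2
      funext y
      exact ih (hf.of_le (by norm_cast; omega)) i y _

theorem iteratedFDeriv_comp_perm_of_contDiff {n : ℕ} {f : E → F} (hf : ContDiff ℝ n f)
    (σ : Equiv.Perm (Fin n)) (x : E) (v : Fin n → E) :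
    iteratedFDeriv ℝ n f x (v ∘ σ) = iteratedFDeriv ℝ n f x v := by
  cases n with
  | zero => exact congrArg _ (Subsingleton.elim _ _)
  | succ n =>
    have hσ : σ ∈ Submonoid.closure (range fun i : Fin n => Equiv.swap i.castSucc i.succ) := by
      rw [Equiv.Perm.mclosure_swap_castSucc_succ]
      trivial
    induction hσ using Submonoid.closure_induction generalizing v with
    | mem σ hσ =>
      obtain ⟨i, rfl⟩ := hσ
      exact iteratedFDeriv_comp_swap_succ hf i x v
    | one => rfl
    | mul σ τ _ _ ihσ ihτ =>
      rw [Equiv.Perm.coe_mul, ← Function.comp_assoc, ihτ, ihσ]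

theorem sum_sign_mul_sign_comp_of_not_surjective {k : ℕ} {φ : Fin k → Fin k}
    (hφ : ¬ Function.Surjective φ) :
    ∑ ε : Fin k → ℤˣ, (∏ i, ((ε i : ℤ) : ℝ)) * ∏ i, ((ε (φ i) : ℤ) : ℝ) = 0 := by
  obtain ⟨i₀, hi₀⟩ := not_forall.mp hφ
  simp only [not_exists] at hi₀
  -- Flipping the sign at an index missed by `φ` changes the sign of every summand.
  set flip : Fin k → ℤˣ := Function.update 1 i₀ (-1) with hflip
  have hprod : ∏ i, ((flip i : ℤ) : ℝ) = -1 := by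
    rw [Finset.prod_eq_single i₀] <;> simp +contextual [hflip]
  have hprod_comp : ∏ i, ((flip (φ i) : ℤ) : ℝ) = 1 :=
    Finset.prod_eq_one fun i _ => by simp [hflip, hi₀ i]
  refine self_eq_neg.mp ?_
  rw [← Finset.sum_neg_distrib]
  refine Fintype.sum_equiv (Equiv.mulRight flip) _ _ fun ε => ?_
  simp only [Equiv.coe_mulRight, Pi.mul_apply, Units.val_mul, Int.cast_mul,
    Finset.prod_mul_distrib, hprod, hprod_comp]
  ring

theorem sum_sign_mul_sign_comp_perm {k : ℕ} (σ : Equiv.Perm (Fin k)) :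
    ∑ ε : Fin k → ℤˣ, (∏ i, ((ε i : ℤ) : ℝ)) * ∏ i, ((ε (σ i) : ℤ) : ℝ) = 2 ^ k := by
  have hterm : ∀ ε : Fin k → ℤˣ, (∏ i, ((ε i : ℤ) : ℝ)) * ∏ i, ((ε (σ i) : ℤ) : ℝ) = 1 := by
    intro ε
    rw [Equiv.prod_comp σ (fun i => ((ε i : ℤ) : ℝ)), ← Finset.prod_mul_distrib]
    refine Finset.prod_eq_one fun i _ => ?_
    rcases Int.units_eq_one_or (ε i) with h | h <;> simp [h]
  simp [hterm]

theorem sum_sign_smul_map_sum_sign {k : ℕ} (A : E [×k]→L[ℝ] F)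
    (hA : ∀ (σ : Equiv.Perm (Fin k)) v, A (v ∘ σ) = A v) (v : Fin k → E) :
    ∑ ε : Fin k → ℤˣ, (∏ i, ((ε i : ℤ) : ℝ)) • A (fun _ => ∑ i, ((ε i : ℤ) : ℝ) • v i) =
      ((2 : ℝ) ^ k * k.factorial) • A v := by
  have hexpand : ∀ ε : Fin k → ℤˣ, A (fun _ => ∑ i, ((ε i : ℤ) : ℝ) • v i) =
      ∑ φ : Fin k → Fin k, (∏ i, ((ε (φ i) : ℤ) : ℝ)) • A (v ∘ φ) := by
    intro ε
    rw [A.map_sum (fun _ i => ((ε i : ℤ) : ℝ) • v i)]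
    exact Finset.sum_congr rfl fun φ _ => A.map_smul_univ _ _
  have hperm : ∑ φ : Fin k → Fin k, (∑ ε : Fin k → ℤˣ,
        (∏ i, ((ε i : ℤ) : ℝ)) * ∏ i, ((ε (φ i) : ℤ) : ℝ)) • A (v ∘ φ) =
      ∑ _ : Equiv.Perm (Fin k), ((2 : ℝ) ^ k) • A v := by
    symm
    refine Finset.sum_of_injOn (fun σ : Equiv.Perm (Fin k) => (σ : Fin k → Fin k))
      Equiv.coe_fn_injective.injOn (fun σ _ => Finset.mem_univ _) ?_ ?_
    · intro φ _ hφ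
      rw [sum_sign_mul_sign_comp_of_not_surjective, zero_smul]
      intro hsurj
      exact hφ ⟨Equiv.ofBijective φ ⟨Finite.injective_iff_surjective.mpr hsurj, hsurj⟩,
        by simp, rfl⟩
    · intro σ _
      rw [sum_sign_mul_sign_comp_perm, hA]
  simp_rw [hexpand, Finset.smul_sum]
  rw [Finset.sum_comm]
  simp_rw [smul_smul, ← Finset.sum_smul]
  rw [hperm, Finset.sum_const, Finset.card_univ, Fintype.card_perm, Fintype.card_fin,
    ← Nat.cast_smul_eq_nsmul ℝ, smul_smul, mul_comm]

theorem exists_norm_le_one_smul_eq (w : E) : ∃ u : E, ‖u‖ ≤ 1 ∧ ‖w‖ • u = w := by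
  rcases eq_or_ne w 0 with rfl | hw
  · exact ⟨0, by simp⟩
  · have hw' := norm_ne_zero_iff.mpr hw
    exact ⟨‖w‖⁻¹ • w, by rw [norm_smul, norm_inv, norm_norm, inv_mul_cancel₀ hw'],
      smul_inv_smul₀ hw' w⟩

theorem norm_map_diag_le_mul_pow {k : ℕ} {A : E [×k]→L[ℝ] F} {B : ℝ}
    (hB : ∀ u : E, ‖u‖ ≤ 1 → ‖A (fun _ => u)‖ ≤ B) (w : E) : ‖A (fun _ => w)‖ ≤ B * ‖w‖ ^ k := by
  obtain ⟨u, hu, hw⟩ := exists_norm_le_one_smul_eq w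
  have hscale : A (fun _ => w) = ‖w‖ ^ k • A (fun _ => u) := by
    conv_lhs => rw [← hw]
    simpa using A.map_smul_univ (fun _ => ‖w‖) (fun _ => u)
  rw [hscale, norm_smul, norm_pow, norm_norm, mul_comm]
  gcongr
  exact hB u hu

theorem norm_map_le_of_norm_map_diag_le {k : ℕ} {A : E [×k]→L[ℝ] F}
    (hA : ∀ (σ : Equiv.Perm (Fin k)) v, A (v ∘ σ) = A v) {B : ℝ}
    (hB : ∀ u : E, ‖u‖ ≤ 1 → ‖A (fun _ => u)‖ ≤ B) {v : Fin k → E} (hv : ∀ i, ‖v i‖ ≤ 1) :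
    ‖A v‖ ≤ Real.exp 1 ^ k * B := by
  have hB0 : 0 ≤ B := (norm_nonneg _).trans (hB 0 (by simp))
  have hsign : ∀ u : ℤˣ, ‖((u : ℤ) : ℝ)‖ = 1 := fun u => by
    rcases Int.units_eq_one_or u with h | h <;> simp [h]
  have hterm : ∀ ε : Fin k → ℤˣ,
      ‖(∏ i, ((ε i : ℤ) : ℝ)) • A (fun _ => ∑ i, ((ε i : ℤ) : ℝ) • v i)‖ ≤ B * k ^ k := by
    intro ε
    have hsum : ‖∑ i, ((ε i : ℤ) : ℝ) • v i‖ ≤ k := by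
      refine (norm_sum_le_of_le _ (n := fun _ => 1) fun i _ => ?_).trans (by simp)
      rw [norm_smul, hsign, one_mul]
      exact hv i
    rw [norm_smul, norm_prod, Finset.prod_eq_one fun i _ => hsign _, one_mul]
    exact (norm_map_diag_le_mul_pow hB _).trans (by gcongr)
  have hstirling : (k : ℝ) ^ k ≤ Real.exp 1 ^ k * k.factorial := by
    rw [Real.exp_one_pow, ← div_le_iff₀ (by positivity)]
    exact Real.pow_div_factorial_le_exp k k.cast_nonneg k
  have htotal : 2 ^ k * k.factorial * ‖A v‖ ≤ 2 ^ k * k.factorial * (Real.exp 1 ^ k * B) := by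
    calc (2 : ℝ) ^ k * k.factorial * ‖A v‖ = ‖((2 : ℝ) ^ k * k.factorial) • A v‖ := by
          rw [norm_smul, Real.norm_of_nonneg (by positivity)]
      _ ≤ ∑ _ε : Fin k → ℤˣ, B * (k : ℝ) ^ k := by
          rw [← sum_sign_smul_map_sum_sign A hA v]
          exact norm_sum_le_of_le _ fun ε _ => hterm ε
      _ = 2 ^ k * (B * k ^ k) := by simp
      _ ≤ 2 ^ k * (B * (Real.exp 1 ^ k * k.factorial)) := by gcongr
      _ = 2 ^ k * k.factorial * (Real.exp 1 ^ k * B) := by ring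
  exact le_of_mul_le_mul_left htotal (by positivity)

theorem opNorm_le_of_norm_map_diag_le {k : ℕ} {A : E [×k]→L[ℝ] F}
    (hA : ∀ (σ : Equiv.Perm (Fin k)) v, A (v ∘ σ) = A v) {B : ℝ}
    (hB : ∀ u : E, ‖u‖ ≤ 1 → ‖A (fun _ => u)‖ ≤ B) : ‖A‖ ≤ Real.exp 1 ^ k * B := by
  have hB0 : 0 ≤ B := (norm_nonneg _).trans (hB 0 (by simp))
  refine ContinuousMultilinearMap.opNorm_le_bound (by positivity) fun v => ?_
  choose u hu hv using fun i => exists_norm_le_one_smul_eq (v i)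
  have hscale : A v = (∏ i, ‖v i‖) • A u := by
    rw [← A.map_smul_univ]
    exact congrArg A (funext fun i => (hv i).symm)
  rw [hscale, norm_smul, Real.norm_of_nonneg (by positivity), mul_comm]
  gcongr
  exact norm_map_le_of_norm_map_diag_le hA hB hu

theorem norm_iteratedFDeriv_le_of_fwdDiff {k : ℕ} {g : E → F} (hg : ContDiff ℝ k g) {x : E}
    {B T : ℝ} (hT : 0 < T)
    (hB : ∀ v : E, ‖v‖ ≤ 1 → ∀ t : ℝ, 0 < t → t < T → ‖Δ_[t • v] ^[k] g x‖ ≤ B * t ^ k) :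
    ‖iteratedFDeriv ℝ k g x‖ ≤ Real.exp 1 ^ k * B :=
  opNorm_le_of_norm_map_diag_le (fun σ v => iteratedFDeriv_comp_perm_of_contDiff hg σ x v)
    fun v hv => norm_iteratedFDeriv_apply_le_of_fwdDiff hg hT (hB v hv)

end Polarization

section BoundedDerivatives

variable {E F : Type*} [NormedAddCommGroup E] [NormedSpace ℝ E]
  [NormedAddCommGroup F] [NormedSpace ℝ F]

theorem norm_fderiv_le_of_norm_le {h : E → F} {x : E} {s η δ : ℝ} (hs : 0 < s)
    (hdiff : ∀ y ∈ Metric.closedBall x s, DifferentiableAt ℝ h y)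
    (hη : ∀ y ∈ Metric.closedBall x s, ‖h y‖ ≤ η)
    (hδ : ∀ y ∈ Metric.closedBall x s, ‖fderiv ℝ h y - fderiv ℝ h x‖ ≤ δ) :
    ‖fderiv ℝ h x‖ ≤ 2 * η / s + δ := by
  have hx := Metric.mem_closedBall_self (x := x) hs.le
  have hη0 : 0 ≤ η := (norm_nonneg _).trans (hη x hx)
  have hδ0 : 0 ≤ δ := (norm_nonneg _).trans (hδ x hx)
  refine ContinuousLinearMap.opNorm_le_of_unit_norm (𝕜 := ℝ) (by positivity) fun u hu => ?_
  have hnorm : ‖s • u‖ = s := by rw [norm_smul, hu, mul_one, Real.norm_of_nonneg hs.le]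
  have hy : x + s • u ∈ Metric.closedBall x s := by
    rw [Metric.mem_closedBall, dist_eq_norm, add_sub_cancel_left, hnorm]
  have htaylor := (convex_closedBall x s).norm_image_sub_le_of_norm_fderiv_le' hdiff hδ hx hy
  rw [add_sub_cancel_left, hnorm, map_smul] at htaylor
  have hvalue : s * ‖fderiv ℝ h x u‖ ≤ 2 * η + δ * s := by
    calc s * ‖fderiv ℝ h x u‖ = ‖s • fderiv ℝ h x u‖ := by
          rw [norm_smul, Real.norm_of_nonneg hs.le]
      _ ≤ ‖h (x + s • u) - h x‖ + ‖h (x + s • u) - h x - s • fderiv ℝ h x u‖ :=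
          norm_le_norm_add_norm_sub _ _
      _ ≤ 2 * η + δ * s := by
          linarith [norm_sub_le (h (x + s • u)) (h x), hη _ hx, hη _ hy]
  rw [← sub_nonneg] at hvalue ⊢
  have : 2 * η / s + δ - ‖fderiv ℝ h x u‖ = (2 * η + δ * s - s * ‖fderiv ℝ h x u‖) / s := by
    field_simp
  rw [this]
  positivity

theorem uniformCauchySeqOn_fderiv {f : ℕ → E → F} {x : E} {r δ : ℝ} {K : NNReal} (hδ : 0 < δ)
    (hf : ∀ n, ∀ y ∈ Metric.closedBall x (r + δ), DifferentiableAt ℝ (f n) y)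
    (hK : ∀ n, LipschitzOnWith K (fderiv ℝ (f n)) (Metric.closedBall x (r + δ)))
    (hC : UniformCauchySeqOn f atTop (Metric.closedBall x (r + δ))) :
    UniformCauchySeqOn (fun n => fderiv ℝ (f n)) atTop (Metric.closedBall x r) := by
  rw [Metric.uniformCauchySeqOn_iff] at hC ⊢
  intro ε hε
  set s := min δ (ε / (4 * (K + 1)))
  have hs0 : 0 < s := by positivity
  have hsδ : s ≤ δ := min_le_left _ _
  have hsK : 2 * K * s < ε / 2 := by
    have : s * (4 * (K + 1)) ≤ ε := by
      rw [← le_div_iff₀ (by positivity)]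
      exact min_le_right _ _
    nlinarith [K.coe_nonneg]
  obtain ⟨N, hN⟩ := hC (s * ε / 4) (by positivity)
  refine ⟨N, fun m hm n hn y hy => ?_⟩
  have hball : Metric.closedBall y s ⊆ Metric.closedBall x (r + δ) :=
    Metric.closedBall_subset_closedBall' (by linarith [Metric.mem_closedBall.mp hy])
  have hsub : ∀ z ∈ Metric.closedBall y s,
      fderiv ℝ (fun z => f m z - f n z) z = fderiv ℝ (f m) z - fderiv ℝ (f n) z := fun z hz =>
    fderiv_fun_sub (hf m z (hball hz)) (hf n z (hball hz))
  have hy' := Metric.mem_closedBall_self (x := y) hs0.le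
  have hlip : ∀ n, ∀ z ∈ Metric.closedBall y s,
      ‖fderiv ℝ (f n) z - fderiv ℝ (f n) y‖ ≤ K * s := by
    intro n z hz
    refine ((hK n).norm_sub_le (hball hz) (hball hy')).trans ?_
    gcongr
    rwa [Metric.mem_closedBall, dist_eq_norm] at hz
  have hlandau := norm_fderiv_le_of_norm_le (h := fun z => f m z - f n z) (η := s * ε / 4)
    (δ := 2 * K * s) hs0
    (fun z hz => (hf m z (hball hz)).sub (hf n z (hball hz)))
    (fun z hz => by
      rw [← dist_eq_norm]
      exact (hN m hm n hn z (hball hz)).le)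
    (fun z hz => by
      rw [hsub z hz, hsub y hy', sub_sub_sub_comm]
      linarith [norm_sub_le (fderiv ℝ (f m) z - fderiv ℝ (f m) y)
        (fderiv ℝ (f n) z - fderiv ℝ (f n) y), hlip m z hz, hlip n z hz])
  rw [dist_eq_norm, ← hsub y hy']
  have : 2 * (s * ε / 4) / s = ε / 2 := by field_simp; norm_num
  linarith

theorem lipschitzOnWith_fderiv_iteratedFDeriv {k : ℕ} {f : E → F}
    (hf : ContDiff ℝ (k + 2 : ℕ) f) {s : Set E} (hs : Convex ℝ s) {K : NNReal}
    (hK : ∀ x ∈ s, ‖iteratedFDeriv ℝ (k + 2) f x‖ ≤ K) :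
    LipschitzOnWith K (fderiv ℝ (iteratedFDeriv ℝ k f)) s := by
  have hlip : LipschitzOnWith K (iteratedFDeriv ℝ (k + 1) f) s :=
    hs.lipschitzOnWith_of_nnnorm_fderiv_le
      (fun x _ => hf.differentiable_iteratedFDeriv (by norm_cast; omega) x)
      fun x hx => by
        rw [← NNReal.coe_le_coe, coe_nnnorm, norm_fderiv_iteratedFDeriv]
        exact hK x hx
  rw [fderiv_iteratedFDeriv]
  simpa using (LinearIsometryEquiv.lipschitz _).comp_lipschitzOnWith hlip

theorem uniformCauchySeqOn_iteratedFDeriv {f : ℕ → E → F} (hf : ∀ n, ContDiff ℝ ∞ (f n))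
    {U : Set E} (hU : IsOpen U) {B : ℕ → ℝ}
    (hB : ∀ k n, ∀ x ∈ U, ‖iteratedFDeriv ℝ k (f n) x‖ ≤ B k)
    (hC : UniformCauchySeqOn f atTop U) (k : ℕ) {x : E} (hx : x ∈ U) :
    ∃ r > 0, Metric.closedBall x r ⊆ U ∧
      UniformCauchySeqOn (fun n => iteratedFDeriv ℝ k (f n)) atTop (Metric.closedBall x r) := by
  induction k with
  | zero =>
    obtain ⟨r, hr, hrU⟩ := Metric.nhds_basis_closedBall.mem_iff.mp (hU.mem_nhds hx)
    refine ⟨r, hr, hrU, ?_⟩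
    simp only [Metric.uniformCauchySeqOn_iff, iteratedFDeriv_zero_eq_comp, Function.comp_apply,
      LinearIsometryEquiv.dist_map] at hC ⊢
    exact fun ε hε => (hC ε hε).imp fun N hN m hm n hn y hy => hN m hm n hn y (hrU hy)
  | succ k ih =>
    obtain ⟨r, hr, hrU, hCr⟩ := ih
    have hderiv : UniformCauchySeqOn (fun n => fderiv ℝ (iteratedFDeriv ℝ k (f n))) atTop
        (Metric.closedBall x (r / 2)) := by
      refine uniformCauchySeqOn_fderiv (K := (B (k + 2)).toNNReal) (half_pos hr)
        (fun n y _ =>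
          (hf n).differentiable_iteratedFDeriv (by exact_mod_cast WithTop.coe_lt_top _) y)
        (fun n => ?_) (by rwa [add_halves])
      refine lipschitzOnWith_fderiv_iteratedFDeriv (contDiff_infty.mp (hf n) _)
        (convex_closedBall _ _) fun y hy =>
          (hB (k + 2) n y (hrU ?_)).trans (Real.le_coe_toNNReal _)
      rwa [add_halves] at hy
    refine ⟨r / 2, half_pos hr, (Metric.closedBall_subset_closedBall (by linarith)).trans hrU, ?_⟩
    have hcurry :=
      (continuousMultilinearCurryLeftEquiv ℝ (fun _ : Fin (k + 1) => E) F).symm.isometry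
    simp only [iteratedFDeriv_succ_eq_comp_left]
    exact hcurry.uniformContinuous.comp_uniformCauchySeqOn hderiv

theorem contDiffOn_of_iteratedFDeriv_le [CompleteSpace F] {f : ℕ → E → F}
    (hf : ∀ n, ContDiff ℝ ∞ (f n)) {U : Set E} (hU : IsOpen U) {B : ℕ → ℝ}
    (hB : ∀ k n, ∀ x ∈ U, ‖iteratedFDeriv ℝ k (f n) x‖ ≤ B k) {g : E → F}
    (hg : TendstoUniformlyOn f g atTop U) :
    ContDiffOn ℝ ∞ g U ∧ ∀ k, ∀ x ∈ U, ‖iteratedFDeriv ℝ k g x‖ ≤ B k := by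
  have hcauchy := uniformCauchySeqOn_iteratedFDeriv hf hU hB hg.uniformCauchySeqOn
  have hlim : ∀ x k, ∃ L, x ∈ U → Tendsto (fun n => iteratedFDeriv ℝ k (f n) x) atTop (𝓝 L) := by
    intro x k
    by_cases hx : x ∈ U
    · obtain ⟨r, hr, -, hCr⟩ := hcauchy k hx
      obtain ⟨L, hL⟩ := cauchySeq_tendsto_of_complete
        (hCr.cauchySeq (Metric.mem_closedBall_self hr.le))
      exact ⟨L, fun _ => hL⟩
    · exact ⟨0, fun h => absurd h hx⟩
  choose p hp using hlim
  have hloc : ∀ k, TendstoLocallyUniformlyOn (fun n => iteratedFDeriv ℝ k (f n))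
      (fun x => p x k) atTop U := by
    intro k
    refine tendstoLocallyUniformlyOn_of_forall_exists_nhds fun x hx => ?_
    obtain ⟨r, hr, hrU, hCr⟩ := hcauchy k hx
    exact ⟨_, mem_nhdsWithin_of_mem_nhds (Metric.closedBall_mem_nhds x hr),
      hCr.tendstoUniformlyOn_of_tendsto fun y hy => hp y k (hrU hy)⟩
  have htaylor : HasFTaylorSeriesUpToOn ∞ g p U := by
    refine ⟨fun x hx => ?_, fun k _ x hx => ?_, fun k _ => ?_⟩
    · have h0 := ((continuousMultilinearCurryFin0 ℝ E F).continuous.tendsto _).comp (hp x 0 hx)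
      refine tendsto_nhds_unique h0 ?_
      simpa [Function.comp_def] using hg.tendsto_at hx
    · have hfd : TendstoLocallyUniformlyOn (fun n => fderiv ℝ (iteratedFDeriv ℝ k (f n)))
          (fun x => (p x (k + 1)).curryLeft) atTop U := by
        refine tendstoLocallyUniformlyOn_of_forall_exists_nhds fun y hy => ?_
        obtain ⟨r, hr, hrU, hCr⟩ := hcauchy (k + 1) hy
        refine ⟨_, mem_nhdsWithin_of_mem_nhds (Metric.closedBall_mem_nhds y hr), ?_⟩
        have hcurry := (continuousMultilinearCurryLeftEquiv ℝ (fun _ : Fin (k + 1) => E) F).isometry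
        exact hcurry.uniformContinuous.comp_tendstoUniformlyOn
          (hCr.tendstoUniformlyOn_of_tendsto fun z hz => hp z (k + 1) (hrU hz))
      refine (hasFDerivAt_of_tendstoLocallyUniformlyOn hU hfd ?_
        (fun y hy => hp y k hy) hx).hasFDerivWithinAt
      exact fun n y _ => ((hf n).differentiable_iteratedFDeriv
        (by exact_mod_cast WithTop.coe_lt_top _) y).hasFDerivAt
    · exact (hloc k).continuousOn (Eventually.of_forall fun n =>
        ((hf n).continuous_iteratedFDeriv (by exact_mod_cast le_top)).continuousOn).frequently
  refine ⟨htaylor.contDiffOn, fun k x hx => ?_⟩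
  rw [← iteratedFDerivWithin_of_isOpen k hU hx,
    ← htaylor.eq_iteratedFDerivWithin_of_uniqueDiffOn (by exact_mod_cast le_top) hU.uniqueDiffOn hx]
  exact le_of_tendsto (hp x k hx).norm (Eventually.of_forall fun n => hB k n x hx)

end BoundedDerivatives

section Mollification

theorem continuous_fwdDiff_iter {E F : Type*} [AddCommMonoid E] [TopologicalSpace E]
    [ContinuousAdd E] [AddCommGroup F] [TopologicalSpace F] [IsTopologicalAddGroup F] {f : E → F}
    (hf : Continuous f) (h : E) (k : ℕ) : Continuous (Δ_[h] ^[k] f) := by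
  induction k with
  | zero => exact hf
  | succ k ih =>
    rw [Function.iterate_succ_apply']
    exact (ih.comp (continuous_add_const h)).sub ih

theorem fwdDiff_iter_congr_of_eqOn_ball {E F : Type*} [NormedAddCommGroup E] [AddCommGroup F]
    {f g : E → F} {x h : E} {R : ℝ} {k : ℕ} (hfg : EqOn f g (Metric.ball x R)) (hk : k * ‖h‖ < R) :
    Δ_[h] ^[k] f x = Δ_[h] ^[k] g x := by
  simp only [fwdDiff_iter_eq_sum_shift]
  refine Finset.sum_congr rfl fun l hl => ?_
  rw [hfg]
  rw [Metric.mem_ball, dist_eq_norm, add_sub_cancel_left]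
  refine (norm_nsmul_le ..).trans_lt (lt_of_le_of_lt ?_ hk)
  gcongr
  exact Nat.lt_succ_iff.mp (Finset.mem_range.mp hl)

variable {E F : Type*} [NormedAddCommGroup E] [NormedSpace ℝ E]
  [NormedAddCommGroup F] [NormedSpace ℝ F]

theorem exists_contDiff_eqOn_ball [FiniteDimensional ℝ E] {n : ℕ∞} {g : E → F} {x : E} {r R : ℝ}
    (hr : 0 < r) (hrR : r < R) (hg : ContDiffOn ℝ n g (Metric.ball x R)) :
    ∃ G : E → F, ContDiff ℝ n G ∧ EqOn G g (Metric.ball x r) := by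
  obtain ⟨s, hrs, hsR⟩ := exists_between hrR
  let χ : ContDiffBump x := ⟨r, s, hr, hrs⟩
  refine ⟨fun y => χ y • g y, contDiff_iff_contDiffAt.mpr fun y => ?_, fun y hy => ?_⟩
  · by_cases hy : y ∈ Metric.ball x R
    · exact χ.contDiff.contDiffAt.smul (hg.contDiffAt (Metric.isOpen_ball.mem_nhds hy))
    · refine (contDiffAt_const (c := (0 : F))).congr_of_eventuallyEq ?_
      have hys : s < dist y x := hsR.trans_le (not_lt.mp hy)
      have hdist : ContinuousAt (fun z => dist z x) y := by fun_prop
      filter_upwards [hdist.eventually_const_lt hys] with z hz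
      rw [χ.zero_of_le_dist hz.le, zero_smul]
  · beta_reduce
    rw [χ.one_of_mem_closedBall (Metric.ball_subset_closedBall hy), one_smul]

section Convolution

variable [MeasurableSpace E] [BorelSpace E] [FiniteDimensional ℝ E] {μ : Measure E}
  [μ.IsAddHaarMeasure] {f : E → F}

theorem fwdDiff_iter_convolution {φ : E → ℝ} (hφ : Continuous φ) (hφc : HasCompactSupport φ)
    (hf : Continuous f) (h : E) (k : ℕ) :
    Δ_[h] ^[k] (φ ⋆[ContinuousLinearMap.lsmul ℝ ℝ, μ] f) =
      φ ⋆[ContinuousLinearMap.lsmul ℝ ℝ, μ] (Δ_[h] ^[k] f) := by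
  induction k with
  | zero => rfl
  | succ k ih =>
    rw [Function.iterate_succ_apply', ih, Function.iterate_succ_apply']
    have hk := continuous_fwdDiff_iter hf h k
    have hexists := hφc.convolutionExists_left (μ := μ) (ContinuousLinearMap.lsmul ℝ ℝ) hφ
      hk.locallyIntegrable
    funext x
    have hx := (hexists x).integrable
    have hxh := (hexists (x + h)).integrable
    simp only [fwdDiff, convolution_def]
    rw [← integral_sub hxh hx]
    simp only [ContinuousLinearMap.lsmul_apply, smul_sub, add_sub_right_comm]

variable [CompleteSpace F]

theorem tendstoUniformlyOn_normed_convolution {ι : Type*} {l : Filter ι}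
    {φ : ι → ContDiffBump (0 : E)} (hφ : Tendsto (fun i => (φ i).rOut) l (𝓝 0))
    (hf : Continuous f) {K : Set E} (hK : IsCompact K) :
    TendstoUniformlyOn
      (fun i => (φ i).normed μ ⋆[ContinuousLinearMap.lsmul ℝ ℝ, μ] f) f l K := by
  rw [Metric.tendstoUniformlyOn_iff]
  intro ε hε
  obtain ⟨δ, hδ, hfδ⟩ := Metric.mem_uniformity_dist.mp
    (hK.uniformContinuousAt_of_continuousAt f (fun x _ => hf.continuousAt)
      (Metric.dist_mem_uniformity (half_pos hε)))
  filter_upwards [hφ.eventually_lt_const hδ] with i hi x hx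
  rw [dist_comm]
  refine (ContDiffBump.dist_normed_convolution_le hf.aestronglyMeasurable
    fun y hy => ?_).trans_lt (half_lt_self hε)
  rw [dist_comm]
  exact (hfδ (by rw [dist_comm]; exact (Metric.mem_ball.mp hy).trans hi) hx).le

theorem norm_iteratedFDeriv_normed_convolution_le (φ : ContDiffBump (0 : E))
    (hf : Continuous f) {x : E} {k : ℕ} {B T : ℝ} (hT : 0 < T)
    (hB : ∀ z ∈ Metric.ball x φ.rOut, ∀ v : E, ‖v‖ ≤ 1 → ∀ t : ℝ, 0 < t → t < T →
      ‖Δ_[t • v] ^[k] f z‖ ≤ B * t ^ k) :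
    ‖iteratedFDeriv ℝ k (φ.normed μ ⋆[ContinuousLinearMap.lsmul ℝ ℝ, μ] f) x‖ ≤
      Real.exp 1 ^ k * B := by
  refine norm_iteratedFDeriv_le_of_fwdDiff (φ.hasCompactSupport_normed.contDiff_convolution_left _
    φ.contDiff_normed hf.locallyIntegrable) hT fun v hv t ht htT => ?_
  have hx := hB x (Metric.mem_ball_self φ.rOut_pos) v hv t ht htT
  rw [fwdDiff_iter_convolution φ.continuous_normed φ.hasCompactSupport_normed hf,
    ← dist_zero_right]
  refine dist_convolution_le ((norm_nonneg _).trans hx) φ.support_normed_eq.subset φ.nonneg_normed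
    φ.integral_normed (continuous_fwdDiff_iter hf _ _).aestronglyMeasurable fun z hz => ?_
  rw [dist_zero_right]
  exact hB z hz v hv t ht htT

end Convolution

variable [FiniteDimensional ℝ E] [CompleteSpace F] {f : E → F} {B : ℕ → ℝ}

theorem contDiffOn_ball_of_norm_fwdDiff_iter_le (hf : Continuous f) {x : E} {r R : ℝ} (hrR : r < R)
    (hB : ∀ k, ∃ T > 0, ∀ y ∈ Metric.ball x R, ∀ v : E, ‖v‖ ≤ 1 → ∀ t : ℝ, 0 < t → t < T →
      ‖Δ_[t • v] ^[k] f y‖ ≤ B k * t ^ k) :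
    ContDiffOn ℝ ∞ f (Metric.ball x r) ∧
      ∀ k, ∀ y ∈ Metric.ball x r, ‖iteratedFDeriv ℝ k f y‖ ≤ Real.exp 1 ^ k * B k := by
  borelize E
  have : ProperSpace E := FiniteDimensional.proper ℝ E
  let μ : Measure E := Measure.addHaar
  have hρ : ∀ n : ℕ, 0 < (R - r) / (n + 1) := fun n => div_pos (by linarith) (by positivity)
  let φ : ℕ → ContDiffBump (0 : E) := fun n =>
    ⟨(R - r) / (n + 1) / 2, (R - r) / (n + 1), half_pos (hρ n), half_lt_self (hρ n)⟩
  have hφ : Tendsto (fun n => (φ n).rOut) atTop (𝓝 0) :=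
    tendsto_const_nhds.div_atTop (tendsto_atTop_add_const_right _ _ tendsto_natCast_atTop_atTop)
  refine contDiffOn_of_iteratedFDeriv_le
    (f := fun n => (φ n).normed μ ⋆[ContinuousLinearMap.lsmul ℝ ℝ, μ] f)
    (fun n => (φ n).hasCompactSupport_normed.contDiff_convolution_left _ (φ n).contDiff_normed
      hf.locallyIntegrable) Metric.isOpen_ball (fun k n y hy => ?_)
    ((tendstoUniformlyOn_normed_convolution hφ hf (isCompact_closedBall x r)).mono
      Metric.ball_subset_closedBall)
  obtain ⟨T, hT, hB⟩ := hB k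
  refine norm_iteratedFDeriv_normed_convolution_le (φ n) hf hT fun z hz => hB z ?_
  have hrOut : (φ n).rOut ≤ R - r :=
    div_le_self (by linarith) (by linarith [n.cast_nonneg (α := ℝ)])
  rw [Metric.mem_ball] at hy hz ⊢
  linarith [dist_triangle z y x]

theorem contDiffOn_of_norm_fwdDiff_iter_le {U : Set E} (hU : IsOpen U) (hf : ContinuousOn f U)
    (hB : ∀ k, ∃ T > 0, ∀ x ∈ U, ∀ v : E, ‖v‖ ≤ 1 → ∀ t : ℝ, 0 < t → t < T →
      ‖Δ_[t • v] ^[k] f x‖ ≤ B k * t ^ k) :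
    ContDiffOn ℝ ∞ f U ∧ ∀ k, ∀ x ∈ U, ‖iteratedFDeriv ℝ k f x‖ ≤ Real.exp 1 ^ k * B k := by
  have hlocal : ∀ x ∈ U, ContDiffAt ℝ ∞ f x ∧
      ∀ k, ‖iteratedFDeriv ℝ k f x‖ ≤ Real.exp 1 ^ k * B k := by
    intro x hx
    obtain ⟨R, hR, hRU⟩ := Metric.isOpen_iff.mp hU x hx
    obtain ⟨g, hg, hgf⟩ := exists_contDiff_eqOn_ball (n := 0) (r := R / 2) (by positivity)
      (by linarith) (contDiffOn_zero.mpr (hf.mono hRU))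
    have hgB : ∀ k, ∃ T > 0, ∀ y ∈ Metric.ball x (R / 4), ∀ v : E, ‖v‖ ≤ 1 → ∀ t : ℝ,
        0 < t → t < T → ‖Δ_[t • v] ^[k] g y‖ ≤ B k * t ^ k := by
      intro k
      obtain ⟨T, hT, hB⟩ := hB k
      refine ⟨min T (R / 4 / (k + 1)), by positivity, fun y hy v hv t ht htT => ?_⟩
      have hyR : Metric.ball y (R / 4) ⊆ Metric.ball x (R / 2) :=
        Metric.ball_subset_ball' (by linarith [Metric.mem_ball.mp hy])
      have htR : (k + 1) * t < R / 4 := by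
        rw [mul_comm, ← lt_div_iff₀ (by positivity)]
        exact htT.trans_le (min_le_right _ _)
      have hstep : ‖t • v‖ ≤ t := by
        rw [norm_smul, Real.norm_of_nonneg ht.le]
        exact mul_le_of_le_one_right ht.le hv
      rw [fwdDiff_iter_congr_of_eqOn_ball (hgf.mono hyR) (by nlinarith [k.cast_nonneg (α := ℝ)])]
      exact hB y (hRU (Metric.ball_subset_ball (by linarith) hy)) v hv t ht
        (htT.trans_le (min_le_left _ _))
    obtain ⟨hsmooth, hbound⟩ := contDiffOn_ball_of_norm_fwdDiff_iter_le (r := R / 8)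
      (contDiff_zero.mp hg) (by linarith) hgB
    have hx8 : x ∈ Metric.ball x (R / 8) := Metric.mem_ball_self (by linarith)
    have hev : g =ᶠ[𝓝 x] f := hgf.eventuallyEq_of_mem (Metric.ball_mem_nhds x (by linarith))
    refine ⟨(hsmooth.contDiffAt (Metric.isOpen_ball.mem_nhds hx8)).congr_of_eventuallyEq hev.symm,
      fun k => ?_⟩
    rw [← (hev.iteratedFDeriv ℝ k).eq_of_nhds]
    exact hbound k x hx8
  exact ⟨fun x hx => (hlocal x hx).1.contDiffWithinAt, fun k x hx => (hlocal x hx).2 k⟩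

end Mollification

section WeightSequences

lemma pow_sub_mul_factorial_le {n N : ℕ} (h : N ≤ n) :
    (n : ℝ) ^ (n - N) * (N.factorial : ℝ) ≤ Real.exp 1 ^ (n - N) * (n.factorial : ℝ) := by
  induction n, h using Nat.le_induction with
  | base => simp
  | succ n hn ih =>
    have hstep : ((n : ℝ) + 1) ^ (n - N) ≤ Real.exp 1 * (n : ℝ) ^ (n - N) := by
      rcases Nat.eq_zero_or_pos n with rfl | hpos
      · simp
      have hn' : (0 : ℝ) < n := by exact_mod_cast hpos
      have hexp : (1 + 1 / (n : ℝ)) ^ (n - N) ≤ Real.exp 1 :=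
        calc (1 + 1 / (n : ℝ)) ^ (n - N) ≤ Real.exp (1 / n) ^ (n - N) := by
              gcongr
              linarith [Real.add_one_le_exp (1 / (n : ℝ))]
          _ = Real.exp ((n - N : ℕ) * (1 / n)) := by rw [← Real.exp_nat_mul]
          _ ≤ Real.exp 1 := by
              apply Real.exp_le_exp.mpr
              rw [mul_one_div, div_le_one hn']
              exact_mod_cast Nat.sub_le _ _
      calc ((n : ℝ) + 1) ^ (n - N) = (1 + 1 / (n : ℝ)) ^ (n - N) * (n : ℝ) ^ (n - N) := by
            rw [← mul_pow]; congr 1; field_simp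
        _ ≤ _ := by gcongr
    rw [Nat.succ_sub hn, pow_succ, pow_succ, Nat.factorial_succ]
    push_cast
    calc ((n : ℝ) + 1) ^ (n - N) * (n + 1) * N.factorial
        ≤ Real.exp 1 * (n : ℝ) ^ (n - N) * (n + 1) * N.factorial := by gcongr
      _ = Real.exp 1 * (n + 1) * ((n : ℝ) ^ (n - N) * N.factorial) := by ring
      _ ≤ Real.exp 1 * (n + 1) * (Real.exp 1 ^ (n - N) * (n.factorial : ℝ)) := by gcongr
      _ = _ := by ring

lemma RootTendsToInfty.eventually_pow_le {m : ℕ → ℝ} (h : RootTendsToInfty m)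
    (hpos : ∀ k, 0 < m k) {B : ℝ} (hB : 0 < B) : ∀ᶠ k in atTop, B ^ k ≤ m k := by
  filter_upwards [h.eventually_ge_atTop B, eventually_ne_atTop 0] with k hk hk0
  calc B ^ k ≤ (m k ^ (1 / (k : ℝ))) ^ k := by gcongr
    _ = m k := by rw [one_div, Real.rpow_inv_natCast_pow (hpos k).le hk0]

lemma RootTendsToInfty.gammaBar_minimizes {m : ℕ → ℝ} (h : RootTendsToInfty m)
    (hpos : ∀ k, 0 < m k) {t : ℝ} (ht : 0 < t) (i : ℕ) :
    m (GammaBar m t) * t ^ GammaBar m t ≤ m i * t ^ i := by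
  have hbdd : BddBelow (range fun k : ℕ => m k * t ^ k) := by
    refine ⟨0, ?_⟩
    rintro _ ⟨k, rfl⟩
    exact (mul_pos (hpos k) (pow_pos ht k)).le
  have htend : Tendsto (fun k : ℕ => m k * t ^ k) cofinite atTop := by
    rw [Nat.cofinite_eq_atTop]
    refine tendsto_atTop_mono' _ ?_
      (tendsto_pow_atTop_atTop_of_one_lt (one_lt_two : (1 : ℝ) < 2))
    filter_upwards [h.eventually_pow_le hpos (div_pos two_pos ht)] with k hk
    calc (2 : ℝ) ^ k = (2 / t) ^ k * t ^ k := by rw [← mul_pow, div_mul_cancel₀ _ ht.ne']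
      _ ≤ _ := by gcongr
  obtain ⟨k₀, hk₀⟩ := htend.exists_forall_le
  have hmem : GammaBar m t ∈ {k : ℕ | hFun m t = m k * t ^ k} :=
    Nat.sInf_mem ⟨k₀, le_antisymm (ciInf_le hbdd k₀) (le_ciInf hk₀)⟩
  exact hmem.symm.le.trans (ciInf_le hbdd i)

/-- The quotient `a (n + 1) / a n` of consecutive terms; for `a = M` this is the paper's
`μ_{n + 1}`. -/
def seqRatio (a : ℕ → ℝ) (n : ℕ) : ℝ := a (n + 1) / a n

lemma seqRatio_pos {a : ℕ → ℝ} (ha : ∀ k, 0 < a k) (n : ℕ) : 0 < seqRatio a n :=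
  div_pos (ha _) (ha _)

lemma le_mul_pow_of_seqRatio_le {a : ℕ → ℝ} (ha : ∀ k, 0 < a k) {c : ℝ} {N r : ℕ}
    (h : ∀ i < r, seqRatio a (N + i) ≤ c) : a (N + r) ≤ a N * c ^ r := by
  induction r with
  | zero => simp
  | succ r ih =>
    have hc := h r (Nat.lt_succ_self r)
    calc a (N + (r + 1)) = a (N + r) * seqRatio a (N + r) :=
          (mul_div_cancel₀ _ (ha (N + r)).ne').symm
      _ ≤ a N * c ^ r * c := by
          have := (seqRatio_pos ha (N + r)).le
          have := (ha N).le
          have := (seqRatio_pos ha (N + r)).le.trans hc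
          gcongr
          exact ih fun i hi => h i (Nat.lt_succ_of_lt hi)
      _ = a N * c ^ (r + 1) := by ring

lemma mul_pow_le_of_le_seqRatio {a : ℕ → ℝ} (ha : ∀ k, 0 < a k) {c : ℝ} (hc : 0 ≤ c) {N r : ℕ}
    (h : ∀ i < r, c ≤ seqRatio a (N + i)) : a N * c ^ r ≤ a (N + r) := by
  induction r with
  | zero => simp
  | succ r ih =>
    calc a N * c ^ (r + 1) = a N * c ^ r * c := by ring
      _ ≤ a (N + r) * seqRatio a (N + r) := by
          have := (ha (N + r)).le
          gcongr
          · exact ih fun i hi => h i (Nat.lt_succ_of_lt hi)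
          · exact h r (Nat.lt_succ_self r)
      _ = a (N + (r + 1)) := mul_div_cancel₀ _ (ha (N + r)).ne'

variable {M : ℕ → ℝ}

lemma IsWeightSeq.pos (hM : IsWeightSeq M) (k : ℕ) : 0 < M k := hM.2.1 k

lemma IsWeightSeq.monotone_seqRatio (hM : IsWeightSeq M) : Monotone (seqRatio M) := by
  refine monotone_nat_of_le_succ fun n => ?_
  have hlc : M (n + 1) ^ 2 ≤ M n * M (n + 1 + 1) := hM.2.2.2.1 (n + 1) n.succ_pos
  simp only [seqRatio]
  rw [div_le_div_iff₀ (hM.pos _) (hM.pos _)]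
  linarith

lemma IsWeightSeq.mseq_pos (hM : IsWeightSeq M) (k : ℕ) : 0 < mseq M k :=
  div_pos (hM.pos k) (by positivity)

lemma IsWeightSeq.mseq_zero (hM : IsWeightSeq M) : mseq M 0 = 1 := by
  simp [mseq, hM.1]

lemma mseq_mul_factorial (M : ℕ → ℝ) (k : ℕ) : mseq M k * k.factorial = M k :=
  div_mul_cancel₀ _ (by positivity)

lemma seqRatio_mseq (M : ℕ → ℝ) (n : ℕ) : seqRatio (mseq M) n = seqRatio M n / (n + 1) := by
  have : (n.factorial : ℝ) ≠ 0 := by positivity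
  simp only [seqRatio, mseq, Nat.factorial_succ]
  push_cast
  field_simp

lemma IsWeightSeq.mseq_succ_le (hM : IsWeightSeq M) {n N r : ℕ} (h : n + 1 = N + r) :
    mseq M (n + 1) ≤ mseq M N * (Real.exp 1 * seqRatio (mseq M) n) ^ r := by
  have hr : n + 1 - N = r := by omega
  have hratio : seqRatio M n = seqRatio (mseq M) n * ((n + 1 : ℕ) : ℝ) := by
    rw [seqRatio_mseq]; push_cast; field_simp
  have hM_le : M (N + r) ≤ M N * seqRatio M n ^ r :=
    le_mul_pow_of_seqRatio_le hM.pos fun i hi => hM.monotone_seqRatio (by omega)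
  have hfac := pow_sub_mul_factorial_le (show N ≤ n + 1 by omega)
  rw [hr] at hfac
  have := (hM.mseq_pos N).le
  have := (seqRatio_pos hM.mseq_pos n).le
  refine le_of_mul_le_mul_right ?_ (show (0 : ℝ) < (n + 1).factorial by positivity)
  calc mseq M (n + 1) * (n + 1).factorial = M (N + r) := by rw [mseq_mul_factorial, h]
    _ ≤ mseq M N * N.factorial * (seqRatio (mseq M) n * ((n + 1 : ℕ) : ℝ)) ^ r := by
        rwa [mseq_mul_factorial, ← hratio]
    _ = mseq M N * seqRatio (mseq M) n ^ r * (((n + 1 : ℕ) : ℝ) ^ r * N.factorial) := by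
        rw [mul_pow]; ring
    _ ≤ mseq M N * seqRatio (mseq M) n ^ r * (Real.exp 1 ^ r * (n + 1).factorial) := by gcongr
    _ = _ := by rw [mul_pow]; ring

lemma IsWeightSeq.exists_seqRatio_mseq_le_mul (hM : IsWeightSeq M) (hreg : RegularWS M) :
    ∃ C, 1 ≤ C ∧ ∀ k n, k ≤ n → seqRatio (mseq M) k ≤ C * seqRatio (mseq M) n := by
  obtain ⟨hroot, -, C, hC, hΓ⟩ := hreg
  refine ⟨C * Real.exp 1,
    one_le_mul_of_one_le_of_one_le hC (Real.one_le_exp zero_le_one), fun k n hkn => ?_⟩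
  set L := seqRatio (mseq M)
  have hLk : 0 < L k := seqRatio_pos hM.mseq_pos k
  have hLn : 0 < L n := seqRatio_pos hM.mseq_pos n
  have hlow : GammaLow (mseq M) (1 / L k) ≤ k := Nat.sInf_le (by simp [L, seqRatio])
  set t := C * (1 / L k) with ht
  have ht0 : 0 < t := by positivity
  set N := GammaBar (mseq M) t
  have hNk : N ≤ k := (hΓ (1 / L k) (by positivity)).trans hlow
  obtain ⟨r, hr⟩ : ∃ r, n + 1 = N + r := ⟨n + 1 - N, by omega⟩
  have hmN := hM.mseq_pos N
  have hpow : 1 ≤ (Real.exp 1 * L n * t) ^ r := by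
    refine le_of_mul_le_mul_left ?_ (show 0 < mseq M N * t ^ N by positivity)
    calc mseq M N * t ^ N * 1 ≤ mseq M (n + 1) * t ^ (n + 1) := by
          rw [mul_one]; exact hroot.gammaBar_minimizes hM.mseq_pos ht0 (n + 1)
      _ ≤ mseq M N * (Real.exp 1 * L n) ^ r * t ^ (n + 1) := by
          gcongr; exact hM.mseq_succ_le hr
      _ = _ := by rw [hr, pow_add]; ring
  have hone : 1 ≤ Real.exp 1 * L n * t :=
    (one_le_pow_iff_of_nonneg (by positivity) (by omega)).mp hpow
  calc L k = L k * 1 := by ring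
    _ ≤ L k * (Real.exp 1 * L n * t) := by gcongr
    _ = _ := by rw [ht]; field_simp

lemma IsWeightSeq.exists_seqRatio_pow_le (hM : IsWeightSeq M) (hmg : ModerateGrowth M) :
    ∃ B, 0 < B ∧ ∀ k, seqRatio M k ^ k ≤ B ^ k * M k := by
  obtain ⟨G, hG, hgrowth⟩ := hmg
  refine ⟨G ^ 2, by positivity, fun k => le_of_mul_le_mul_left ?_ (hM.pos k)⟩
  calc M k * seqRatio M k ^ k ≤ M (k + k) :=
        mul_pow_le_of_le_seqRatio hM.pos (seqRatio_pos hM.pos k).le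
          fun i _ => hM.monotone_seqRatio (by omega)
    _ ≤ G ^ (k + k) * M k * M k := hgrowth k k
    _ = M k * ((G ^ 2) ^ k * M k) := by rw [← pow_mul, two_mul]; ring

lemma IsWeightSeq.seqRatio_succ_le (hM : IsWeightSeq M) {B : ℝ} (hB : 0 < B)
    (h : ∀ k, seqRatio M k ^ k ≤ B ^ k * M k) (n : ℕ) :
    seqRatio M (n + 1) ≤ B * seqRatio M n := by
  have hpos := seqRatio_pos hM.pos
  have hMn : M (n + 1) ≤ seqRatio M n ^ (n + 1) := by
    simpa [hM.1] using le_mul_pow_of_seqRatio_le hM.pos (N := 0) (r := n + 1)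
      fun i hi => hM.monotone_seqRatio (show 0 + i ≤ n by omega)
  refine (pow_le_pow_iff_left₀ (hpos _).le (mul_pos hB (hpos n)).le n.succ_ne_zero).mp ?_
  calc seqRatio M (n + 1) ^ (n + 1) ≤ B ^ (n + 1) * M (n + 1) := h (n + 1)
    _ ≤ B ^ (n + 1) * seqRatio M n ^ (n + 1) := by gcongr
    _ = _ := (mul_pow _ _ _).symm

/-- `Λ` is a scale for `m`: up to the constants `C` and `A`, it sees `Λ n ^ k` as an upper bound
of `m k` for `k ≤ n + 1`, and `m k` as an upper bound of `Λ n ^ k` up to a factor exponential in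
`n + k`. A function with Taylor coefficients of size `m k` is approximated at order `n` on
intervals of length comparable to `1 / Λ n`. -/
structure IsGrowthScale (m Λ : ℕ → ℝ) (C A : ℝ) : Prop where
  seq_pos : ∀ k, 0 < m k
  scale_pos : ∀ k, 0 < Λ k
  one_le_left : 1 ≤ C
  one_le_right : 1 ≤ A
  seq_le : ∀ n k, k ≤ n + 1 → m k ≤ (C * Λ n) ^ k
  scale_succ_le : ∀ n, Λ (n + 1) ≤ C * Λ n
  scale_pow_le : ∀ n, 1 ≤ n → ∀ k, Λ n ^ k ≤ A ^ (n + k) * m k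
  tendsto_scale : Tendsto Λ atTop atTop

lemma IsWeightSeq.mseq_le_pow (hM : IsWeightSeq M) {C : ℝ}
    (hC : ∀ k n, k ≤ n → seqRatio (mseq M) k ≤ C * seqRatio (mseq M) n) {n k : ℕ}
    (hk : k ≤ n + 1) : mseq M k ≤ (C * seqRatio (mseq M) n) ^ k := by
  simpa [hM.mseq_zero] using le_mul_pow_of_seqRatio_le hM.mseq_pos (N := 0) (r := k)
    fun i hi => hC (0 + i) n (by omega)

lemma IsWeightSeq.seqRatio_mseq_pow_succ_le (hM : IsWeightSeq M) {B : ℝ} (hB : 0 < B)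
    (h : ∀ k, seqRatio M k ^ k ≤ B ^ k * M k) (n : ℕ) :
    seqRatio (mseq M) n ^ (n + 1) ≤ B ^ (n + 1) * mseq M (n + 1) := by
  have hfac : ((n + 1).factorial : ℝ) ≤ ((n : ℝ) + 1) ^ (n + 1) := by
    exact_mod_cast Nat.factorial_le_pow (n + 1)
  have := (seqRatio_pos hM.pos n).le
  have := (hM.mseq_pos (n + 1)).le
  rw [seqRatio_mseq, div_pow, div_le_iff₀ (by positivity)]
  calc seqRatio M n ^ (n + 1) ≤ seqRatio M (n + 1) ^ (n + 1) := by
        gcongr; exact hM.monotone_seqRatio n.le_succ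
    _ ≤ B ^ (n + 1) * M (n + 1) := h (n + 1)
    _ = B ^ (n + 1) * mseq M (n + 1) * (n + 1).factorial := by
        rw [mul_assoc, mseq_mul_factorial]
    _ ≤ _ := by gcongr

lemma IsWeightSeq.seqRatio_mseq_pow_le (hM : IsWeightSeq M) {B C : ℝ} (hB : 1 ≤ B) (hC1 : 1 ≤ C)
    (h : ∀ k, seqRatio M k ^ k ≤ B ^ k * M k)
    (hC : ∀ k n, k ≤ n → seqRatio (mseq M) k ≤ C * seqRatio (mseq M) n) (n k : ℕ) :
    seqRatio (mseq M) n ^ k ≤ (B * C) ^ (n + 1 + k) * mseq M k := by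
  set L := seqRatio (mseq M)
  have hL : ∀ n, 0 < L n := seqRatio_pos hM.mseq_pos
  have hdiag : ∀ n, L n ^ (n + 1) ≤ B ^ (n + 1) * mseq M (n + 1) :=
    hM.seqRatio_mseq_pow_succ_le (zero_lt_one.trans_le hB) h
  have hBC : 1 ≤ B * C := one_le_mul_of_one_le_of_one_le hB hC1
  have hm := hM.mseq_pos k
  have hLn := hL n
  rcases le_or_gt (n + 1) k with hk | hk
  · obtain ⟨l, rfl⟩ : ∃ l, k = l + 1 := ⟨k - 1, by omega⟩
    calc L n ^ (l + 1) ≤ (C * L l) ^ (l + 1) := by gcongr; exact hC n l (by omega)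
      _ ≤ C ^ (l + 1) * (B ^ (l + 1) * mseq M (l + 1)) := by
          rw [mul_pow]; gcongr; exact hdiag l
      _ = (B * C) ^ (l + 1) * mseq M (l + 1) := by rw [mul_pow]; ring
      _ ≤ _ := by gcongr ?_ * _; exact pow_le_pow_right₀ hBC (by omega)
  · obtain ⟨r, hr⟩ : ∃ r, n + 1 = k + r := ⟨n + 1 - k, by omega⟩
    have hup : mseq M (k + r) ≤ mseq M k * (C * L n) ^ r :=
      le_mul_pow_of_seqRatio_le hM.mseq_pos fun i hi => hC (k + i) n (by omega)
    have hdiv : L n ^ k ≤ B ^ (k + r) * C ^ r * mseq M k := by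
      refine le_of_mul_le_mul_left ?_ (pow_pos hLn r)
      calc L n ^ r * L n ^ k = L n ^ (n + 1) := by rw [hr, pow_add]; ring
        _ ≤ B ^ (k + r) * mseq M (k + r) := hr ▸ hdiag n
        _ ≤ B ^ (k + r) * (mseq M k * (C * L n) ^ r) := by gcongr
        _ = _ := by rw [mul_pow]; ring
    refine hdiv.trans ?_
    gcongr ?_ * _
    calc B ^ (k + r) * C ^ r ≤ B ^ (k + r) * C ^ (k + r) := by
          gcongr ?_ * ?_; exact pow_le_pow_right₀ hC1 (by omega)
      _ = (B * C) ^ (k + r) := (mul_pow _ _ _).symm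
      _ ≤ (B * C) ^ (n + 1 + k) := pow_le_pow_right₀ hBC (by omega)

lemma tendsto_atTop_of_le_mul_pow {m L : ℕ → ℝ} {C : ℝ} (hroot : RootTendsToInfty m)
    (hm : ∀ k, 0 < m k) (hL : ∀ n, 0 < L n) (hC : 0 < C)
    (h : ∀ n, m (n + 1) ≤ (C * L n) ^ (n + 1)) : Tendsto L atTop atTop := by
  refine tendsto_atTop.2 fun b => ?_
  have hb : 0 < C * (|b| + 1) := by positivity
  filter_upwards [(tendsto_add_atTop_nat 1).eventually (hroot.eventually_pow_le hm hb)] with n hn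
  have hle := (pow_le_pow_iff_left₀ hb.le (mul_pos hC (hL n)).le n.succ_ne_zero).mp
    (hn.trans (h n))
  linarith [le_abs_self b, le_of_mul_le_mul_left hle hC]

theorem IsWeightSeq.exists_isGrowthScale (hM : IsWeightSeq M) (hreg : RegularWS M)
    (hmg : ModerateGrowth M) :
    ∃ C A, IsGrowthScale (mseq M) (seqRatio (mseq M)) C A := by
  obtain ⟨C, hC1, hC⟩ := hM.exists_seqRatio_mseq_le_mul hreg
  obtain ⟨B, hB, hpow⟩ := hM.exists_seqRatio_pow_le hmg
  have hsucc := hM.seqRatio_succ_le hB hpow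
  have hB1 : 1 ≤ B := by
    have h01 := (hM.monotone_seqRatio zero_le_one).trans (hsucc 0)
    exact le_of_mul_le_mul_right (by linarith) (seqRatio_pos hM.pos 0)
  have hL := seqRatio_pos hM.mseq_pos
  have hBC : 1 ≤ B * C := one_le_mul_of_one_le_of_one_le hB1 hC1
  refine ⟨B * C, (B * C) ^ 2, hM.mseq_pos, hL, hBC, one_le_pow₀ hBC, fun n k hk => ?_,
    fun n => ?_, fun n hn k => ?_, ?_⟩
  · have := (hL n).le
    refine (hM.mseq_le_pow hC hk).trans ?_
    gcongr
    exact le_mul_of_one_le_left (by positivity) hB1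
  · have hMn := (seqRatio_pos hM.pos n).le
    calc seqRatio (mseq M) (n + 1) ≤ B * seqRatio M n / (n + 1) := by
          rw [seqRatio_mseq]
          gcongr
          · exact hsucc n
          · exact n.le_succ
      _ = B * seqRatio (mseq M) n := by rw [seqRatio_mseq]; ring
      _ ≤ B * C * seqRatio (mseq M) n := by
          have := (hL n).le
          gcongr
          exact le_mul_of_one_le_right hB.le hC1
  · have := (hM.mseq_pos k).le
    refine (hM.seqRatio_mseq_pow_le hB1 hC1 hpow hC n k).trans ?_
    rw [← pow_mul]
    gcongr
    omega
  · exact tendsto_atTop_of_le_mul_pow hreg.1 hM.mseq_pos hL (by linarith)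
      fun n => hM.mseq_le_pow hC le_rfl

end WeightSequences

section SquareIntegral

/-- The integrand of the boundary integral of `f` over the square `[-2, 2] × [-2, 2]`: the four
sides, weighted by their orientation, are all parametrised by `t ∈ [-2, 2]`. -/
def squareSides (f : ℂ → ℂ) (t : ℝ) : ℂ :=
  f (t + (-2 : ℝ) * Complex.I) - f (t + (2 : ℝ) * Complex.I)
    + Complex.I * f ((2 : ℝ) + t * Complex.I) - Complex.I * f ((-2 : ℝ) + t * Complex.I)

/-- The integral `∮ f(ζ) dζ` along the positively oriented boundary of `[-2, 2] × [-2, 2]`. -/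
def squareIntegral (f : ℂ → ℂ) : ℂ := ∫ t : ℝ in (-2)..2, squareSides f t

lemma two_le_norm_horizontal_side (t : ℝ) {s : ℝ} (hs : |s| = 2) :
    2 ≤ ‖(t : ℂ) + (s : ℂ) * Complex.I‖ := by
  simpa [hs] using Complex.abs_im_le_norm ((t : ℂ) + (s : ℂ) * Complex.I)

lemma two_le_norm_vertical_side (t : ℝ) {s : ℝ} (hs : |s| = 2) :
    2 ≤ ‖(s : ℂ) + (t : ℂ) * Complex.I‖ := by
  simpa [hs] using Complex.abs_re_le_norm ((s : ℂ) + (t : ℂ) * Complex.I)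

lemma norm_add_mul_I_le_four {x y : ℝ} (hx : |x| ≤ 2) (hy : |y| ≤ 2) :
    ‖(x : ℂ) + (y : ℂ) * Complex.I‖ ≤ 4 := by
  refine (norm_add_le _ _).trans ?_
  rw [norm_mul, Complex.norm_I, Complex.norm_real, Complex.norm_real, Real.norm_eq_abs,
    Real.norm_eq_abs]
  linarith

variable {f g u : ℂ → ℂ}

lemma squareSides_congr (h : ∀ ζ, 2 ≤ ‖ζ‖ → f ζ = g ζ) : squareSides f = squareSides g := by
  ext t
  simp only [squareSides, h _ (two_le_norm_horizontal_side t abs_two),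
    h _ (two_le_norm_vertical_side t abs_two),
    h _ (two_le_norm_horizontal_side t ((abs_neg 2).trans abs_two)),
    h _ (two_le_norm_vertical_side t ((abs_neg 2).trans abs_two))]

lemma norm_squareSides_le {K t : ℝ} (h : ∀ ζ : ℂ, 2 ≤ ‖ζ‖ → ‖ζ‖ ≤ 4 → ‖f ζ‖ ≤ K)
    (ht : |t| ≤ 2) : ‖squareSides f t‖ ≤ 4 * K := by
  have hor : ∀ s : ℝ, |s| = 2 → ‖f (t + (s : ℂ) * Complex.I)‖ ≤ K := fun s hs =>
    h _ (two_le_norm_horizontal_side t hs) (norm_add_mul_I_le_four ht hs.le)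
  have ver : ∀ s : ℝ, |s| = 2 → ‖Complex.I * f ((s : ℂ) + t * Complex.I)‖ ≤ K := fun s hs => by
    rw [norm_mul, Complex.norm_I, one_mul]
    exact h _ (two_le_norm_vertical_side t hs) (norm_add_mul_I_le_four hs.le ht)
  have habs : |(-2 : ℝ)| = 2 := (abs_neg 2).trans abs_two
  calc ‖squareSides f t‖ ≤ K + K + K + K :=
        norm_sub_le_of_le (norm_add_le_of_le (norm_sub_le_of_le (hor _ habs) (hor _ abs_two))
          (ver _ abs_two)) (ver _ habs)
    _ = 4 * K := by ring

lemma continuous_sides (hf : ContinuousOn f {ζ | 2 ≤ ‖ζ‖}) {s : ℝ} (hs : |s| = 2) :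
    Continuous (fun t : ℝ => f (t + (s : ℂ) * Complex.I)) ∧
      Continuous (fun t : ℝ => f ((s : ℂ) + t * Complex.I)) :=
  ⟨hf.comp_continuous (by fun_prop) fun t => two_le_norm_horizontal_side t hs,
    hf.comp_continuous (by fun_prop) fun t => two_le_norm_vertical_side t hs⟩

lemma continuous_squareSides (hf : ContinuousOn f {ζ | 2 ≤ ‖ζ‖}) :
    Continuous (squareSides f) := by
  obtain ⟨h₁, h₂⟩ := continuous_sides hf abs_two
  obtain ⟨h₃, h₄⟩ := continuous_sides hf ((abs_neg 2).trans abs_two)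
  exact ((h₃.sub h₁).add (continuous_const.mul h₂)).sub (continuous_const.mul h₄)

lemma intervalIntegrable_squareSides (hf : ContinuousOn f {ζ | 2 ≤ ‖ζ‖}) :
    IntervalIntegrable (squareSides f) volume (-2) 2 :=
  (continuous_squareSides hf).intervalIntegrable _ _

lemma squareIntegral_congr (h : ∀ ζ, 2 ≤ ‖ζ‖ → f ζ = g ζ) :
    squareIntegral f = squareIntegral g := by
  simp only [squareIntegral, squareSides_congr h]

lemma squareIntegral_sub (hf : ContinuousOn f {ζ | 2 ≤ ‖ζ‖})
    (hg : ContinuousOn g {ζ | 2 ≤ ‖ζ‖}) :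
    squareIntegral (fun ζ => f ζ - g ζ) = squareIntegral f - squareIntegral g := by
  rw [squareIntegral, squareIntegral, squareIntegral, ← intervalIntegral.integral_sub
    (intervalIntegrable_squareSides hf) (intervalIntegrable_squareSides hg)]
  congr 1
  ext t
  simp only [squareSides]
  ring

lemma squareIntegral_mul_const (f : ℂ → ℂ) (c : ℂ) :
    squareIntegral (fun ζ => f ζ * c) = squareIntegral f * c := by
  rw [squareIntegral, squareIntegral, ← intervalIntegral.integral_mul_const]
  congr 1
  ext t
  simp only [squareSides]
  ring

lemma norm_squareIntegral_le {K : ℝ} (h : ∀ ζ : ℂ, 2 ≤ ‖ζ‖ → ‖ζ‖ ≤ 4 → ‖f ζ‖ ≤ K) :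
    ‖squareIntegral f‖ ≤ 16 * K := by
  refine (intervalIntegral.norm_integral_le_of_norm_le_const (C := 4 * K) fun t ht => ?_).trans_eq
    (by rw [show |(2 : ℝ) - -2| = 4 by norm_num]; ring)
  rw [uIoc_of_le (by norm_num)] at ht
  exact norm_squareSides_le h (abs_le.2 ⟨ht.1.le, ht.2⟩)

lemma squareIntegral_eq_boundary (hf : ContinuousOn f {ζ | 2 ≤ ‖ζ‖}) :
    squareIntegral f =
      (∫ t : ℝ in (-2)..2, f (t + (-2 : ℝ) * Complex.I)) -
        (∫ t : ℝ in (-2)..2, f (t + (2 : ℝ) * Complex.I)) +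
        Complex.I • (∫ t : ℝ in (-2)..2, f ((2 : ℝ) + t * Complex.I)) -
        Complex.I • ∫ t : ℝ in (-2)..2, f ((-2 : ℝ) + t * Complex.I) := by
  obtain ⟨h₁, h₂⟩ := continuous_sides hf abs_two
  obtain ⟨h₃, h₄⟩ := continuous_sides hf ((abs_neg 2).trans abs_two)
  have h₂I := h₂.const_mul Complex.I
  have h₄I := h₄.const_mul Complex.I
  simp only [squareIntegral, squareSides, smul_eq_mul]
  rw [intervalIntegral.integral_sub (((h₃.fun_sub h₁).fun_add h₂I).intervalIntegrable _ _)
      (h₄I.intervalIntegrable _ _),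
    intervalIntegral.integral_add ((h₃.fun_sub h₁).intervalIntegrable _ _)
      (h₂I.intervalIntegrable _ _),
    intervalIntegral.integral_sub (h₃.intervalIntegrable _ _) (h₁.intervalIntegrable _ _),
    intervalIntegral.integral_const_mul, intervalIntegral.integral_const_mul]

lemma squareIntegral_eq_zero (hf : Differentiable ℂ f) : squareIntegral f = 0 := by
  rw [squareIntegral_eq_boundary hf.continuous.continuousOn]
  exact Complex.integral_boundary_rect_eq_zero_of_differentiableOn f (⟨-2, -2⟩ : ℂ) ⟨2, 2⟩
    hf.differentiableOn

/-- Twice `I` times the antiholomorphic derivative `∂f/∂ζ̄`, in the form in which it occurs in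
Stokes' formula for a rectangle. -/
def twoIDbar (f : ℂ → ℂ) (ζ : ℂ) : ℂ :=
  Complex.I * fderiv ℝ f ζ 1 - fderiv ℝ f ζ Complex.I

lemma squareIntegral_eq_integral_twoIDbar (hf : Differentiable ℝ f)
    (hcont : Continuous (twoIDbar f)) :
    squareIntegral f =
      ∫ x : ℝ in (-2)..2, ∫ y : ℝ in (-2)..2, twoIDbar f (x + y * Complex.I) := by
  rw [squareIntegral_eq_boundary hf.continuous.continuousOn]
  exact Complex.integral_boundary_rect_of_differentiableOn_real f (⟨-2, -2⟩ : ℂ) ⟨2, 2⟩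
    hf.differentiableOn
    (hcont.continuousOn.integrableOn_compact (isCompact_uIcc.reProdIm isCompact_uIcc))

lemma half_le_norm_sub {ζ z : ℂ} (hζ : 2 ≤ ‖ζ‖) (hz : ‖z‖ < 3 / 2) : 1 / 2 ≤ ‖ζ - z‖ := by
  linarith [norm_sub_norm_le ζ z]

lemma sub_ne_zero_of_two_le_norm {ζ z : ℂ} (hζ : 2 ≤ ‖ζ‖) (hz : ‖z‖ < 3 / 2) : ζ - z ≠ 0 :=
  norm_pos_iff.mp (one_half_pos.trans_le (half_le_norm_sub hζ hz))

lemma continuousOn_cauchyKernel (hu : ContinuousOn u {ζ | 2 ≤ ‖ζ‖}) {z : ℂ} (hz : ‖z‖ < 3 / 2)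
    (n : ℕ) : ContinuousOn (fun ζ => u ζ / (ζ - z) ^ n) {ζ | 2 ≤ ‖ζ‖} :=
  hu.div (by fun_prop) fun _ hζ => pow_ne_zero n (sub_ne_zero_of_two_le_norm hζ hz)

lemma hasDerivAt_squareSides_cauchyKernel (u : ℂ → ℂ) {z : ℂ} (hz : ‖z‖ < 3 / 2) (t : ℝ) :
    HasDerivAt (fun w => squareSides (fun ζ => u ζ / (ζ - w)) t)
      (squareSides (fun ζ => u ζ / (ζ - z) ^ 2) t) z := by
  have hker : ∀ ζ : ℂ, 2 ≤ ‖ζ‖ → HasDerivAt (fun w => u ζ / (ζ - w)) (u ζ / (ζ - z) ^ 2) z :=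
    fun ζ hζ => by
      simpa using (hasDerivAt_const z (u ζ)).fun_div ((hasDerivAt_id z).const_sub ζ)
        (sub_ne_zero_of_two_le_norm hζ hz)
  have habs : |(-2 : ℝ)| = 2 := (abs_neg 2).trans abs_two
  exact (((hker _ (two_le_norm_horizontal_side t habs)).sub
    (hker _ (two_le_norm_horizontal_side t abs_two))).add
    ((hker _ (two_le_norm_vertical_side t abs_two)).const_mul Complex.I)).sub
    ((hker _ (two_le_norm_vertical_side t habs)).const_mul Complex.I)

lemma differentiableOn_squareIntegral_cauchyKernel (hu : ContinuousOn u {ζ | 2 ≤ ‖ζ‖}) :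
    DifferentiableOn ℂ (fun z => squareIntegral fun ζ => u ζ / (ζ - z))
      (Metric.ball 0 (3 / 2)) := by
  intro z hz
  have hnhds : Metric.ball (0 : ℂ) (3 / 2) ∈ 𝓝 z := Metric.isOpen_ball.mem_nhds hz
  simp only [mem_ball_zero_iff] at hz
  have hcont : ∀ w : ℂ, ‖w‖ < 3 / 2 → ContinuousOn (fun ζ => u ζ / (ζ - w)) {ζ | 2 ≤ ‖ζ‖} :=
    fun w hw => by simpa using continuousOn_cauchyKernel hu hw 1
  obtain ⟨K, hK⟩ := ((isCompact_closedBall (0 : ℂ) 4).inter_left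
    (isClosed_le continuous_const continuous_norm)).exists_bound_of_continuousOn
    (hu.mono (inter_subset_left (s := {ζ : ℂ | 2 ≤ ‖ζ‖})))
  have hbound : ∀ w : ℂ, ‖w‖ < 3 / 2 → ∀ ζ : ℂ, 2 ≤ ‖ζ‖ → ‖ζ‖ ≤ 4 →
      ‖u ζ / (ζ - w) ^ 2‖ ≤ 4 * K := fun w hw ζ hζ hζ4 => by
    have hsq : (1 / 2 : ℝ) ^ 2 ≤ ‖ζ - w‖ ^ 2 := by gcongr; exact half_le_norm_sub hζ hw
    rw [norm_div, norm_pow, div_le_iff₀ (by linarith)]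
    nlinarith [hK ζ ⟨hζ, by simpa using hζ4⟩, norm_nonneg (u ζ)]
  refine (intervalIntegral.hasDerivAt_integral_of_dominated_loc_of_deriv_le
    (F' := fun w t => squareSides (fun ζ => u ζ / (ζ - w) ^ 2) t)
    (bound := fun _ => 4 * (4 * K)) hnhds ?_ ?_ ?_ ?_ (by simp)
    ?_).2.differentiableAt.differentiableWithinAt
  · filter_upwards [hnhds] with w hw
    exact (continuous_squareSides (hcont w (by simpa using hw))).aestronglyMeasurable
  · exact intervalIntegrable_squareSides (hcont z hz)
  · exact (continuous_squareSides (continuousOn_cauchyKernel hu hz 2)).aestronglyMeasurable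
  · refine Eventually.of_forall fun t ht w hw => ?_
    rw [uIoc_of_le (by norm_num)] at ht
    exact norm_squareSides_le (hbound w (by simpa using hw)) (abs_le.2 ⟨ht.1.le, ht.2⟩)
  · exact Eventually.of_forall fun t _ w hw =>
      hasDerivAt_squareSides_cauchyKernel u (by simpa using hw) t

lemma le_im_squareSides_cauchyKernel {z : ℂ} (hz : ‖z‖ < 3 / 2) {t : ℝ} (ht : |t| ≤ 2) :
    1 / 100 ≤ (squareSides (fun ζ => 1 / (ζ - z)) t).im := by
  have hre := abs_lt.1 ((Complex.abs_re_le_norm z).trans_lt hz)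
  have him := abs_lt.1 ((Complex.abs_im_le_norm z).trans_lt hz)
  have ht' := abs_le.1 ht
  have hpos : ∀ ζ : ℂ, 2 ≤ ‖ζ‖ → 0 < Complex.normSq (ζ - z) := fun ζ hζ =>
    Complex.normSq_pos.mpr (sub_ne_zero_of_two_le_norm hζ hz)
  have habs : |(-2 : ℝ)| = 2 := (abs_neg 2).trans abs_two
  have hbot := hpos _ (two_le_norm_horizontal_side t habs)
  have htop := hpos _ (two_le_norm_horizontal_side t abs_two)
  have hright := hpos _ (two_le_norm_vertical_side t abs_two)
  have hleft := hpos _ (two_le_norm_vertical_side t habs)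
  have hbottom : 1 / 100 ≤ (2 + z.im) / Complex.normSq (t + (-2 : ℝ) * Complex.I - z) := by
    rw [le_div_iff₀ hbot, Complex.normSq_apply]
    simp
    nlinarith
  have htop' := div_nonneg (show 0 ≤ 2 - z.im by linarith) htop.le
  have hright' := div_nonneg (show 0 ≤ 2 - z.re by linarith) hright.le
  have hleft' := div_nonneg (show 0 ≤ 2 + z.re by linarith) hleft.le
  have hsum : (squareSides (fun ζ => 1 / (ζ - z)) t).im =
      (2 + z.im) / Complex.normSq (t + (-2 : ℝ) * Complex.I - z) +
      (2 - z.im) / Complex.normSq (t + (2 : ℝ) * Complex.I - z) +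
      (2 - z.re) / Complex.normSq ((2 : ℝ) + t * Complex.I - z) +
      (2 + z.re) / Complex.normSq ((-2 : ℝ) + t * Complex.I - z) := by
    simp [squareSides, Complex.inv_im, Complex.inv_re]
    ring
  linarith

lemma le_norm_squareIntegral_cauchyKernel {z : ℂ} (hz : ‖z‖ < 3 / 2) :
    1 / 25 ≤ ‖squareIntegral fun ζ => 1 / (ζ - z)‖ := by
  have hcont : Continuous (squareSides fun ζ => 1 / (ζ - z)) := continuous_squareSides <| by
    simpa using continuousOn_cauchyKernel (u := fun _ => 1) continuousOn_const hz 1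
  have him : (squareIntegral fun ζ => 1 / (ζ - z)).im =
      ∫ t : ℝ in (-2)..2, (squareSides (fun ζ => 1 / (ζ - z)) t).im := by
    simpa [squareIntegral] using (Complex.imCLM.intervalIntegral_comp_comm
      (hcont.intervalIntegrable (-2) 2) (μ := volume)).symm
  calc (1 / 25 : ℝ) = ∫ _ : ℝ in (-2)..2, (1 / 100 : ℝ) := by
        rw [intervalIntegral.integral_const]; norm_num
    _ ≤ ∫ t : ℝ in (-2)..2, (squareSides (fun ζ => 1 / (ζ - z)) t).im :=
        intervalIntegral.integral_mono_on (by norm_num) (by simp)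
          ((Complex.continuous_im.comp hcont).intervalIntegrable _ _)
          fun t ht => le_im_squareSides_cauchyKernel hz (abs_le.2 ht)
    _ = (squareIntegral fun ζ => 1 / (ζ - z)).im := him.symm
    _ ≤ _ := (le_abs_self _).trans (Complex.abs_im_le_norm _)

end SquareIntegral

section LogarithmicDerivative

lemma intervalIntegrable_inv_sqrt_abs (a b : ℝ) :
    IntervalIntegrable (fun x : ℝ => (√|x|)⁻¹) volume a b := by
  refine intervalIntegrable_of_even (fun x => by simp) fun x hx => ?_
  refine (intervalIntegral.intervalIntegrable_rpow' (a := 0) (b := x) (r := -(1 / 2))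
    (by norm_num)).congr fun y hy => ?_
  rw [uIoc_of_le hx.le] at hy
  simp only [abs_of_pos hy.1, Real.rpow_neg hy.1.le, Real.sqrt_eq_rpow]

lemma intervalIntegrable_inv_sqrt_abs_sub (α a b : ℝ) :
    IntervalIntegrable (fun x : ℝ => (√|x - α|)⁻¹) volume a b := by
  simpa using (intervalIntegrable_inv_sqrt_abs (a - α) (b - α)).comp_sub_right α

lemma integral_inv_sqrt_abs_sub_le {a b : ℝ} (hab : a ≤ b) (α : ℝ) :
    ∫ x in a..b, (√|x - α|)⁻¹ ≤ (∫ x in (-1)..1, (√|x|)⁻¹) + (b - a) := by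
  set ψ : ℝ → ℝ := (Ioc (-1 : ℝ) 1).indicator fun x => (√|x|)⁻¹
  have hψ : Integrable ψ := (integrable_indicator_iff measurableSet_Ioc).2
    ((intervalIntegrable_iff_integrableOn_Ioc_of_le (by norm_num)).mp
      (intervalIntegrable_inv_sqrt_abs (-1) 1))
  have hψ_nonneg : ∀ x, 0 ≤ ψ x := indicator_nonneg fun y _ => by positivity
  have hψα : Integrable fun x => ψ (x - α) := hψ.comp_sub_right α
  have hle : ∀ x : ℝ, (√|x|)⁻¹ ≤ ψ x + 1 := fun x => by
    by_cases hx : x ∈ Ioc (-1 : ℝ) 1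
    · simp only [ψ, indicator_of_mem hx]; linarith
    · simp only [ψ, indicator_of_notMem hx, zero_add]
      refine inv_le_one_of_one_le₀ (Real.one_le_sqrt.2 ?_)
      by_contra! hlt
      exact hx ⟨(abs_lt.1 hlt).1, (abs_lt.1 hlt).2.le⟩
  calc ∫ x in a..b, (√|x - α|)⁻¹ ≤ ∫ x in a..b, (ψ (x - α) + 1) :=
        intervalIntegral.integral_mono_on hab (intervalIntegrable_inv_sqrt_abs_sub α a b)
          (hψα.intervalIntegrable.add (by simp)) fun x _ => hle _
    _ = (∫ x in a..b, ψ (x - α)) + (b - a) := by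
        rw [intervalIntegral.integral_add hψα.intervalIntegrable (by simp)]
        simp
    _ ≤ (∫ x, ψ (x - α)) + (b - a) := by
        gcongr
        rw [intervalIntegral.integral_of_le hab]
        exact setIntegral_le_integral hψα (Eventually.of_forall fun x => hψ_nonneg _)
    _ = _ := by
        rw [integral_sub_right_eq_self ψ α, integral_indicator measurableSet_Ioc,
          intervalIntegral.integral_of_le (by norm_num)]

lemma inv_norm_le_inv_sqrt_mul_inv_sqrt {ζ : ℂ} (hre : ζ.re ≠ 0) (him : ζ.im ≠ 0) :
    ‖ζ‖⁻¹ ≤ (√|ζ.re|)⁻¹ * (√|ζ.im|)⁻¹ := by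
  have hx : 0 < |ζ.re| := abs_pos.mpr hre
  have : 0 < |ζ.im| := abs_pos.mpr him
  rw [← mul_inv, ← Real.sqrt_mul hx.le]
  refine inv_anti₀ (by positivity) (Real.sqrt_le_iff.mpr ⟨norm_nonneg _, ?_⟩)
  rw [← Complex.normSq_eq_norm_sq, Complex.normSq_apply]
  nlinarith [sq_abs ζ.re, sq_abs ζ.im, sq_nonneg (|ζ.re| - |ζ.im|)]

/-- An upper bound for `∫ |x - α|^{-1/2} dx` over `[-2, 2]` that does not depend on `α`. -/
def invSqrtBound : ℝ := (∫ x in (-1)..1, (√|x|)⁻¹) + (2 - -2)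

lemma invSqrtBound_pos : 0 < invSqrtBound := by
  have : 0 ≤ ∫ x : ℝ in (-1)..1, (√|x|)⁻¹ :=
    intervalIntegral.integral_nonneg (by norm_num) fun x _ => by positivity
  simp only [invSqrtBound]
  linarith

lemma norm_integral_le_of_norm_le_sum_inv_sqrt {ι : Type*} {s : Finset ι} {w α : ι → ℝ}
    {F : ℝ → ℂ} (hw : ∀ i ∈ s, 0 ≤ w i)
    (hF : ∀ x, |x| ≤ 2 → (∀ i ∈ s, x ≠ α i) → ‖F x‖ ≤ ∑ i ∈ s, w i * (√|x - α i|)⁻¹) :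
    ‖∫ x in (-2)..2, F x‖ ≤ (∑ i ∈ s, w i) * invSqrtBound := by
  have hint : ∀ i ∈ s, IntervalIntegrable (fun x => w i * (√|x - α i|)⁻¹) volume (-2) 2 :=
    fun i _ => (intervalIntegrable_inv_sqrt_abs_sub (α i) _ _).const_mul _
  have hae : ∀ᵐ x : ℝ, ∀ i ∈ s, x ≠ α i :=
    (ae_ball_iff s.countable_toSet).2 fun i _ => Measure.ae_ne volume _
  calc ‖∫ x in (-2)..2, F x‖ ≤ ∫ x in (-2)..2, ∑ i ∈ s, w i * (√|x - α i|)⁻¹ := by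
        refine intervalIntegral.norm_integral_le_of_norm_le (by norm_num) ?_ ?_
        · filter_upwards [hae] with x hx hx2
          exact hF x (abs_le.2 ⟨hx2.1.le, hx2.2⟩) hx
        · simpa only [Finset.sum_fn] using IntervalIntegrable.sum s hint
    _ = ∑ i ∈ s, w i * ∫ x in (-2)..2, (√|x - α i|)⁻¹ := by
        rw [intervalIntegral.integral_finsetSum hint]
        simp only [intervalIntegral.integral_const_mul]
    _ ≤ ∑ i ∈ s, w i * invSqrtBound := by
        gcongr with i hi
        · exact hw i hi
        · exact integral_inv_sqrt_abs_sub_le (by norm_num) _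
    _ = _ := (Finset.sum_mul _ _ _).symm

lemma norm_derivative_div_eval_le {p : Polynomial ℂ} {ζ : ℂ} (hp : p ≠ 0)
    (hre : ∀ a ∈ p.roots.toFinset, ζ.re ≠ a.re) (him : ∀ a ∈ p.roots.toFinset, ζ.im ≠ a.im) :
    ‖p.derivative.eval ζ / p.eval ζ‖ ≤ ∑ a ∈ p.roots.toFinset,
      p.roots.count a * ((√|ζ.re - a.re|)⁻¹ * (√|ζ.im - a.im|)⁻¹) := by
  have hζ : p.eval ζ ≠ 0 := fun h =>
    hre ζ (Multiset.mem_toFinset.2 ((Polynomial.mem_roots hp).2 h)) rfl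
  rw [(IsAlgClosed.splits p).eval_derivative_div_eval_of_ne_zero hζ,
    Finset.sum_multiset_map_count]
  refine (norm_sum_le _ _).trans (Finset.sum_le_sum fun a ha => ?_)
  rw [nsmul_eq_mul, norm_mul, Complex.norm_natCast, one_div, norm_inv]
  gcongr
  simpa using inv_norm_le_inv_sqrt_mul_inv_sqrt (ζ := ζ - a)
    (by simpa [sub_eq_zero] using hre a ha) (by simpa [sub_eq_zero] using him a ha)

lemma norm_integral_le_of_norm_le_derivative_div_eval {p : Polynomial ℂ} (hp : p ≠ 0)
    {Φ : ℂ → ℂ} {K : ℝ} (hK : 0 ≤ K)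
    (hΦ : ∀ ζ, ‖ζ‖ ≤ 4 → p.eval ζ ≠ 0 → ‖Φ ζ‖ ≤ K * ‖p.derivative.eval ζ / p.eval ζ‖) :
    ‖∫ x : ℝ in (-2)..2, ∫ y : ℝ in (-2)..2, Φ (x + y * Complex.I)‖ ≤
      K * p.natDegree * invSqrtBound ^ 2 := by
  set s := p.roots.toFinset
  have hc := invSqrtBound_pos.le
  have hinner : ∀ x : ℝ, |x| ≤ 2 → (∀ a ∈ s, x ≠ a.re) →
      ‖∫ y : ℝ in (-2)..2, Φ (x + y * Complex.I)‖ ≤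
        ∑ a ∈ s, K * p.roots.count a * invSqrtBound * (√|x - a.re|)⁻¹ := by
    intro x hx hxs
    refine (norm_integral_le_of_norm_le_sum_inv_sqrt
      (s := s) (w := fun a => K * p.roots.count a * (√|x - a.re|)⁻¹) (α := Complex.im)
      (fun a _ => by positivity) fun y hy hys => ?_).trans_eq ?_
    · have hζ : p.eval (x + y * Complex.I) ≠ 0 := fun h =>
        hxs _ (Multiset.mem_toFinset.2 ((Polynomial.mem_roots hp).2 h)) (by simp)
      have hlog := norm_derivative_div_eval_le (ζ := x + y * Complex.I) hp
        (fun a ha => by simpa using hxs a ha) (fun a ha => by simpa using hys a ha)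
      refine ((hΦ _ (norm_add_mul_I_le_four hx hy) hζ).trans
        (mul_le_mul_of_nonneg_left hlog hK)).trans_eq ?_
      simp [s, Finset.mul_sum, mul_assoc]
    · rw [Finset.sum_mul]
      exact Finset.sum_congr rfl fun a _ => by ring
  have hcount : (∑ a ∈ s, p.roots.count a : ℝ) ≤ p.natDegree := by
    exact_mod_cast (Multiset.toFinset_sum_count_eq p.roots).trans_le p.card_roots'
  calc _ ≤ (∑ a ∈ s, K * p.roots.count a * invSqrtBound) * invSqrtBound :=
        norm_integral_le_of_norm_le_sum_inv_sqrt (fun a _ => by positivity) hinner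
    _ = K * (∑ a ∈ s, p.roots.count a : ℝ) * invSqrtBound ^ 2 := by
        rw [← Finset.sum_mul, ← Finset.mul_sum]; ring
    _ ≤ _ := by gcongr

end LogarithmicDerivative

section RegularizedQuotient

lemma exists_le_pow_and_pow_le {a τ : ℝ} (ha : 0 ≤ a) (hτ : 0 < τ) {j : ℕ} (hj : j ≠ 0) :
    ∃ s, τ ≤ s ∧ a ≤ s ^ j ∧ s ^ (2 * j) ≤ a ^ 2 + τ ^ (2 * j) := by
  rcases le_or_gt a (τ ^ j) with hle | hlt
  · exact ⟨τ, le_rfl, hle, le_add_of_nonneg_left (sq_nonneg a)⟩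
  · have hroot : (a ^ (j : ℝ)⁻¹) ^ j = a := Real.rpow_inv_natCast_pow ha hj
    refine ⟨a ^ (j : ℝ)⁻¹, le_of_pow_le_pow_left₀ hj (by positivity) (hlt.le.trans hroot.ge),
      hroot.ge, ?_⟩
    rw [mul_comm 2 j, pow_mul, hroot]
    exact le_add_of_nonneg_right (by positivity)

lemma le_two_mul_pow_succ {a b s τ : ℝ} {j : ℕ} (ha : 0 ≤ a) (hj : j ≠ 0) (hτ : 0 ≤ τ)
    (hs : τ ≤ s) (has : a ≤ s ^ j) (h : b ^ j ≤ a ^ (j + 1) + τ ^ (j * (j + 1))) :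
    b ≤ 2 * s ^ (j + 1) := by
  have hs₀ : 0 ≤ s := hτ.trans hs
  refine le_of_pow_le_pow_left₀ hj (by positivity) ?_
  calc b ^ j ≤ (s ^ j) ^ (j + 1) + s ^ (j * (j + 1)) := h.trans (by gcongr)
    _ = 2 * (s ^ (j + 1)) ^ j := by rw [← pow_mul, ← pow_mul, mul_comm (j + 1)]; ring
    _ ≤ 2 ^ j * (s ^ (j + 1)) ^ j := by gcongr; exact le_self_pow₀ one_le_two hj
    _ = (2 * s ^ (j + 1)) ^ j := (mul_pow _ _ _).symm

lemma mul_pow_le_of_pow_le_add {a b τ : ℝ} {j : ℕ} (ha : 0 ≤ a) (hτ : 0 < τ) (hj : j ≠ 0)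
    (h : b ^ j ≤ a ^ (j + 1) + τ ^ (j * (j + 1))) :
    b * τ ^ (2 * j) ≤ 2 * τ ^ (j + 1) * (a ^ 2 + τ ^ (2 * j)) ∧
      b * a * τ ^ (2 * j) ≤ 2 * τ * (a ^ 2 + τ ^ (2 * j)) ^ 2 := by
  obtain ⟨s, hs, has, hden⟩ := exists_le_pow_and_pow_le ha hτ hj
  have hbs := le_two_mul_pow_succ ha hj hτ.le hs has h
  have hs₀ : 0 < s := hτ.trans_le hs
  obtain ⟨i, rfl⟩ := Nat.exists_eq_succ_of_ne_zero hj
  constructor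
  · calc b * τ ^ (2 * (i + 1)) ≤ 2 * s ^ (i + 2) * τ ^ (2 * (i + 1)) := by gcongr
      _ = 2 * τ ^ (i + 2) * (s ^ (i + 2) * τ ^ i) := by ring
      _ ≤ 2 * τ ^ (i + 2) * (s ^ (i + 2) * s ^ i) := by gcongr
      _ = 2 * τ ^ (i + 2) * s ^ (2 * (i + 1)) := by ring
      _ ≤ 2 * τ ^ (i + 2) * (a ^ 2 + τ ^ (2 * (i + 1))) := by gcongr
  · calc b * a * τ ^ (2 * (i + 1))
        ≤ 2 * s ^ (i + 2) * s ^ (i + 1) * τ ^ (2 * (i + 1)) := by gcongr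
      _ = 2 * τ * (s ^ (2 * i + 3) * τ ^ (2 * i + 1)) := by ring
      _ ≤ 2 * τ * (s ^ (2 * i + 3) * s ^ (2 * i + 1)) := by gcongr
      _ = 2 * τ * (s ^ (2 * (i + 1))) ^ 2 := by ring
      _ ≤ 2 * τ * (a ^ 2 + τ ^ (2 * (i + 1))) ^ 2 := by gcongr

variable {p q k : Polynomial ℂ} {T : ℝ} {ζ : ℂ}

/-- The denominator `‖p ζ‖ ^ 2 + T` of `regularizedQuotient`, as a complex number. -/
def regularizedDenom (p : Polynomial ℂ) (T : ℝ) (ζ : ℂ) : ℂ :=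
  p.eval ζ * starRingEnd ℂ (p.eval ζ) + T

/-- The quotient `q / p` with its poles smoothed out at scale `T`; it is real-differentiable but
not holomorphic. -/
def regularizedQuotient (p q : Polynomial ℂ) (T : ℝ) (ζ : ℂ) : ℂ :=
  q.eval ζ * starRingEnd ℂ (p.eval ζ) / regularizedDenom p T ζ

lemma norm_regularizedDenom (hT : 0 < T) : ‖regularizedDenom p T ζ‖ = ‖p.eval ζ‖ ^ 2 + T := by
  rw [regularizedDenom, Complex.mul_conj, Complex.normSq_eq_norm_sq, ← Complex.ofReal_add,
    Complex.norm_real, Real.norm_of_nonneg (by positivity)]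

lemma regularizedDenom_ne_zero (hT : 0 < T) : regularizedDenom p T ζ ≠ 0 := by
  rw [← norm_pos_iff, norm_regularizedDenom hT]
  positivity

lemma continuous_regularizedDenom : Continuous (regularizedDenom p T) :=
  (p.continuous.mul (Complex.continuous_conj.comp p.continuous)).add continuous_const

lemma continuous_regularizedQuotient (hT : 0 < T) : Continuous (regularizedQuotient p q T) :=
  (q.continuous.mul (Complex.continuous_conj.comp p.continuous)).div continuous_regularizedDenom
    fun _ => regularizedDenom_ne_zero hT

lemma regularizedQuotient_mul_sub (hT : 0 < T) :
    regularizedQuotient p q T ζ * p.eval ζ - q.eval ζ =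
      -(q.eval ζ * T) / regularizedDenom p T ζ := by
  have := regularizedDenom_ne_zero (p := p) (ζ := ζ) hT
  rw [regularizedQuotient, div_mul_eq_mul_div, div_sub' this]
  congr 1
  rw [regularizedDenom]
  ring

lemma hasFDerivAt_regularizedQuotient_mul (hT : 0 < T) :
    ∃ L : ℂ →L[ℝ] ℂ, HasFDerivAt (fun ζ => regularizedQuotient p q T ζ * k.eval ζ) L ζ ∧
      Complex.I * L 1 - L Complex.I = 2 * Complex.I * (q.eval ζ * k.eval ζ) *
        starRingEnd ℂ (p.derivative.eval ζ) * T / regularizedDenom p T ζ ^ 2 := by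
  have hden : p.eval ζ * starRingEnd ℂ (p.eval ζ) + T ≠ 0 := regularizedDenom_ne_zero hT
  have hqk := ((q * k).hasDerivAt ζ).complexToReal_fderiv
  have hp := (p.hasDerivAt ζ).complexToReal_fderiv
  have hconj : HasFDerivAt (fun ζ => starRingEnd ℂ (p.eval ζ))
      ((Complex.conjCLE : ℂ →L[ℝ] ℂ).comp (p.derivative.eval ζ • (1 : ℂ →L[ℝ] ℂ))) ζ :=
    (Complex.conjCLE : ℂ →L[ℝ] ℂ).hasFDerivAt.comp ζ hp
  have hinv := (hasDerivAt_inv hden).complexToReal_fderiv.comp ζ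
    ((hp.fun_mul hconj).add_const (T : ℂ))
  refine ⟨_, ((hqk.fun_mul hconj).fun_mul hinv).congr_of_eventuallyEq
    (Eventually.of_forall fun w => ?_), ?_⟩
  · simp only [regularizedQuotient, regularizedDenom, Polynomial.eval_mul, Function.comp]
    ring
  · simp only [regularizedDenom, Polynomial.eval_mul, Function.comp, add_apply,
      smul_apply, ContinuousLinearMap.comp_apply,
      one_apply_eq_self, smul_eq_mul, ContinuousLinearEquiv.coe_coe,
      Complex.conjCLE_apply, map_mul, Complex.conj_I, mul_one]
    field_simp
    ring

lemma differentiable_regularizedQuotient_mul (hT : 0 < T) :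
    Differentiable ℝ fun ζ => regularizedQuotient p q T ζ * k.eval ζ := fun _ =>
  let ⟨_, hL, _⟩ := hasFDerivAt_regularizedQuotient_mul hT
  hL.differentiableAt

lemma twoIDbar_regularizedQuotient_mul (hT : 0 < T) :
    twoIDbar (fun ζ => regularizedQuotient p q T ζ * k.eval ζ) ζ =
      2 * Complex.I * (q.eval ζ * k.eval ζ) * starRingEnd ℂ (p.derivative.eval ζ) * T /
        regularizedDenom p T ζ ^ 2 := by
  obtain ⟨L, hL, hLeq⟩ := hasFDerivAt_regularizedQuotient_mul (p := p) (q := q) (k := k) hT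
  rw [twoIDbar, hL.fderiv, hLeq]

lemma continuous_twoIDbar_regularizedQuotient_mul (hT : 0 < T) :
    Continuous (twoIDbar fun ζ => regularizedQuotient p q T ζ * k.eval ζ) := by
  refine Continuous.congr ?_ fun ζ => (twoIDbar_regularizedQuotient_mul hT).symm
  exact (((continuous_const.mul (q.continuous.mul k.continuous)).mul
    (Complex.continuous_conj.comp p.derivative.continuous)).mul continuous_const).div
    (continuous_regularizedDenom.pow 2) fun _ => pow_ne_zero 2 (regularizedDenom_ne_zero hT)

end RegularizedQuotient

section CauchyTransform

lemma norm_le_of_forall_norm_eq {f : ℂ → ℂ} {R K : ℝ} (hR : 0 < R)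
    (hf : DiffContOnCl ℂ f (Metric.ball 0 R)) (h : ∀ ζ, ‖ζ‖ = R → ‖f ζ‖ ≤ K) {z : ℂ}
    (hz : ‖z‖ ≤ R) : ‖f z‖ ≤ K := by
  refine Complex.norm_le_of_forall_mem_frontier_norm_le Metric.isBounded_ball hf
    (fun ζ hζ => ?_) ?_
  · rw [frontier_ball _ hR.ne'] at hζ
    exact h ζ (by simpa using hζ)
  · rw [closure_ball _ hR.ne']
    simpa using hz

lemma exists_dividedDifference (p : Polynomial ℂ) {z : ℂ} (hz : ‖z‖ ≤ 1) {B : ℝ}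
    (h : ∀ ζ, ‖ζ‖ ≤ 4 → ‖p.eval ζ‖ ≤ B) : ∃ k : Polynomial ℂ,
      (∀ ζ, p.eval z = p.eval ζ - (ζ - z) * k.eval ζ) ∧ ∀ ζ, ‖ζ‖ ≤ 4 → ‖k.eval ζ‖ ≤ B := by
  obtain ⟨k, hk⟩ := Polynomial.X_sub_C_dvd_sub_C_eval (p := p) (a := z)
  have hdiff : ∀ ζ, p.eval ζ - p.eval z = (ζ - z) * k.eval ζ := fun ζ => by
    simpa using congrArg (Polynomial.eval ζ) hk
  refine ⟨k, fun ζ => by rw [← hdiff]; ring, fun ζ hζ => ?_⟩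
  refine norm_le_of_forall_norm_eq (by norm_num) k.differentiable.diffContOnCl
    (fun ζ hζ => ?_) hζ
  have hmul : ‖ζ - z‖ * ‖k.eval ζ‖ ≤ B + B := by
    rw [← norm_mul, ← hdiff]
    exact (norm_sub_le _ _).trans (add_le_add (h _ hζ.le) (h _ (by linarith)))
  have hdist : 2 ≤ ‖ζ - z‖ := by linarith [norm_sub_norm_le ζ z]
  nlinarith [norm_nonneg (k.eval ζ)]

lemma squareIntegral_cauchyKernel_mul_sub {u : ℂ → ℂ} {p q kp kq : Polynomial ℂ} {z : ℂ}
    (hu : Continuous u) (hz : ‖z‖ < 3 / 2)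
    (hkp : ∀ ζ, p.eval z = p.eval ζ - (ζ - z) * kp.eval ζ)
    (hkq : ∀ ζ, q.eval z = q.eval ζ - (ζ - z) * kq.eval ζ) :
    (squareIntegral fun ζ => u ζ / (ζ - z)) * p.eval z -
        (squareIntegral fun ζ => 1 / (ζ - z)) * q.eval z =
      (squareIntegral fun ζ => (u ζ * p.eval ζ - q.eval ζ) / (ζ - z)) -
        squareIntegral fun ζ => u ζ * kp.eval ζ := by
  have hker : ∀ v : ℂ → ℂ, Continuous v → ContinuousOn (fun ζ => v ζ / (ζ - z)) {ζ | 2 ≤ ‖ζ‖} :=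
    fun v hv => by simpa using continuousOn_cauchyKernel hv.continuousOn hz 1
  have hukp : Continuous fun ζ => u ζ * kp.eval ζ := hu.mul kp.continuous
  have hkq₀ : squareIntegral (fun ζ => kq.eval ζ) = 0 := squareIntegral_eq_zero kq.differentiable
  rw [← squareIntegral_mul_const, ← squareIntegral_mul_const,
    ← squareIntegral_sub ((hker u hu).fun_mul continuousOn_const)
      ((hker _ continuous_const).fun_mul continuousOn_const),
    ← sub_zero (squareIntegral fun ζ => u ζ * kp.eval ζ), ← hkq₀,
    ← squareIntegral_sub hukp.continuousOn kq.continuous.continuousOn,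
    ← squareIntegral_sub (hker _ ((hu.fun_mul p.continuous).fun_sub q.continuous))
      (hukp.fun_sub kq.continuous).continuousOn]
  refine squareIntegral_congr fun ζ hζ => ?_
  have := sub_ne_zero_of_two_le_norm hζ hz
  rw [hkp ζ, hkq ζ]
  field_simp
  ring

variable {p q : Polynomial ℂ} {B τ : ℝ} {j : ℕ}

lemma norm_mul_pow_le_of_norm_pow_sub_le {ζ : ℂ} (hj : j ≠ 0) (hτ : 0 < τ)
    (h : ‖p.eval ζ ^ (j + 1) - q.eval ζ ^ j‖ ≤ τ ^ (j * (j + 1))) :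
    ‖q.eval ζ‖ * τ ^ (2 * j) ≤ 2 * τ ^ (j + 1) * (‖p.eval ζ‖ ^ 2 + τ ^ (2 * j)) ∧
      ‖q.eval ζ‖ * ‖p.eval ζ‖ * τ ^ (2 * j) ≤ 2 * τ * (‖p.eval ζ‖ ^ 2 + τ ^ (2 * j)) ^ 2 := by
  refine mul_pow_le_of_pow_le_add (norm_nonneg _) hτ hj ?_
  rw [← norm_pow, ← norm_pow]
  exact (norm_le_norm_add_norm_sub _ _).trans (by gcongr)

lemma norm_regularizedQuotient_mul_sub_le {ζ : ℂ} (hj : j ≠ 0) (hτ : 0 < τ) (hτ₁ : τ ≤ 1)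
    (h : ‖p.eval ζ ^ (j + 1) - q.eval ζ ^ j‖ ≤ τ ^ (j * (j + 1))) :
    ‖regularizedQuotient p q (τ ^ (2 * j)) ζ * p.eval ζ - q.eval ζ‖ ≤ 2 * τ := by
  have hT : 0 < τ ^ (2 * j) := by positivity
  rw [regularizedQuotient_mul_sub hT, norm_div, norm_neg, norm_mul, norm_regularizedDenom hT,
    Complex.norm_real, Real.norm_of_nonneg hT.le, div_le_iff₀ (by positivity)]
  refine (norm_mul_pow_le_of_norm_pow_sub_le hj hτ h).1.trans ?_
  gcongr
  exact pow_le_of_le_one hτ.le hτ₁ (by omega)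

lemma norm_twoIDbar_regularizedQuotient_mul_le {k : Polynomial ℂ} {ζ : ℂ} (hj : j ≠ 0)
    (hτ : 0 < τ) (h : ‖p.eval ζ ^ (j + 1) - q.eval ζ ^ j‖ ≤ τ ^ (j * (j + 1)))
    (hk : ‖k.eval ζ‖ ≤ B) (hζ : p.eval ζ ≠ 0) :
    ‖twoIDbar (fun ζ => regularizedQuotient p q (τ ^ (2 * j)) ζ * k.eval ζ) ζ‖ ≤
      4 * B * τ * ‖p.derivative.eval ζ / p.eval ζ‖ := by
  have hT : 0 < τ ^ (2 * j) := by positivity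
  have hB : 0 ≤ B := (norm_nonneg _).trans hk
  have hp : 0 < ‖p.eval ζ‖ := norm_pos_iff.mpr hζ
  rw [twoIDbar_regularizedQuotient_mul hT, norm_div, norm_pow, norm_regularizedDenom hT]
  simp only [norm_mul, norm_div, Complex.norm_I, Complex.norm_ofNat, Complex.norm_real,
    Real.norm_of_nonneg hT.le, RCLike.norm_conj, mul_one]
  rw [div_le_iff₀ (by positivity), ← mul_div_assoc, div_mul_eq_mul_div, le_div_iff₀ hp]
  calc 2 * (‖q.eval ζ‖ * ‖k.eval ζ‖) * ‖p.derivative.eval ζ‖ * τ ^ (2 * j) * ‖p.eval ζ‖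
      = 2 * ‖k.eval ζ‖ * ‖p.derivative.eval ζ‖ * (‖q.eval ζ‖ * ‖p.eval ζ‖ * τ ^ (2 * j)) := by
        ring
    _ ≤ 2 * B * ‖p.derivative.eval ζ‖ * (2 * τ * (‖p.eval ζ‖ ^ 2 + τ ^ (2 * j)) ^ 2) := by
        exact mul_le_mul (by gcongr) (norm_mul_pow_le_of_norm_pow_sub_le hj hτ h).2
          (by positivity) (by positivity)
    _ = _ := by ring

lemma norm_squareIntegral_regularizedQuotient_mul_le {k : Polynomial ℂ} (hp : p ≠ 0)
    (hj : j ≠ 0) (hτ : 0 < τ)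
    (h : ∀ ζ, ‖ζ‖ ≤ 4 → ‖p.eval ζ ^ (j + 1) - q.eval ζ ^ j‖ ≤ τ ^ (j * (j + 1)))
    (hk : ∀ ζ, ‖ζ‖ ≤ 4 → ‖k.eval ζ‖ ≤ B) :
    ‖squareIntegral fun ζ => regularizedQuotient p q (τ ^ (2 * j)) ζ * k.eval ζ‖ ≤
      4 * B * τ * p.natDegree * invSqrtBound ^ 2 := by
  have hT : 0 < τ ^ (2 * j) := by positivity
  have hB : 0 ≤ B := (norm_nonneg _).trans (hk 0 (by simp))
  rw [squareIntegral_eq_integral_twoIDbar (differentiable_regularizedQuotient_mul hT)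
    (continuous_twoIDbar_regularizedQuotient_mul hT)]
  exact norm_integral_le_of_norm_le_derivative_div_eval hp (by positivity) fun ζ hζ hpζ =>
    norm_twoIDbar_regularizedQuotient_mul_le hj hτ (h ζ hζ) (hk ζ hζ) hpζ

lemma norm_squareIntegral_cauchyKernel_mul_sub_le (hp : p ≠ 0) (hj : j ≠ 0)
    (hpB : ∀ ζ, ‖ζ‖ ≤ 4 → ‖p.eval ζ‖ ≤ B) (hqB : ∀ ζ, ‖ζ‖ ≤ 4 → ‖q.eval ζ‖ ≤ B)
    (hτ : 0 < τ) (hτ₁ : τ ≤ 1)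
    (h : ∀ ζ, ‖ζ‖ ≤ 4 → ‖p.eval ζ ^ (j + 1) - q.eval ζ ^ j‖ ≤ τ ^ (j * (j + 1)))
    {z : ℂ} (hz : ‖z‖ ≤ 1) :
    ‖(squareIntegral fun ζ => regularizedQuotient p q (τ ^ (2 * j)) ζ / (ζ - z)) * p.eval z -
        (squareIntegral fun ζ => 1 / (ζ - z)) * q.eval z‖ ≤
      16 * (2 * τ) + 4 * B * τ * p.natDegree * invSqrtBound ^ 2 := by
  obtain ⟨kp, hkp, hkpB⟩ := exists_dividedDifference p hz hpB
  obtain ⟨kq, hkq, -⟩ := exists_dividedDifference q hz hqB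
  rw [squareIntegral_cauchyKernel_mul_sub
    (continuous_regularizedQuotient (by positivity)) (by linarith) hkp hkq]
  refine (norm_sub_le _ _).trans (add_le_add (norm_squareIntegral_le fun ζ hζ₂ hζ₄ => ?_)
    (norm_squareIntegral_regularizedQuotient_mul_le hp hj hτ h hkpB))
  have hdist : 1 ≤ ‖ζ - z‖ := by linarith [norm_sub_norm_le ζ z]
  rw [norm_div]
  exact (div_le_self (norm_nonneg _) hdist).trans
    (norm_regularizedQuotient_mul_sub_le hj hτ hτ₁ (h ζ hζ₄))

/-- The constant in `exists_differentiableOn_norm_mul_sub_le`. -/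
def quotientConst : ℝ := 25 * (32 + 4 * invSqrtBound ^ 2)

lemma quotientConst_pos : 0 < quotientConst := by
  unfold quotientConst
  positivity

-- If `q / p` were a polynomial it would be reproduced by the Cauchy integral over the square; the
-- Cauchy integral of the regularized quotient differs from it by a `∂̄`-term of size `O(τ)`.
theorem exists_differentiableOn_norm_mul_sub_le (hp : p ≠ 0) (hj : j ≠ 0) (hB : 1 ≤ B)
    (hpB : ∀ ζ, ‖ζ‖ ≤ 4 → ‖p.eval ζ‖ ≤ B) (hqB : ∀ ζ, ‖ζ‖ ≤ 4 → ‖q.eval ζ‖ ≤ B)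
    (hτ : 0 < τ) (hτ₁ : τ ≤ 1)
    (h : ∀ ζ, ‖ζ‖ ≤ 4 → ‖p.eval ζ ^ (j + 1) - q.eval ζ ^ j‖ ≤ τ ^ (j * (j + 1))) :
    ∃ F : ℂ → ℂ, DifferentiableOn ℂ F (Metric.ball 0 (3 / 2)) ∧ ∀ z, ‖z‖ ≤ 1 →
      ‖F z * p.eval z - q.eval z‖ ≤ quotientConst * B * (p.natDegree + 1) * τ := by
  set u := regularizedQuotient p q (τ ^ (2 * j))
  have hu : Continuous u := continuous_regularizedQuotient (by positivity)
  set w : ℂ → ℂ := fun z => squareIntegral fun ζ => 1 / (ζ - z)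
  have hw : ∀ {z : ℂ}, ‖z‖ < 3 / 2 → 1 / 25 ≤ ‖w z‖ := le_norm_squareIntegral_cauchyKernel
  have hw₀ : ∀ {z : ℂ}, ‖z‖ < 3 / 2 → w z ≠ 0 := fun hz =>
    norm_pos_iff.mp ((by norm_num : (0 : ℝ) < 1 / 25).trans_le (hw hz))
  refine ⟨fun z => (squareIntegral fun ζ => u ζ / (ζ - z)) / w z, ?_, fun z hz => ?_⟩
  · exact (differentiableOn_squareIntegral_cauchyKernel hu.continuousOn).fun_div
      (differentiableOn_squareIntegral_cauchyKernel (u := fun _ => 1) continuousOn_const)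
      fun z hz => hw₀ (mem_ball_zero_iff.mp hz)
  · have hz' : ‖z‖ < 3 / 2 := by linarith
    have hbound := norm_squareIntegral_cauchyKernel_mul_sub_le hp hj hpB hqB hτ hτ₁ h hz
    have hBn : 1 ≤ B * (p.natDegree + 1) := one_le_mul_of_one_le_of_one_le hB (by simp)
    rw [div_mul_eq_mul_div, div_sub' (hw₀ hz'), norm_div,
      div_le_iff₀ (norm_pos_iff.mpr (hw₀ hz'))]
    calc _ ≤ 16 * (2 * τ) + 4 * B * τ * p.natDegree * invSqrtBound ^ 2 := hbound
      _ ≤ 32 * τ * (B * (p.natDegree + 1)) + 4 * B * τ * (p.natDegree + 1) * invSqrtBound ^ 2 := by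
          gcongr ?_ + 4 * B * τ * ?_ * _
          · nlinarith
          · linarith
      _ = quotientConst * B * (p.natDegree + 1) * τ * (1 / 25) := by
          rw [quotientConst]; ring
      _ ≤ _ := by
          have := quotientConst_pos
          gcongr
          exact hw hz'

end CauchyTransform

section OuterPart

open Polynomial

/-- The linear factor `z - a`, replaced by its reflection `1 - conj a * z` in the unit circle when
`a` lies in the open unit disc. -/
def reflectedFactor (a z : ℂ) : ℂ :=
  if ‖a‖ < 1 then 1 - (starRingEnd ℂ) a * z else z - a

lemma differentiable_reflectedFactor (a : ℂ) : Differentiable ℂ (reflectedFactor a) := by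
  unfold reflectedFactor
  split_ifs <;> fun_prop

lemma norm_reflectedFactor_of_norm_eq_one (a : ℂ) {z : ℂ} (hz : ‖z‖ = 1) :
    ‖reflectedFactor a z‖ = ‖z - a‖ := by
  unfold reflectedFactor
  split_ifs
  · have hreflect : 1 - (starRingEnd ℂ) a * z = (starRingEnd ℂ) (z - a) * z := by
      rw [map_sub, sub_mul, Complex.conj_mul', hz, Complex.ofReal_one, one_pow]
    rw [hreflect, norm_mul, hz, mul_one, RCLike.norm_conj]
  · rfl

lemma norm_sub_le_four_mul_norm_reflectedFactor (a : ℂ) {w z : ℂ} (hw : ‖w‖ ≤ 1)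
    (hz : ‖z‖ ≤ 1 / 2) : ‖w - a‖ ≤ 4 * ‖reflectedFactor a z‖ := by
  have hwa : ‖w - a‖ ≤ ‖w‖ + ‖a‖ := norm_sub_le w a
  unfold reflectedFactor
  split_ifs with ha
  · have hlower := norm_sub_norm_le (1 : ℂ) ((starRingEnd ℂ) a * z)
    rw [norm_mul, RCLike.norm_conj, norm_one] at hlower
    have : ‖a‖ * ‖z‖ ≤ 1 * (1 / 2) := by gcongr
    linarith
  · have hlower := norm_sub_norm_le a z
    rw [norm_sub_rev] at hlower
    linarith

/-- The polynomial function obtained from `P` by reflecting its zeros in the open unit disc across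
the unit circle: it has the modulus of `P` on the circle and no zeros in the open disc. -/
def outerPart (P : ℂ[X]) (z : ℂ) : ℂ :=
  P.leadingCoeff * (P.roots.map fun a => reflectedFactor a z).prod

lemma differentiable_outerPart (P : ℂ[X]) : Differentiable ℂ (outerPart P) := by
  refine Differentiable.const_mul ?_ _
  induction P.roots using Multiset.induction_on with
  | empty => simp
  | cons a s ih =>
    simp only [Multiset.map_cons, Multiset.prod_cons]
    exact (differentiable_reflectedFactor a).mul ih

lemma norm_multiset_prod_map {ι : Type*} (s : Multiset ι) (f : ι → ℂ) :
    ‖(s.map f).prod‖ = (s.map fun a => ‖f a‖).prod := by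
  simpa using map_multiset_prod (normHom : ℂ →*₀ ℝ) (s.map f)

lemma norm_eval_eq_prod_roots (P : ℂ[X]) (z : ℂ) :
    ‖P.eval z‖ = ‖P.leadingCoeff‖ * (P.roots.map fun a => ‖z - a‖).prod := by
  rw [(IsAlgClosed.splits P).eval_eq_prod_roots, norm_mul, norm_multiset_prod_map]

lemma norm_outerPart (P : ℂ[X]) (z : ℂ) :
    ‖outerPart P z‖ = ‖P.leadingCoeff‖ * (P.roots.map fun a => ‖reflectedFactor a z‖).prod := by
  rw [outerPart, norm_mul, norm_multiset_prod_map]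

lemma norm_outerPart_of_norm_eq_one (P : ℂ[X]) {z : ℂ} (hz : ‖z‖ = 1) :
    ‖outerPart P z‖ = ‖P.eval z‖ := by
  simp only [norm_outerPart, norm_eval_eq_prod_roots, norm_reflectedFactor_of_norm_eq_one _ hz]

lemma norm_eval_le_mul_norm_outerPart (P : ℂ[X]) {w z : ℂ} (hw : ‖w‖ ≤ 1) (hz : ‖z‖ ≤ 1 / 2) :
    ‖P.eval w‖ ≤ 4 ^ P.natDegree * ‖outerPart P z‖ := by
  have hprod : (P.roots.map fun a => ‖w - a‖).prod ≤
      4 ^ P.natDegree * (P.roots.map fun a => ‖reflectedFactor a z‖).prod := by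
    have hcard : P.roots.card = P.natDegree :=
      (IsAlgClosed.splits P).natDegree_eq_card_roots.symm
    rw [← hcard, ← Multiset.prod_replicate, ← Multiset.map_const', ← Multiset.prod_map_mul]
    exact Multiset.prod_map_le_prod_map₀ _ _ (fun _ _ => norm_nonneg _)
      fun a _ => norm_sub_le_four_mul_norm_reflectedFactor a hw hz
  rw [norm_eval_eq_prod_roots, norm_outerPart, mul_left_comm]
  gcongr

lemma norm_mul_norm_eval_le (P : ℂ[X]) {V : ℂ → ℂ} {δ : ℝ}
    (hV : DiffContOnCl ℂ V (Metric.ball 0 1)) (h : ∀ z, ‖z‖ = 1 → ‖P.eval z * V z‖ ≤ δ)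
    {w z : ℂ} (hw : ‖w‖ ≤ 1) (hz : ‖z‖ ≤ 1 / 2) :
    ‖V z‖ * ‖P.eval w‖ ≤ 4 ^ P.natDegree * δ := by
  have hmax : ‖outerPart P z * V z‖ ≤ δ := by
    refine norm_le_of_forall_norm_eq (f := fun z => outerPart P z * V z) one_pos
      ((differentiable_outerPart P).diffContOnCl.smul hV) (fun ζ hζ => ?_) (by linarith)
    rw [norm_mul, norm_outerPart_of_norm_eq_one P hζ, ← norm_mul]
    exact h ζ hζ
  calc ‖V z‖ * ‖P.eval w‖ ≤ ‖V z‖ * (4 ^ P.natDegree * ‖outerPart P z‖) := by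
        gcongr
        exact norm_eval_le_mul_norm_outerPart P hw hz
    _ = 4 ^ P.natDegree * ‖outerPart P z * V z‖ := by rw [norm_mul]; ring
    _ ≤ 4 ^ P.natDegree * δ := by gcongr

end OuterPart

section PolynomialEstimates

open Polynomial

lemma norm_eval_le_two_mul_of_norm_coeff_le {p : ℂ[X]} {C β : ℝ} (hβ : 0 < β)
    (h : ∀ k, ‖p.coeff k‖ ≤ C * β ^ k) {z : ℂ} (hz : ‖z‖ ≤ 1 / (2 * β)) :
    ‖p.eval z‖ ≤ 2 * C := by
  have hC : 0 ≤ C := by simpa using (norm_nonneg _).trans (h 0)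
  have hterm (k : ℕ) : ‖p.coeff k * z ^ k‖ ≤ C * (1 / 2) ^ k :=
    calc ‖p.coeff k * z ^ k‖ ≤ C * β ^ k * (1 / (2 * β)) ^ k := by
          rw [norm_mul, norm_pow]
          gcongr
          exact h k
      _ = C * (1 / 2) ^ k := by
          rw [mul_assoc, ← mul_pow]
          congr 2
          field_simp
  calc ‖p.eval z‖ ≤ ∑ k ∈ Finset.range (p.natDegree + 1), C * (1 / 2) ^ k := by
        rw [eval_eq_sum_range]
        exact norm_sum_le_of_le _ fun k _ => hterm k
    _ = C * ∑ k ∈ Finset.range (p.natDegree + 1), (1 / 2 : ℝ) ^ k := (Finset.mul_sum ..).symm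
    _ ≤ C * 2 := by
        gcongr
        exact sum_geometric_two_le _
    _ = 2 * C := mul_comm _ _

lemma norm_eval_le_of_X_pow_dvd {W : ℂ[X]} {N : ℕ} {R K : ℝ} (hR : 0 < R)
    (hdvd : X ^ N ∣ W) (h : ∀ ζ, ‖ζ‖ = R → ‖W.eval ζ‖ ≤ K) {z : ℂ} (hz : ‖z‖ ≤ R) :
    ‖W.eval z‖ ≤ K * (‖z‖ / R) ^ N := by
  obtain ⟨w, rfl⟩ := hdvd
  simp only [eval_mul, eval_pow, eval_X, norm_mul, norm_pow] at h ⊢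
  have hw : ‖w.eval z‖ ≤ K / R ^ N := by
    refine norm_le_of_forall_norm_eq hR w.differentiable.diffContOnCl (fun ζ hζ => ?_) hz
    rw [le_div_iff₀' (by positivity), ← hζ]
    exact h ζ hζ
  calc ‖z‖ ^ N * ‖w.eval z‖ ≤ ‖z‖ ^ N * (K / R ^ N) := by gcongr
    _ = K * (‖z‖ / R) ^ N := by rw [div_pow]; ring

lemma eval_zero_eq_zero_of_isBigO {V : ℂ[X]} {n N : ℕ} (hn : n < N)
    (h : (fun x : ℝ => (x : ℂ) ^ n * V.eval (x : ℂ)) =O[𝓝[>] 0] fun x => x ^ N) :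
    V.eval 0 = 0 := by
  obtain ⟨L, hL⟩ := h.bound
  have hV : Tendsto (fun x : ℝ => ‖V.eval (x : ℂ)‖) (𝓝[>] 0) (𝓝 ‖V.eval 0‖) := by
    have hcont : Continuous fun x : ℝ => ‖V.eval (x : ℂ)‖ := by fun_prop
    simpa using (hcont.tendsto 0).mono_left nhdsWithin_le_nhds
  have hpow : Tendsto (fun x : ℝ => L * x ^ (N - n)) (𝓝[>] 0) (𝓝 0) := by
    have hcont : Continuous fun x : ℝ => L * x ^ (N - n) := by fun_prop
    simpa [Nat.sub_ne_zero_of_lt hn] using (hcont.tendsto 0).mono_left nhdsWithin_le_nhds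
  refine norm_le_zero_iff.mp (le_of_tendsto_of_tendsto hV hpow ?_)
  filter_upwards [hL, self_mem_nhdsWithin] with x hx (hx₀ : 0 < x)
  have hsplit : x ^ N = x ^ n * x ^ (N - n) := by rw [← pow_add, Nat.add_sub_cancel' hn.le]
  rw [norm_mul, norm_pow, Complex.norm_of_nonneg hx₀.le, Real.norm_of_nonneg (by positivity),
    hsplit, mul_left_comm] at hx
  exact le_of_mul_le_mul_left hx (by positivity)

lemma X_pow_dvd_of_isBigO {W : ℂ[X]} {N : ℕ}
    (h : (fun x : ℝ => W.eval (x : ℂ)) =O[𝓝[>] 0] fun x => x ^ N) : X ^ N ∣ W := by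
  suffices ∀ n ≤ N, X ^ n ∣ W from this N le_rfl
  intro n
  induction n with
  | zero => simp
  | succ n ih =>
    intro hn
    obtain ⟨V, rfl⟩ := ih (by omega)
    simp only [eval_mul, eval_pow, eval_X] at h
    rw [pow_succ]
    refine mul_dvd_mul_left _ (X_dvd_iff.mpr ?_)
    rw [coeff_zero_eq_eval_zero]
    exact eval_zero_eq_zero_of_isBigO hn h

lemma norm_pow_sub_pow_le {x y : ℂ} {B : ℝ} (hx : ‖x‖ ≤ B) (hy : ‖y‖ ≤ B) (j : ℕ) :
    ‖x ^ j - y ^ j‖ ≤ j * B ^ (j - 1) * ‖x - y‖ := by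
  have hsum : ‖∑ i ∈ Finset.range j, x ^ i * y ^ (j - 1 - i)‖ ≤ j * B ^ (j - 1) := by
    have hterm : ∀ i ∈ Finset.range j, ‖x ^ i * y ^ (j - 1 - i)‖ ≤ B ^ (j - 1) := by
      intro i hi
      have hB : 0 ≤ B := (norm_nonneg x).trans hx
      calc ‖x ^ i * y ^ (j - 1 - i)‖ ≤ B ^ i * B ^ (j - 1 - i) := by
            rw [norm_mul, norm_pow, norm_pow]
            gcongr
        _ = B ^ (j - 1) := by
            rw [← pow_add]
            congr 1
            have := Finset.mem_range.mp hi
            omega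
    simpa using norm_sum_le_of_le _ hterm
  rw [← (Commute.all x y).geom_sum₂_mul j, norm_mul]
  gcongr

lemma isBigO_pow_sub_pow {α R : Type*} [SeminormedCommRing R] {l : Filter α} {u v : α → R}
    {g : α → ℝ} (hu : u =O[l] fun _ => (1 : ℝ)) (hv : v =O[l] fun _ => (1 : ℝ))
    (h : (fun x => u x - v x) =O[l] g) (k : ℕ) : (fun x => u x ^ k - v x ^ k) =O[l] g := by
  induction k with
  | zero => simpa using isBigO_zero g l
  | succ k ih =>
    have hsplit : (fun x => u x ^ (k + 1) - v x ^ (k + 1)) =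
        fun x => u x ^ k * (u x - v x) + (u x ^ k - v x ^ k) * v x := by
      funext x
      ring
    rw [hsplit]
    exact (((hu.pow k).mul h).congr_right (by simp)).add ((ih.mul hv).congr_right (by simp))

lemma X_pow_dvd_pow_sub_pow_of_isBigO {f : ℝ → ℂ} {p q : ℂ[X]} {j N : ℕ}
    (hp : (fun x => f x ^ j - p.eval (x : ℂ)) =O[𝓝[>] 0] fun x => x ^ N)
    (hq : (fun x => f x ^ (j + 1) - q.eval (x : ℂ)) =O[𝓝[>] 0] fun x => x ^ N) :
    X ^ N ∣ p ^ (j + 1) - q ^ j := by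
  have hpow : (fun x : ℝ => x ^ N) =O[𝓝[>] 0] fun _ => (1 : ℝ) := by
    have hcont : Continuous fun x : ℝ => x ^ N := by fun_prop
    exact ((hcont.tendsto 0).mono_left nhdsWithin_le_nhds).isBigO_one ℝ
  have hpoly (r : ℂ[X]) : (fun x : ℝ => r.eval (x : ℂ)) =O[𝓝[>] 0] fun _ => (1 : ℝ) := by
    have hcont : Continuous fun x : ℝ => r.eval (x : ℂ) := by fun_prop
    exact ((hcont.tendsto 0).mono_left nhdsWithin_le_nhds).isBigO_one ℝ
  have hfp : (fun x => f x ^ j) =O[𝓝[>] 0] fun _ => (1 : ℝ) := by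
    simpa using (hp.trans hpow).add (hpoly p)
  have hfq : (fun x => f x ^ (j + 1)) =O[𝓝[>] 0] fun _ => (1 : ℝ) := by
    simpa using (hq.trans hpow).add (hpoly q)
  refine X_pow_dvd_of_isBigO (((isBigO_pow_sub_pow hfq (hpoly q) hq j).sub
    (isBigO_pow_sub_pow hfp (hpoly p) hp (j + 1))).congr_left fun x => ?_)
  rw [eval_sub, eval_pow, eval_pow]
  ring

end PolynomialEstimates

section ApproximateSolutions

/-- `x` solves the system `x ^ j = p`, `x * p = q` up to the error `ε`. With `p = f ^ j` and
`q = f ^ (j + 1)` the exact solution is `x = f`. -/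
structure IsApproxSolution (j : ℕ) (ε : ℝ) (x p q : ℂ) : Prop where
  norm_pow_sub_le : ‖x ^ j - p‖ ≤ ε
  norm_mul_sub_le : ‖x * p - q‖ ≤ ε

variable {j : ℕ} {ε δ : ℝ} {x y p q p' q' : ℂ}

lemma IsApproxSolution.mono (h : IsApproxSolution j ε x p q) (hεδ : ε ≤ δ) :
    IsApproxSolution j δ x p q :=
  ⟨h.norm_pow_sub_le.trans hεδ, h.norm_mul_sub_le.trans hεδ⟩

lemma isApproxSolution_self (j : ℕ) (x : ℂ) : IsApproxSolution j 0 x (x ^ j) (x ^ (j + 1)) :=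
  ⟨by simp, by simp [pow_succ']⟩

lemma norm_le_mul_of_norm_pow_le (hj : j ≠ 0) {L s : ℝ} (hL : 1 ≤ L) (hs : 0 ≤ s)
    (h : ‖x‖ ^ j ≤ L * s ^ j) : ‖x‖ ≤ L * s := by
  refine le_of_pow_le_pow_left₀ hj (by positivity) (h.trans ?_)
  rw [mul_pow]
  gcongr
  exact le_self_pow₀ hL hj

lemma IsApproxSolution.norm_sub_mul_norm_le (hx : IsApproxSolution j ε x p q)
    (hy : IsApproxSolution j ε y p' q') (hp : ‖p - p'‖ ≤ ε) (hq : ‖q - q'‖ ≤ ε) {K : ℝ}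
    (hyK : ‖y‖ ≤ K) : ‖x - y‖ * ‖p‖ ≤ (3 + K) * ε := by
  have hdecomp : (x - y) * p = (x * p - q) + (q - q') - (y * p' - q') - y * (p - p') := by ring
  have hlast : ‖y * (p - p')‖ ≤ K * ε := by
    rw [norm_mul]
    exact mul_le_mul hyK hp (norm_nonneg _) ((norm_nonneg y).trans hyK)
  calc ‖x - y‖ * ‖p‖ = ‖(x * p - q) + (q - q') - (y * p' - q') - y * (p - p')‖ := by
        rw [← norm_mul, hdecomp]
    _ ≤ ‖x * p - q‖ + ‖q - q'‖ + ‖y * p' - q'‖ + ‖y * (p - p')‖ :=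
        (norm_sub_le _ _).trans
          (add_le_add_left ((norm_sub_le _ _).trans (add_le_add_left (norm_add_le _ _) _)) _)
    _ ≤ ε + ε + ε + K * ε := by
        gcongr
        exacts [hx.norm_mul_sub_le, hy.norm_mul_sub_le]
    _ = (3 + K) * ε := by ring

/- When `‖p‖ ≥ s ^ j` one divides the second equation by `p`; otherwise both solutions are
`O(s)` by the first equation. -/
lemma IsApproxSolution.norm_sub_le_mul (hj : j ≠ 0) (hx : IsApproxSolution j ε x p q)
    (hy : IsApproxSolution j ε y p' q') (hp : ‖p - p'‖ ≤ ε) (hq : ‖q - q'‖ ≤ ε) {K s : ℝ}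
    (hK : 1 ≤ K) (hyK : ‖y‖ ≤ K) (hs : 0 < s) (hs₁ : s ≤ 1) (hε : ε ≤ K * s ^ (j + 1)) :
    ‖x - y‖ ≤ (K ^ 2 + 6 * K + 2) * s := by
  rcases le_or_gt (s ^ j) ‖p‖ with hlarge | hsmall
  · have hdiv : ‖x - y‖ * s ^ j ≤ (3 + K) * K * s * s ^ j :=
      calc ‖x - y‖ * s ^ j ≤ ‖x - y‖ * ‖p‖ := by gcongr
        _ ≤ (3 + K) * ε := hx.norm_sub_mul_norm_le hy hp hq hyK
        _ ≤ (3 + K) * (K * s ^ (j + 1)) := by gcongr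
        _ = (3 + K) * K * s * s ^ j := by ring
    have hxy := le_of_mul_le_mul_right hdiv (by positivity)
    nlinarith
  · have hεs : ε ≤ K * s ^ j :=
      hε.trans (by gcongr ?_ * ?_; exact pow_le_pow_of_le_one hs.le hs₁ j.le_succ)
    have hxs : ‖x‖ ≤ (1 + K) * s := by
      refine norm_le_mul_of_norm_pow_le hj (by linarith) hs.le ?_
      have := norm_le_norm_add_norm_sub p (x ^ j)
      rw [norm_sub_rev, norm_pow] at this
      linarith [hx.norm_pow_sub_le]
    have hys : ‖y‖ ≤ (1 + 2 * K) * s := by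
      refine norm_le_mul_of_norm_pow_le hj (by linarith) hs.le ?_
      have hyp := norm_le_norm_add_norm_sub p' (y ^ j)
      have hpp := norm_le_norm_add_norm_sub p p'
      rw [norm_sub_rev, norm_pow] at hyp
      linarith [hy.norm_pow_sub_le]
    have := norm_sub_le x y
    nlinarith

lemma isApproxSolution_zero (hj : j ≠ 0) (hε : 0 ≤ ε) (hε₁ : ε ≤ 1) (hp : ‖p‖ ≤ ε)
    (h : ‖p ^ (j + 1) - q ^ j‖ ≤ ε ^ j) : IsApproxSolution j (2 * ε) 0 p q := by
  have hpj : ‖p ^ (j + 1)‖ ≤ ε ^ j := by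
    rw [norm_pow]
    exact (pow_le_pow_left₀ (norm_nonneg _) hp _).trans (pow_le_pow_of_le_one hε hε₁ j.le_succ)
  have hq : ‖q‖ ≤ 2 * ε := by
    refine norm_le_mul_of_norm_pow_le hj one_le_two hε ?_
    have := norm_le_norm_add_norm_sub (p ^ (j + 1)) (q ^ j)
    rw [norm_pow q] at this
    linarith
  exact ⟨by rw [zero_pow hj, zero_sub, norm_neg]; linarith, by simpa using hq⟩

lemma norm_pow_mul_pow_sub_le {B : ℝ} (hq : ‖q‖ ≤ B) (h : ‖x * p - q‖ ≤ δ) (j : ℕ) :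
    ‖p ^ j * (x ^ j - p)‖ ≤ j * (B + δ) ^ (j - 1) * δ + ‖p ^ (j + 1) - q ^ j‖ := by
  have hδ : 0 ≤ δ := (norm_nonneg _).trans h
  have hB : 0 ≤ B := (norm_nonneg _).trans hq
  have hxp : ‖x * p‖ ≤ B + δ := by
    have := norm_le_norm_add_norm_sub q (x * p)
    rw [norm_sub_rev] at this
    linarith
  calc ‖p ^ j * (x ^ j - p)‖ = ‖((x * p) ^ j - q ^ j) - (p ^ (j + 1) - q ^ j)‖ := by ring_nf
    _ ≤ ‖(x * p) ^ j - q ^ j‖ + ‖p ^ (j + 1) - q ^ j‖ := norm_sub_le _ _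
    _ ≤ j * (B + δ) ^ (j - 1) * ‖x * p - q‖ + ‖p ^ (j + 1) - q ^ j‖ := by
        gcongr
        exact norm_pow_sub_pow_le hxp (by linarith) j
    _ ≤ j * (B + δ) ^ (j - 1) * δ + ‖p ^ (j + 1) - q ^ j‖ := by gcongr

lemma norm_le_of_norm_pow_sub_le (hj : j ≠ 0) (h : ‖x ^ j - p‖ ≤ δ) : ‖x‖ ≤ 1 + ‖p‖ + δ := by
  have hδ : 0 ≤ δ := (norm_nonneg _).trans h
  rcases le_or_gt ‖x‖ 1 with hx | hx
  · linarith [norm_nonneg p]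
  · have hpow : ‖x‖ ≤ ‖x ^ j‖ := by
      rw [norm_pow]
      exact le_self_pow₀ hx.le hj
    have := norm_le_norm_add_norm_sub p (x ^ j)
    rw [norm_sub_rev] at this
    linarith

end ApproximateSolutions

section LocalQuotient

open Polynomial

variable {p q : ℂ[X]} {F : ℂ → ℂ} {n j : ℕ} {A B ε γ κ : ℝ}

lemma norm_pow_sub_eval_le {D η : ℝ} (hD : 0 ≤ D) (hκ : 0 < κ) (hη : 0 ≤ η)
    (hηκ : 4 ^ j * η ≤ κ ^ (j + 1)) (hdeg : p.natDegree ≤ n)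
    (hF : DifferentiableOn ℂ F (Metric.ball 0 (3 / 2)))
    (h : ∀ z, ‖z‖ = 1 → ‖p.eval z ^ j * (F z ^ j - p.eval z)‖ ≤ D * η ^ n)
    {w z : ℂ} (hw : ‖w‖ ≤ 1) (hpw : κ ^ n ≤ ‖p.eval w‖) (hz : ‖z‖ ≤ 1 / 2) :
    ‖F z ^ j - p.eval z‖ ≤ D * κ ^ n := by
  have hdiff : DiffContOnCl ℂ (fun z => F z ^ j - p.eval z) (Metric.ball 0 1) :=
    ((hF.pow j).sub p.differentiable.differentiableOn).diffContOnCl_ball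
      (Metric.closedBall_subset_ball (by norm_num))
  have hcancel := norm_mul_norm_eval_le (p ^ j) hdiff (by simpa only [eval_pow] using h) hw hz
  have hdegj : (p ^ j).natDegree ≤ j * n := by
    rw [natDegree_pow]
    gcongr
  refine le_of_mul_le_mul_right (a := (κ ^ n) ^ j) ?_ (by positivity)
  calc ‖F z ^ j - p.eval z‖ * (κ ^ n) ^ j
      ≤ ‖F z ^ j - p.eval z‖ * ‖(p ^ j).eval w‖ := by
        rw [eval_pow, norm_pow]
        gcongr
    _ ≤ 4 ^ (p ^ j).natDegree * (D * η ^ n) := hcancel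
    _ ≤ 4 ^ (j * n) * (D * η ^ n) := by
        gcongr
        norm_num
    _ = D * (4 ^ j * η) ^ n := by rw [mul_pow, pow_mul]; ring
    _ ≤ D * (κ ^ (j + 1)) ^ n := by gcongr
    _ = D * κ ^ n * (κ ^ n) ^ j := by ring

/-- Constant in the bound for `F * p - q`, where `F` is the holomorphic quotient of `q` by `p`. -/
def mulErrorConst (B A : ℝ) : ℝ := quotientConst * B * A

/-- Constant in the bound for `F ^ j - p`. -/
def powErrorConst (j : ℕ) (B A : ℝ) : ℝ :=
  j * (B + mulErrorConst B A) ^ (j - 1) * mulErrorConst B A + A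

/-- Common bound for `F` and, up to the factor `κ ^ n`, for its errors as an approximate
solution. -/
def approxConst (j : ℕ) (B A : ℝ) : ℝ := 2 + B + powErrorConst j B A + mulErrorConst B A

lemma mulErrorConst_pos (hB : 0 < B) (hA : 0 < A) : 0 < mulErrorConst B A :=
  mul_pos (mul_pos quotientConst_pos hB) hA

lemma powErrorConst_pos (hB : 0 < B) (hA : 0 < A) : 0 < powErrorConst j B A := by
  have := mulErrorConst_pos hB hA
  unfold powErrorConst
  positivity

/-- The polynomials `p` and `q` are of moderate size on the disc of radius `4` and behave there,
up to an error measured by `τ`, like the powers `f ^ j` and `f ^ (j + 1)` of one function. -/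
structure AreAlmostPowers (j n : ℕ) (B τ : ℝ) (p q : ℂ[X]) : Prop where
  natDegree_le : p.natDegree ≤ n
  norm_eval_left_le : ∀ ζ, ‖ζ‖ ≤ 4 → ‖p.eval ζ‖ ≤ B
  norm_eval_right_le : ∀ ζ, ‖ζ‖ ≤ 4 → ‖q.eval ζ‖ ≤ B
  norm_pow_sub_pow_le : ∀ ζ, ‖ζ‖ ≤ 4 → ‖p.eval ζ ^ (j + 1) - q.eval ζ ^ j‖ ≤ τ ^ (j * (j + 1))

lemma mul_two_mul_le_of_mul_four_pow_le (hA : 0 ≤ A) (hγ : 0 ≤ γ) (hκ : 0 ≤ κ) (hκ₁ : κ ≤ 1)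
    (hγκ : A * (4 ^ j * (2 * γ)) ≤ κ ^ (j + 1)) : A * (2 * γ) ≤ κ :=
  have h4 : (1 : ℝ) ≤ 4 ^ j := one_le_pow₀ (by norm_num)
  calc A * (2 * γ) ≤ A * (4 ^ j * (2 * γ)) :=
        mul_le_mul_of_nonneg_left (le_mul_of_one_le_left (by positivity) h4) hA
    _ ≤ κ ^ (j + 1) := hγκ
    _ ≤ κ := pow_le_of_le_one hκ hκ₁ j.succ_ne_zero

lemma mul_pow_succ_le (hγ : 0 ≤ γ) (hA : A * (2 * γ) ≤ 1) (n : ℕ) :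
    A * γ ^ (n + 1) ≤ γ ^ n :=
  calc A * γ ^ (n + 1) = γ ^ n * (A * γ) := by ring
    _ ≤ γ ^ n := mul_le_of_le_one_right (by positivity) (by nlinarith)

lemma AreAlmostPowers.isApproxSolution_zero (hj : j ≠ 0) {B τ : ℝ}
    (h : AreAlmostPowers j n B τ p q) (hτ : 0 ≤ τ) (hτε : τ ≤ ε) (hε₁ : ε ≤ 1)
    (hp : ∀ z, ‖z‖ ≤ 1 → ‖p.eval z‖ ≤ ε) {z : ℂ} (hz : ‖z‖ ≤ 1) :
    IsApproxSolution j (2 * ε) 0 (p.eval z) (q.eval z) := by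
  refine _root_.isApproxSolution_zero hj (hτ.trans hτε) hε₁ (hp z hz)
    ((h.norm_pow_sub_pow_le z (by linarith)).trans ?_)
  calc τ ^ (j * (j + 1)) ≤ τ ^ j :=
        pow_le_pow_of_le_one hτ (hτε.trans hε₁) (Nat.le_mul_of_pos_right j j.succ_pos)
    _ ≤ ε ^ j := by gcongr

lemma AreAlmostPowers.exists_norm_mul_sub_le (hj : j ≠ 0)
    (h : AreAlmostPowers j n B (A * γ ^ (n + 1)) p q) (hB : 1 ≤ B) (hA : 1 ≤ A) (hγ : 0 < γ)
    (hAγ : A * (2 * γ) ≤ 1) (hp : p ≠ 0) :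
    ∃ F : ℂ → ℂ, DifferentiableOn ℂ F (Metric.ball 0 (3 / 2)) ∧ ∀ z, ‖z‖ ≤ 1 →
      ‖F z * p.eval z - q.eval z‖ ≤ mulErrorConst B A * (2 * γ) ^ n := by
  have hγ₁ : γ ≤ 1 := by nlinarith
  have hτ₁ : A * γ ^ (n + 1) ≤ 1 :=
    (mul_pow_succ_le hγ.le hAγ n).trans (pow_le_one₀ hγ.le hγ₁)
  obtain ⟨F, hF, hFpq⟩ := exists_differentiableOn_norm_mul_sub_le hp hj hB h.norm_eval_left_le
    h.norm_eval_right_le (by positivity) hτ₁ h.norm_pow_sub_pow_le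
  refine ⟨F, hF, fun z hz => (hFpq z hz).trans ?_⟩
  have hdeg : (p.natDegree : ℝ) + 1 ≤ 2 ^ n := by
    exact_mod_cast (Nat.succ_le_succ h.natDegree_le).trans n.lt_two_pow_self
  have hγn : γ ^ (n + 1) ≤ γ ^ n := pow_le_pow_of_le_one hγ.le hγ₁ n.le_succ
  have := quotientConst_pos
  calc quotientConst * B * (p.natDegree + 1) * (A * γ ^ (n + 1))
      ≤ quotientConst * B * 2 ^ n * (A * γ ^ n) := by gcongr
    _ = mulErrorConst B A * (2 * γ) ^ n := by rw [mulErrorConst, mul_pow]; ring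

lemma AreAlmostPowers.norm_pow_mul_pow_sub_le (hj : j ≠ 0)
    (h : AreAlmostPowers j n B (A * γ ^ (n + 1)) p q) (hB : 0 < B) (hA : 1 ≤ A) (hγ : 0 < γ)
    (hAγ : A * (2 * γ) ≤ 1) {z : ℂ} (hz : ‖z‖ ≤ 1)
    (hF : ‖F z * p.eval z - q.eval z‖ ≤ mulErrorConst B A * (2 * γ) ^ n) :
    ‖p.eval z ^ j * (F z ^ j - p.eval z)‖ ≤ powErrorConst j B A * (2 * γ) ^ n := by
  have hm := mulErrorConst_pos hB (by linarith : 0 < A)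
  have hγ₂ : 2 * γ ≤ 1 := by nlinarith
  have hτ₁ : A * γ ^ (n + 1) ≤ 1 :=
    (mul_pow_succ_le hγ.le hAγ n).trans (pow_le_one₀ hγ.le (by linarith))
  have hpow : ‖p.eval z ^ (j + 1) - q.eval z ^ j‖ ≤ A * (2 * γ) ^ n :=
    calc ‖p.eval z ^ (j + 1) - q.eval z ^ j‖ ≤ (A * γ ^ (n + 1)) ^ (j * (j + 1)) :=
          h.norm_pow_sub_pow_le z (by linarith)
      _ ≤ A * γ ^ (n + 1) := pow_le_of_le_one (by positivity) hτ₁ (by positivity)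
      _ ≤ A * γ ^ n := by
          gcongr ?_ * ?_
          exact pow_le_pow_of_le_one hγ.le (by linarith) n.le_succ
      _ ≤ A * (2 * γ) ^ n := by
          gcongr
          linarith
  have hle : mulErrorConst B A * (2 * γ) ^ n ≤ mulErrorConst B A :=
    mul_le_of_le_one_right hm.le (pow_le_one₀ (by positivity) hγ₂)
  calc ‖p.eval z ^ j * (F z ^ j - p.eval z)‖
      ≤ j * (B + mulErrorConst B A * (2 * γ) ^ n) ^ (j - 1) * (mulErrorConst B A * (2 * γ) ^ n) +
          ‖p.eval z ^ (j + 1) - q.eval z ^ j‖ :=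
        _root_.norm_pow_mul_pow_sub_le (h.norm_eval_right_le z (by linarith)) hF j
    _ ≤ j * (B + mulErrorConst B A) ^ (j - 1) * (mulErrorConst B A * (2 * γ) ^ n) +
          A * (2 * γ) ^ n := by gcongr
    _ = powErrorConst j B A * (2 * γ) ^ n := by rw [powErrorConst]; ring

lemma isApproxSolution_approxConst (hj : j ≠ 0) (hB : 0 < B) (hA : 0 < A) (hκ : 0 ≤ κ)
    (hκ₁ : κ ≤ 1) {x p q : ℂ} (hp : ‖p‖ ≤ B) (hpow : ‖x ^ j - p‖ ≤ powErrorConst j B A * κ)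
    (hmul : ‖x * p - q‖ ≤ mulErrorConst B A * κ) :
    ‖x‖ ≤ approxConst j B A ∧ IsApproxSolution j (approxConst j B A * κ) x p q := by
  have hm := mulErrorConst_pos hB hA
  have hpw := powErrorConst_pos (j := j) hB hA
  refine ⟨?_, hpow.trans ?_, hmul.trans ?_⟩
  · have hx := norm_le_of_norm_pow_sub_le hj (hpow.trans (mul_le_of_le_one_right hpw.le hκ₁))
    rw [approxConst]
    linarith
  all_goals
    rw [approxConst]
    gcongr
    linarith

/- If `p` is small on the unit disc, `F = 0` will do. Otherwise the holomorphic quotient of `q` by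
`p` is an approximate solution: the bound for `p ^ j * (F ^ j - p)` can be divided by `p ^ j`,
because `p ^ j` is not small somewhere in the unit disc. -/
lemma AreAlmostPowers.exists_isApproxSolution (hj : j ≠ 0)
    (h : AreAlmostPowers j n B (A * γ ^ (n + 1)) p q) (hB : 1 ≤ B) (hA : 1 ≤ A) (hγ : 0 < γ)
    (hκ : 0 < κ) (hκ₁ : κ ≤ 1) (hγκ : A * (4 ^ j * (2 * γ)) ≤ κ ^ (j + 1)) :
    ∃ F : ℂ → ℂ, DifferentiableOn ℂ F (Metric.ball 0 (3 / 2)) ∧ ∀ z, ‖z‖ ≤ 1 / 2 →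
      ‖F z‖ ≤ approxConst j B A ∧
        IsApproxSolution j (approxConst j B A * κ ^ n) (F z) (p.eval z) (q.eval z) := by
  have hAκ := mul_two_mul_le_of_mul_four_pow_le (by linarith) hγ.le hκ.le hκ₁ hγκ
  have hγ₂κ : 2 * γ ≤ κ := by nlinarith
  have hκn : κ ^ n ≤ 1 := pow_le_one₀ hκ.le hκ₁
  have hm := mulErrorConst_pos (by linarith : 0 < B) (by linarith : 0 < A)
  have hpw := powErrorConst_pos (j := j) (by linarith : 0 < B) (by linarith : 0 < A)
  by_cases hsmall : ∀ z, ‖z‖ ≤ 1 → ‖p.eval z‖ ≤ κ ^ n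
  · have hτκ : A * γ ^ (n + 1) ≤ κ ^ n :=
      (mul_pow_succ_le hγ.le (hAκ.trans hκ₁) n).trans (by gcongr; linarith)
    refine ⟨0, differentiableOn_const _, fun z hz => ⟨?_, ?_⟩⟩
    · rw [Pi.zero_apply, norm_zero, approxConst]
      linarith
    · refine (h.isApproxSolution_zero hj (by positivity) hτκ hκn hsmall (by linarith)).mono ?_
      gcongr
      rw [approxConst]
      linarith
  · push Not at hsmall
    obtain ⟨w, hw, hpw_gt⟩ := hsmall
    have hp : p ≠ 0 := by
      rintro rfl
      rw [eval_zero, norm_zero] at hpw_gt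
      exact hpw_gt.not_ge (by positivity)
    obtain ⟨F, hF, hmul⟩ := h.exists_norm_mul_sub_le hj hB hA hγ (hAκ.trans hκ₁) hp
    refine ⟨F, hF, fun z hz => isApproxSolution_approxConst hj (by linarith) (by linarith)
      (by positivity) hκn (h.norm_eval_left_le z (by linarith)) ?_ ?_⟩
    · refine norm_pow_sub_eval_le hpw.le hκ (by positivity) ?_ h.natDegree_le hF
        (fun z hz => h.norm_pow_mul_pow_sub_le hj (by linarith) hA hγ (hAκ.trans hκ₁) hz.le
          (hmul z hz.le)) hw hpw_gt.le hz
      exact (le_mul_of_one_le_left (by positivity) hA).trans hγκ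
    · exact (hmul z (by linarith)).trans (by gcongr)

lemma areAlmostPowers_of_X_pow_dvd (hj : j ≠ 0) {C β : ℝ} (hA : 1 ≤ A)
    (hAC : (2 * C) ^ (j + 1) + (2 * C) ^ j ≤ A) (hγ : 0 < γ) (hβ : 0 < β)
    (hβγ : 8 * β = γ ^ (j * (j + 1))) (hβ₈ : β ≤ 1 / 8) (hdeg : p.natDegree ≤ n)
    (hp : ∀ k, ‖p.coeff k‖ ≤ C * β ^ k) (hq : ∀ k, ‖q.coeff k‖ ≤ C * β ^ k)
    (hdvd : X ^ (n + 1) ∣ p ^ (j + 1) - q ^ j) :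
    AreAlmostPowers j n (2 * C) (A * γ ^ (n + 1)) p q := by
  have h4 : 4 ≤ 1 / (2 * β) := by
    rw [le_div_iff₀ (by positivity)]
    linarith
  have hpB {ζ : ℂ} (hζ : ‖ζ‖ ≤ 1 / (2 * β)) := norm_eval_le_two_mul_of_norm_coeff_le hβ hp hζ
  have hqB {ζ : ℂ} (hζ : ‖ζ‖ ≤ 1 / (2 * β)) := norm_eval_le_two_mul_of_norm_coeff_le hβ hq hζ
  refine ⟨hdeg, fun ζ hζ => hpB (hζ.trans h4), fun ζ hζ => hqB (hζ.trans h4), fun ζ hζ => ?_⟩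
  have hcircle (ξ : ℂ) (hξ : ‖ξ‖ = 1 / (2 * β)) : ‖(p ^ (j + 1) - q ^ j).eval ξ‖ ≤ A := by
    rw [eval_sub, eval_pow, eval_pow]
    refine (norm_sub_le _ _).trans (le_trans ?_ hAC)
    rw [norm_pow, norm_pow]
    gcongr
    exacts [hpB hξ.le, hqB hξ.le]
  have hschwarz := norm_eval_le_of_X_pow_dvd (by positivity) hdvd hcircle (hζ.trans h4)
  rw [eval_sub, eval_pow, eval_pow] at hschwarz
  refine hschwarz.trans ?_
  calc A * (‖ζ‖ / (1 / (2 * β))) ^ (n + 1) ≤ A * (8 * β) ^ (n + 1) := by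
        gcongr
        rw [div_le_iff₀ (by positivity)]
        field_simp
        linarith
    _ = A * (γ ^ (n + 1)) ^ (j * (j + 1)) := by rw [hβγ, pow_right_comm]
    _ ≤ A ^ (j * (j + 1)) * (γ ^ (n + 1)) ^ (j * (j + 1)) := by
        gcongr
        exact le_self_pow₀ hA (by positivity)
    _ = (A * γ ^ (n + 1)) ^ (j * (j + 1)) := (mul_pow _ _ _).symm

/-- Compatible polynomials whose coefficients decay like `C * β ^ k` have, on the disc of radius
`1 / 2`, holomorphic approximate solutions of size `K`, with errors `K * κ ^ n` in degree `n`. -/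
def IsDivisionRate (j : ℕ) (C κ β K : ℝ) : Prop :=
  ∀ (n : ℕ) (p q : ℂ[X]), p.natDegree ≤ n →
    (∀ k, ‖p.coeff k‖ ≤ C * β ^ k) → (∀ k, ‖q.coeff k‖ ≤ C * β ^ k) →
    X ^ (n + 1) ∣ p ^ (j + 1) - q ^ j →
    ∃ F : ℂ → ℂ, DifferentiableOn ℂ F (Metric.ball 0 (3 / 2)) ∧ ∀ z, ‖z‖ ≤ 1 / 2 →
      ‖F z‖ ≤ K ∧ IsApproxSolution j (K * κ ^ n) (F z) (p.eval z) (q.eval z)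

theorem exists_isDivisionRate (hj : j ≠ 0) {C : ℝ} (hC : 1 ≤ C) (hκ : 0 < κ) (hκ₁ : κ ≤ 1) :
    ∃ β K : ℝ, 0 < β ∧ β ≤ κ ∧ 1 ≤ K ∧ IsDivisionRate j C κ β K := by
  set A : ℝ := (2 * C) ^ (j + 1) + (2 * C) ^ j
  have hA : 1 ≤ A := by
    have : 1 ≤ (2 * C) ^ (j + 1) := one_le_pow₀ (by linarith)
    have : 0 ≤ (2 * C) ^ j := by positivity
    linarith
  set γ : ℝ := κ ^ (j + 1) / (A * (4 ^ j * 2)) with hγ_def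
  have hγ : 0 < γ := by positivity
  have hγκ : A * (4 ^ j * (2 * γ)) = κ ^ (j + 1) := by
    rw [hγ_def]
    field_simp
  have hAκ := mul_two_mul_le_of_mul_four_pow_le (by linarith) hγ.le hκ.le hκ₁ hγκ.le
  have hγ_le : γ ^ (j * (j + 1)) ≤ γ := pow_le_of_le_one hγ.le (by nlinarith) (by positivity)
  have hβ₈ : γ ^ (j * (j + 1)) / 8 ≤ 1 / 8 := by
    gcongr
    nlinarith
  refine ⟨γ ^ (j * (j + 1)) / 8, approxConst j (2 * C) A, by positivity, by nlinarith, ?_, ?_⟩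
  · have := mulErrorConst_pos (by linarith : 0 < 2 * C) (by linarith : 0 < A)
    have := powErrorConst_pos (j := j) (by linarith : 0 < 2 * C) (by linarith : 0 < A)
    rw [approxConst]
    linarith
  · intro n p q hdeg hp hq hdvd
    exact (areAlmostPowers_of_X_pow_dvd hj hA le_rfl hγ (by positivity)
      (mul_div_cancel₀ _ (by norm_num)) hβ₈ hdeg hp hq hdvd).exists_isApproxSolution hj
      (by linarith) hA hγ hκ hκ₁ hγκ.le

end LocalQuotient

section TaylorBounds

open Polynomial

/-- The `n`-th partial sum `∑ k ≤ n, a k * X ^ k` of the power series with coefficients `a`. -/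
def partialSum (a : ℕ → ℂ) (n : ℕ) : ℂ[X] := PowerSeries.trunc (n + 1) (PowerSeries.mk a)

lemma coeff_partialSum (a : ℕ → ℂ) (n k : ℕ) :
    (partialSum a n).coeff k = if k < n + 1 then a k else 0 := by
  rw [partialSum, PowerSeries.coeff_trunc, PowerSeries.coeff_mk]

lemma natDegree_partialSum_le (a : ℕ → ℂ) (n : ℕ) : (partialSum a n).natDegree ≤ n :=
  Nat.lt_succ_iff.mp (PowerSeries.natDegree_trunc_lt _ n)

lemma eval_partialSum (a : ℕ → ℂ) (n : ℕ) (z : ℂ) :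
    (partialSum a n).eval z = ∑ k ∈ Finset.range (n + 1), a k * z ^ k := by
  rw [partialSum, ← Polynomial.eval₂_id, PowerSeries.eval₂_trunc_eq_sum_range]
  simp

/-- `g` has on `[0, r]` the asymptotic expansion `∑ a k * t ^ k`, with coefficients and remainders
controlled by the sequence `m`. -/
structure HasTaylorBounds (m : ℕ → ℝ) (C σ : ℝ) (g : ℝ → ℂ) (a : ℕ → ℂ) (r : ℝ) : Prop where
  norm_coeff_le : ∀ k, ‖a k‖ ≤ C * σ ^ k * m k
  norm_sub_le : ∀ n (t : ℝ), 0 ≤ t → t ≤ r →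
    ‖g t - (partialSum a n).eval (t : ℂ)‖ ≤ C * σ ^ (n + 1) * m (n + 1) * t ^ (n + 1)

variable {m Λ : ℕ → ℝ} {C A C₀ σ β κ ρ r K : ℝ} {f g : ℝ → ℂ} {a b : ℕ → ℂ} {j n : ℕ}

lemma HasTaylorBounds.isBigO (h : HasTaylorBounds m C₀ σ g a r) (hr : 0 < r) (n : ℕ) :
    (fun t => g t - (partialSum a n).eval (t : ℂ)) =O[𝓝[>] 0] fun t => t ^ (n + 1) := by
  refine IsBigO.of_bound (C₀ * σ ^ (n + 1) * m (n + 1)) ?_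
  filter_upwards [Ioc_mem_nhdsGT hr] with t ht
  rw [Real.norm_of_nonneg (by have := ht.1; positivity)]
  exact h.norm_sub_le n t ht.1.le ht.2

lemma IsGrowthScale.mul_pow_le (hs : IsGrowthScale m Λ C A) (hC₀ : 0 ≤ C₀) (hσ : 0 ≤ σ)
    (hρ : 0 ≤ ρ) (hρβ : σ * (C * Λ n) * ρ ≤ β) {k : ℕ} (hk : k ≤ n + 1) :
    C₀ * σ ^ k * m k * ρ ^ k ≤ C₀ * β ^ k := by
  have := hs.scale_pos n
  have := hs.one_le_left
  calc C₀ * σ ^ k * m k * ρ ^ k ≤ C₀ * σ ^ k * (C * Λ n) ^ k * ρ ^ k := by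
        gcongr
        exact hs.seq_le n k hk
    _ = C₀ * (σ * (C * Λ n) * ρ) ^ k := by rw [mul_pow, mul_pow]; ring
    _ ≤ C₀ * β ^ k := by gcongr

lemma HasTaylorBounds.norm_coeff_comp_le (h : HasTaylorBounds m C₀ σ g a r)
    (hs : IsGrowthScale m Λ C A) (hC₀ : 0 ≤ C₀) (hσ : 0 ≤ σ) (hρ : 0 ≤ ρ) (hβ : 0 ≤ β)
    (hρβ : σ * (C * Λ n) * ρ ≤ β) (k : ℕ) :
    ‖((partialSum a n).comp (Polynomial.C (ρ : ℂ) * X)).coeff k‖ ≤ C₀ * β ^ k := by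
  rw [comp_C_mul_X_coeff, coeff_partialSum]
  split_ifs with hk
  · rw [norm_mul, norm_pow, Complex.norm_of_nonneg hρ]
    refine le_trans ?_ (hs.mul_pow_le hC₀ hσ hρ hρβ hk.le)
    gcongr
    exact h.norm_coeff_le k
  · rw [zero_mul, norm_zero]
    positivity

lemma exists_differentiableOn_isApproxSolution (hdiv : IsDivisionRate j C₀ κ β K)
    (hs : IsGrowthScale m Λ C A) (hC₀ : 0 ≤ C₀) (hσ : 0 ≤ σ) (hρ : 0 < ρ) (hβ : 0 ≤ β)
    (hρβ : σ * (C * Λ n) * ρ ≤ β) (hr : 0 < r)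
    (ha : HasTaylorBounds m C₀ σ (fun t => f t ^ j) a r)
    (hb : HasTaylorBounds m C₀ σ (fun t => f t ^ (j + 1)) b r) :
    ∃ G : ℂ → ℂ, DifferentiableOn ℂ G (Metric.ball 0 ρ) ∧ ∀ z, ‖z‖ ≤ ρ / 2 →
      ‖G z‖ ≤ K ∧ IsApproxSolution j (K * κ ^ n) (G z) ((partialSum a n).eval z)
        ((partialSum b n).eval z) := by
  set S : ℂ[X] := Polynomial.C (ρ : ℂ) * X with hS
  have hdvd : X ^ (n + 1) ∣ (partialSum a n).comp S ^ (j + 1) - (partialSum b n).comp S ^ j := by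
    obtain ⟨w, hw⟩ := X_pow_dvd_pow_sub_pow_of_isBigO (ha.isBigO hr n) (hb.isBigO hr n)
    rw [← pow_comp, ← pow_comp, ← sub_comp, hw, mul_comp, pow_comp, X_comp, hS, mul_pow, mul_assoc]
    exact (dvd_mul_right _ _).mul_left _
  have hdeg : ((partialSum a n).comp S).natDegree ≤ n :=
    natDegree_comp_le.trans ((Nat.mul_le_mul (natDegree_partialSum_le a n)
      ((natDegree_C_mul_le _ _).trans natDegree_X_le)).trans_eq (mul_one n))
  obtain ⟨F, hF, hFsol⟩ := hdiv n ((partialSum a n).comp S) ((partialSum b n).comp S)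
    hdeg (ha.norm_coeff_comp_le hs hC₀ hσ hρ.le hβ hρβ)
    (hb.norm_coeff_comp_le hs hC₀ hσ hρ.le hβ hρβ) hdvd
  refine ⟨fun z => F (z / ρ), hF.comp (by fun_prop) fun z hz => ?_, fun z hz => ?_⟩
  · rw [mem_ball_zero_iff] at hz ⊢
    rw [norm_div, Complex.norm_of_nonneg hρ.le, div_lt_iff₀ hρ]
    linarith
  · have hz' : ‖z / ρ‖ ≤ 1 / 2 := by
      rw [norm_div, Complex.norm_of_nonneg hρ.le, div_le_iff₀ hρ]
      linarith
    have heval (p : ℂ[X]) : (p.comp S).eval (z / ρ) = p.eval z := by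
      have : (ρ : ℂ) ≠ 0 := by exact_mod_cast hρ.ne'
      rw [eval_comp, hS, eval_mul, eval_C, eval_X, mul_div_cancel₀ _ this]
    have hsol := hFsol (z / ρ) hz'
    rwa [heval, heval] at hsol

end TaylorBounds

section HolomorphicApproximation

variable {m Λ : ℕ → ℝ} {C A C₀ c σ β κ r K : ℝ} {f g : ℝ → ℂ} {a b : ℕ → ℂ} {j n : ℕ}

lemma HasTaylorBounds.norm_sub_eval_le (h : HasTaylorBounds m C₀ σ g a r)
    (hs : IsGrowthScale m Λ C A) (hC₀ : 0 ≤ C₀) (hσ : 0 ≤ σ) {t : ℝ} (ht : 0 ≤ t) (htr : t ≤ r)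
    (htβ : σ * (C * Λ n) * t ≤ β) :
    ‖g t - (partialSum a n).eval (t : ℂ)‖ ≤ C₀ * β ^ (n + 1) :=
  (h.norm_sub_le n t ht htr).trans (hs.mul_pow_le hC₀ hσ ht htβ le_rfl)

lemma HasTaylorBounds.norm_eval_succ_sub_eval_le (h : HasTaylorBounds m C₀ σ g a r)
    (hs : IsGrowthScale m Λ C A) (hC₀ : 0 ≤ C₀) (hσ : 0 ≤ σ) {z : ℂ}
    (hzβ : σ * (C * Λ n) * ‖z‖ ≤ β) :
    ‖(partialSum a (n + 1)).eval z - (partialSum a n).eval z‖ ≤ C₀ * β ^ (n + 1) := by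
  rw [eval_partialSum, eval_partialSum, Finset.sum_range_succ, add_sub_cancel_left, norm_mul,
    norm_pow]
  refine le_trans ?_ (hs.mul_pow_le hC₀ hσ (norm_nonneg z) hzβ le_rfl)
  gcongr
  exact h.norm_coeff_le (n + 1)

lemma IsDivisionRate.mono {L : ℝ} (h : IsDivisionRate j C κ β K) (hκ : 0 ≤ κ) (hKL : K ≤ L) :
    IsDivisionRate j C κ β L := by
  intro n p q hdeg hp hq hdvd
  obtain ⟨F, hF, hFsol⟩ := h n p q hdeg hp hq hdvd
  refine ⟨F, hF, fun z hz => ⟨(hFsol z hz).1.trans hKL, (hFsol z hz).2.mono ?_⟩⟩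
  gcongr

/-- The functions `G n` are holomorphic and uniformly bounded on discs of radius comparable to
`1 / Λ n`, where they approximate both each other and `f` at the geometric rate `κ ^ n`. -/
structure IsHolomorphicApprox (Λ : ℕ → ℝ) (c K κ r : ℝ) (f : ℝ → ℂ) (G : ℕ → ℂ → ℂ) : Prop where
  differentiableOn : ∀ n, DifferentiableOn ℂ (G n) (Metric.ball 0 (2 * (c / Λ n)))
  differentiableOn_succ : ∀ n, DifferentiableOn ℂ (G (n + 1)) (Metric.ball 0 (2 * (c / Λ n)))
  norm_le : ∀ n z, ‖z‖ ≤ c / Λ n → ‖G n z‖ ≤ K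
  norm_succ_sub_le : ∀ n z, ‖z‖ ≤ c / Λ n → ‖G (n + 1) z - G n z‖ ≤ K * κ ^ n
  norm_sub_le : ∀ n (t : ℝ), 0 ≤ t → t ≤ r → t ≤ c / Λ n → ‖f t - G n t‖ ≤ K * κ ^ n

lemma IsApproxSolution.norm_sub_le_mul_pow (hj : j ≠ 0) {x y p q p' q' : ℂ}
    (hx : IsApproxSolution j (K * (κ ^ (j + 1)) ^ n) x p q)
    (hy : IsApproxSolution j (K * (κ ^ (j + 1)) ^ n) y p' q')
    (hp : ‖p - p'‖ ≤ K * (κ ^ (j + 1)) ^ n) (hq : ‖q - q'‖ ≤ K * (κ ^ (j + 1)) ^ n)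
    (hK : 1 ≤ K) (hyK : ‖y‖ ≤ K) (hκ : 0 < κ) (hκ₁ : κ ≤ 1) :
    ‖x - y‖ ≤ (K ^ 2 + 6 * K + 2) * κ ^ n :=
  hx.norm_sub_le_mul hj hy hp hq hK hyK (by positivity) (pow_le_one₀ hκ.le hκ₁)
    (by rw [pow_right_comm])

/-- The radius of the disc on which the polynomials of degree `n` in the Taylor expansion have
coefficients of size `β ^ k` after rescaling. -/
def divisionRadius (Λ : ℕ → ℝ) (C σ β : ℝ) (n : ℕ) : ℝ := β / (σ * (C * Λ n))

lemma IsGrowthScale.divisionRadius_pos (hs : IsGrowthScale m Λ C A) (hσ : 0 < σ) (hβ : 0 < β)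
    (n : ℕ) : 0 < divisionRadius Λ C σ β n := by
  have := hs.scale_pos n
  have := hs.one_le_left
  unfold divisionRadius
  positivity

lemma IsGrowthScale.mul_divisionRadius (hs : IsGrowthScale m Λ C A) (hσ : 0 < σ) (n : ℕ) :
    σ * (C * Λ n) * divisionRadius Λ C σ β n = β := by
  have := hs.scale_pos n
  have := hs.one_le_left
  exact mul_div_cancel₀ _ (by positivity)

lemma IsGrowthScale.two_mul_div_le_divisionRadius (hs : IsGrowthScale m Λ C A) (hσ : 0 < σ)
    (hβ : 0 < β) (n : ℕ) : 2 * (β / (2 * C ^ 2 * σ) / Λ n) ≤ divisionRadius Λ C σ β n := by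
  have := hs.scale_pos n
  have := hs.one_le_left
  calc 2 * (β / (2 * C ^ 2 * σ) / Λ n) = β / (σ * (C * Λ n)) / C := by field_simp
    _ ≤ divisionRadius Λ C σ β n :=
        div_le_self (hs.divisionRadius_pos hσ hβ n).le hs.one_le_left

lemma IsGrowthScale.two_mul_div_le_divisionRadius_succ (hs : IsGrowthScale m Λ C A) (hσ : 0 < σ)
    (hβ : 0 < β) (n : ℕ) : 2 * (β / (2 * C ^ 2 * σ) / Λ n) ≤ divisionRadius Λ C σ β (n + 1) := by
  have := hs.scale_pos n
  have := hs.scale_pos (n + 1)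
  have := hs.one_le_left
  calc 2 * (β / (2 * C ^ 2 * σ) / Λ n) = β / (σ * (C * (C * Λ n))) := by field_simp
    _ ≤ β / (σ * (C * Λ (n + 1))) := by
        gcongr
        exact hs.scale_succ_le n

lemma exists_isHolomorphicApprox_of_isDivisionRate
    (hdiv : IsDivisionRate j C₀ (κ ^ (j + 1)) β K) (hs : IsGrowthScale m Λ C A) (hj : j ≠ 0)
    (hC₀ : 0 ≤ C₀) (hC₀K : C₀ ≤ K) (hK : 1 ≤ K) (hσ : 0 < σ) (hκ : 0 < κ) (hκ₁ : κ ≤ 1)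
    (hβ : 0 < β) (hβκ : β ≤ κ ^ (j + 1)) (hr : 0 < r)
    (ha : HasTaylorBounds m C₀ σ (fun t => f t ^ j) a r)
    (hb : HasTaylorBounds m C₀ σ (fun t => f t ^ (j + 1)) b r) :
    ∃ G, IsHolomorphicApprox Λ (β / (2 * C ^ 2 * σ)) (K ^ 2 + 6 * K + 2) κ r f G := by
  choose G hG hGsol using fun n => exists_differentiableOn_isApproxSolution hdiv hs hC₀ hσ.le
    (hs.divisionRadius_pos hσ hβ n) hβ.le (hs.mul_divisionRadius hσ n).le hr ha hb
  have hrad := hs.two_mul_div_le_divisionRadius hσ hβ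
  have hrad_succ := hs.two_mul_div_le_divisionRadius_succ hσ hβ
  have hκ₁' : κ ^ (j + 1) ≤ 1 := pow_le_one₀ hκ.le hκ₁
  have hrem (n : ℕ) : C₀ * β ^ (n + 1) ≤ K * (κ ^ (j + 1)) ^ n := by
    gcongr ?_ * ?_
    exact (pow_le_pow_left₀ hβ.le hβκ _).trans
      (pow_le_pow_of_le_one (by positivity) hκ₁' n.le_succ)
  have hscale {n : ℕ} {t : ℝ} (ht : t ≤ β / (2 * C ^ 2 * σ) / Λ n) : σ * (C * Λ n) * t ≤ β := by
    have := hs.scale_pos n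
    have := hs.one_le_left
    have := hs.divisionRadius_pos hσ hβ n
    rw [← hs.mul_divisionRadius hσ (β := β) n]
    gcongr
    linarith [hrad n]
  refine ⟨G, fun n => (hG n).mono (Metric.ball_subset_ball (hrad n)),
    fun n => (hG (n + 1)).mono (Metric.ball_subset_ball (hrad_succ n)), fun n z hz => ?_,
    fun n z hz => ?_, fun n t ht htr htn => ?_⟩
  · have := (hGsol n z (by linarith [hrad n])).1
    nlinarith
  · obtain ⟨hGK, hGn⟩ := hGsol n z (by linarith [hrad n])
    have hGn_succ := (hGsol (n + 1) z (by linarith [hrad_succ n])).2.mono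
      (δ := K * (κ ^ (j + 1)) ^ n)
      (by gcongr ?_ * ?_; exact pow_le_pow_of_le_one (by positivity) hκ₁' n.le_succ)
    exact hGn_succ.norm_sub_le_mul_pow hj hGn
      ((ha.norm_eval_succ_sub_eval_le hs hC₀ hσ.le (hscale hz)).trans (hrem n))
      ((hb.norm_eval_succ_sub_eval_le hs hC₀ hσ.le (hscale hz)).trans (hrem n)) hK hGK hκ hκ₁
  · obtain ⟨hGK, hGn⟩ := hGsol n t (by
      rw [Complex.norm_of_nonneg ht]
      linarith [hrad n])
    exact ((isApproxSolution_self j (f t)).mono (by positivity)).norm_sub_le_mul_pow hj hGn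
      ((ha.norm_sub_eval_le hs hC₀ hσ.le ht htr (hscale htn)).trans (hrem n))
      ((hb.norm_sub_eval_le hs hC₀ hσ.le ht htr (hscale htn)).trans (hrem n)) hK hGK hκ hκ₁

theorem exists_isHolomorphicApprox (hs : IsGrowthScale m Λ C A) (hj : j ≠ 0) (hC₀ : 1 ≤ C₀)
    (hσ : 0 < σ) (hκ : 0 < κ) (hκ₁ : κ ≤ 1) :
    ∃ c K : ℝ, 0 < c ∧ 0 < K ∧ ∀ (r : ℝ) (f : ℝ → ℂ) (a b : ℕ → ℂ), 0 < r →
      HasTaylorBounds m C₀ σ (fun t => f t ^ j) a r →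
      HasTaylorBounds m C₀ σ (fun t => f t ^ (j + 1)) b r →
      ∃ G, IsHolomorphicApprox Λ c K κ r f G := by
  obtain ⟨β, K, hβ, hβκ, hK, hdiv⟩ := exists_isDivisionRate hj hC₀ (pow_pos hκ (j + 1))
    (pow_le_one₀ hκ.le hκ₁)
  have hKL : K ≤ K + C₀ := by linarith
  have := hs.one_le_left
  refine ⟨β / (2 * C ^ 2 * σ), (K + C₀) ^ 2 + 6 * (K + C₀) + 2, by positivity, by positivity,
    fun r f a b hr ha hb => ?_⟩
  exact exists_isHolomorphicApprox_of_isDivisionRate (hdiv.mono (by positivity) hKL) hs hj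
    (by linarith) (by linarith) (by linarith) hσ hκ hκ₁ hβ hβκ hr ha hb

end HolomorphicApproximation

section DifferencesOfHolomorphicFunctions

lemma fwdDiff_iter_sub {V F : Type*} [AddCommMonoid V] [AddCommGroup F] (t : V) (g₁ g₂ : V → F)
    (k : ℕ) : Δ_[t] ^[k] (g₁ - g₂) = Δ_[t] ^[k] g₁ - Δ_[t] ^[k] g₂ := by
  simp only [← fwdDiff_aux.coe_fwdDiffₗ_pow, map_sub]

lemma norm_fwdDiff_iter_le_two_pow_mul {V F : Type*} [AddCommMonoid V]
    [SeminormedAddCommGroup F] {g : V → F} {x t : V} {B : ℝ} {k : ℕ}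
    (h : ∀ l ≤ k, ‖g (x + l • t)‖ ≤ B) : ‖Δ_[t] ^[k] g x‖ ≤ 2 ^ k * B := by
  induction k generalizing g B with
  | zero => simpa using h 0 le_rfl
  | succ k ih =>
    rw [Function.iterate_succ_apply, pow_succ, mul_assoc]
    refine ih fun l hl => ?_
    have hsucc := h (l + 1) (by omega)
    rw [succ_nsmul, ← add_assoc] at hsucc
    exact (norm_sub_le _ _).trans (by linarith [h l (by omega)])

lemma norm_fwdDiff_iter_comp_ofReal_le {H : ℂ → ℂ} {R B t : ℝ} {k : ℕ} (ht : 0 ≤ t) (hR : 0 < R)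
    (hkt : k * t ≤ R / 2) (hH : DifferentiableOn ℂ H (Metric.ball 0 (2 * R)))
    (hB : ∀ z, ‖z‖ ≤ R → ‖H z‖ ≤ B) :
    ‖Δ_[t] ^[k] (fun s : ℝ => H s) 0‖ ≤ B * k.factorial * (2 * t / R) ^ k := by
  have hnorm {s : ℝ} (hs : s ∈ Icc 0 (0 + k * t)) : ‖(s : ℂ)‖ ≤ R / 2 := by
    rw [Complex.norm_of_nonneg hs.1]
    linarith [hs.2]
  have hanalytic : AnalyticOnNhd ℂ H (Metric.ball 0 (2 * R)) :=
    hH.analyticOnNhd Metric.isOpen_ball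
  have hderiv : ∀ i < k, ∀ s ∈ Icc (0 : ℝ) (0 + k * t),
      HasDerivAt (fun s : ℝ => iteratedDeriv i H s) (iteratedDeriv (i + 1) H s) s := by
    intro i _ s hs
    have hs_mem : (s : ℂ) ∈ Metric.ball 0 (2 * R) := by
      rw [mem_ball_zero_iff]
      linarith [hnorm hs]
    rw [iteratedDeriv_succ, iteratedDeriv_eq_iterate]
    exact (hanalytic.iterated_deriv i s hs_mem).differentiableAt.hasDerivAt.comp_ofReal
  have hcauchy : ∀ s ∈ Icc (0 : ℝ) (0 + k * t),
      ‖iteratedDeriv k H s - 0‖ ≤ k.factorial * B / (R / 2) ^ k := by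
    intro s hs
    rw [sub_zero]
    have hball : Metric.closedBall (s : ℂ) (R / 2) ⊆ Metric.closedBall 0 R := by
      refine Metric.closedBall_subset_closedBall' ?_
      rw [dist_zero_right]
      linarith [hnorm hs]
    refine Complex.norm_iteratedDeriv_le_of_forall_mem_sphere_norm_le k (by linarith)
      (hH.diffContOnCl_ball (hball.trans (Metric.closedBall_subset_ball (by linarith))))
      fun z hz => hB z ?_
    exact mem_closedBall_zero_iff.mp (hball (Metric.sphere_subset_closedBall hz))
  have hdiff :=
    norm_fwdDiff_iter_sub_le (G := fun i (s : ℝ) => iteratedDeriv i H s) ht hderiv hcauchy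
  rw [smul_zero, sub_zero, iteratedDeriv_zero] at hdiff
  refine hdiff.trans_eq ?_
  rw [div_pow, div_pow, mul_pow]
  field_simp

end DifferencesOfHolomorphicFunctions

section DifferenceBounds

variable {m Λ : ℕ → ℝ} {C A C₀ c σ κ r t K : ℝ} {f : ℝ → ℂ} {G : ℕ → ℂ → ℂ} {j k N : ℕ}

lemma exists_forall_le_and_succ_lt {u : ℕ → ℝ} (hu : Tendsto u atTop (𝓝 0)) {s : ℝ} (hs : 0 < s)
    (hs₁ : s ≤ u 1) : ∃ N, 1 ≤ N ∧ (∀ i, 1 ≤ i → i ≤ N → s ≤ u i) ∧ u (N + 1) < s := by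
  classical
  have hex : ∃ n, u (n + 1) < s :=
    (((tendsto_add_atTop_iff_nat 1).mpr hu).eventually_lt_const hs).exists
  refine ⟨Nat.find hex, (Nat.find_pos hex).mpr hs₁.not_gt, fun i hi hiN => ?_, Nat.find_spec hex⟩
  have := Nat.find_min hex (m := i - 1) (by omega)
  rwa [Nat.sub_add_cancel hi, not_lt] at this

lemma IsGrowthScale.norm_fwdDiff_iter_comp_ofReal_le (hs : IsGrowthScale m Λ C A) {H : ℂ → ℂ}
    {B : ℝ} {i : ℕ} (hi : 1 ≤ i) (hc : 0 < c) (ht : 0 ≤ t) (hkt : k * t ≤ c / Λ i / 2)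
    (hH : DifferentiableOn ℂ H (Metric.ball 0 (2 * (c / Λ i))))
    (hB : ∀ z, ‖z‖ ≤ c / Λ i → ‖H z‖ ≤ B) :
    ‖Δ_[t] ^[k] (fun s : ℝ => H s) 0‖ ≤
      B * A ^ i * ((4 * A * Real.exp 1 / c * t) ^ k * (k.factorial * m k)) := by
  have := hs.scale_pos i
  have := hs.seq_pos k
  have := hs.one_le_right
  have hB₀ : 0 ≤ B := (norm_nonneg _).trans (hB 0 (by rw [norm_zero]; positivity))
  have h24 : 2 * A ≤ 4 * A * Real.exp 1 := by nlinarith [Real.one_le_exp zero_le_one]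
  calc ‖Δ_[t] ^[k] (fun s : ℝ => H s) 0‖
      ≤ B * k.factorial * (2 * t / (c / Λ i)) ^ k :=
        _root_.norm_fwdDiff_iter_comp_ofReal_le ht (by positivity) hkt hH hB
    _ = B * k.factorial * ((2 * t / c) ^ k * Λ i ^ k) := by
        rw [← mul_pow]
        congr 2
        field_simp
    _ ≤ B * k.factorial * ((2 * t / c) ^ k * (A ^ (i + k) * m k)) := by
        gcongr
        exact hs.scale_pow_le i hi k
    _ = B * A ^ i * ((2 * A / c * t) ^ k * (k.factorial * m k)) := by
        rw [pow_add, mul_pow, div_pow, div_pow, mul_pow, mul_pow]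
        ring
    _ ≤ B * A ^ i * ((4 * A * Real.exp 1 / c * t) ^ k * (k.factorial * m k)) := by
        gcongr

/- The pieces `G (i + 1) - G i` contribute `κ ^ i * A ^ i = (1 / 2) ^ i`: a geometric sum. -/
lemma IsHolomorphicApprox.norm_fwdDiff_iter_approx_le (h : IsHolomorphicApprox Λ c K κ r f G)
    (hs : IsGrowthScale m Λ C A) (hκA : κ * A = 1 / 2) (hc : 0 < c) (ht : 0 ≤ t)
    (hkt : ∀ i, 1 ≤ i → i ≤ N → k * t ≤ c / Λ i / 2) (hN : 1 ≤ N) :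
    ‖Δ_[t] ^[k] (fun s : ℝ => G N s) 0‖ ≤ (2 - 2 * (1 / 2) ^ N) *
      (K * A * ((4 * A * Real.exp 1 / c * t) ^ k * (k.factorial * m k))) := by
  have := hs.seq_pos k
  have hA := hs.one_le_right
  have hK : 0 ≤ K := by
    have := hs.scale_pos 0
    exact (norm_nonneg _).trans (h.norm_le 0 0 (by rw [norm_zero]; positivity))
  set Y : ℝ := (4 * A * Real.exp 1 / c * t) ^ k * (k.factorial * m k)
  have : 0 ≤ Y := by positivity
  induction N, hN using Nat.le_induction with
  | base =>
    have := hs.norm_fwdDiff_iter_comp_ofReal_le le_rfl hc ht (hkt 1 le_rfl le_rfl)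
      (h.differentiableOn 1) (h.norm_le 1)
    rw [pow_one] at this
    linarith
  | succ n hn ih =>
    have hpiece := hs.norm_fwdDiff_iter_comp_ofReal_le hn hc ht (hkt n hn n.le_succ)
      ((h.differentiableOn_succ n).sub (h.differentiableOn n)) (h.norm_succ_sub_le n)
    have hsplit : (fun s : ℝ => (G (n + 1) - G n) s) =
        (fun s : ℝ => G (n + 1) s) - fun s : ℝ => G n s := rfl
    rw [hsplit, fwdDiff_iter_sub, Pi.sub_apply, norm_sub_rev, mul_assoc K, ← mul_pow, hκA] at hpiece
    have hKA : K * (1 / 2) ^ n * Y ≤ (1 / 2) ^ n * (K * A * Y) := by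
      have : 0 ≤ K * (1 / 2) ^ n * Y := by positivity
      nlinarith
    have := norm_le_norm_add_norm_sub (Δ_[t] ^[k] (fun s : ℝ => G n s) 0)
      (Δ_[t] ^[k] (fun s : ℝ => G (n + 1) s) 0)
    have := ih fun i hi hin => hkt i hi (hin.trans n.le_succ)
    rw [pow_succ]
    linarith

lemma IsHolomorphicApprox.norm_fwdDiff_iter_sub_le (h : IsHolomorphicApprox Λ c K κ r f G)
    (hs : IsGrowthScale m Λ C A) (hκA : κ * A = 1 / 2) (hc : 0 < c) (hK : 0 ≤ K) (ht : 0 ≤ t)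
    (hktr : k * t ≤ r) (hkt : k * t ≤ c / Λ N / 2) (hkt_lt : c / Λ (N + 1) / 2 < k * t) :
    ‖Δ_[t] ^[k] f 0 - Δ_[t] ^[k] (fun s : ℝ => G N s) 0‖ ≤
      K * A * ((4 * A * Real.exp 1 / c * t) ^ k * (k.factorial * m k)) := by
  have := hs.scale_pos (N + 1)
  have := hs.seq_pos k
  have hA := hs.one_le_right
  have hκ : 0 < κ := pos_of_mul_pos_left (by rw [hκA]; norm_num) (by linarith)
  have hsup : ‖Δ_[t] ^[k] (f - fun s : ℝ => G N s) 0‖ ≤ 2 ^ k * (K * κ ^ N) := by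
    refine norm_fwdDiff_iter_le_two_pow_mul fun l hl => ?_
    rw [zero_add, nsmul_eq_mul]
    have hlt : (l : ℝ) * t ≤ k * t := by gcongr
    have hlt₀ : 0 ≤ (l : ℝ) * t := by positivity
    exact h.norm_sub_le N (l * t) hlt₀ (hlt.trans hktr) (by linarith)
  have hone : 1 ≤ (2 * (k * t) / c * Λ (N + 1)) ^ k := by
    apply one_le_pow₀
    rw [div_div, div_lt_iff₀ (by positivity)] at hkt_lt
    rw [div_mul_eq_mul_div, le_div_iff₀ hc]
    linarith
  have hstirling : (k : ℝ) ^ k ≤ Real.exp 1 ^ k * k.factorial := by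
    simpa using pow_sub_mul_factorial_le k.zero_le
  rw [← Pi.sub_apply, ← fwdDiff_iter_sub]
  calc ‖Δ_[t] ^[k] (f - fun s : ℝ => G N s) 0‖ ≤ 2 ^ k * (K * κ ^ N) := hsup
    _ ≤ 2 ^ k * (K * κ ^ N) * (2 * (k * t) / c * Λ (N + 1)) ^ k :=
        le_mul_of_one_le_right (by positivity) hone
    _ = 2 ^ k * (K * κ ^ N) * ((2 * t / c) ^ k * (k : ℝ) ^ k * Λ (N + 1) ^ k) := by
        rw [← mul_pow, ← mul_pow]
        congr 2
        ring
    _ ≤ 2 ^ k * (K * κ ^ N) *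
          ((2 * t / c) ^ k * (Real.exp 1 ^ k * k.factorial) * (A ^ (N + 1 + k) * m k)) := by
        gcongr
        exact hs.scale_pow_le (N + 1) N.succ_pos k
    _ = K * A * (κ * A) ^ N * ((2 * (2 * A) * Real.exp 1 / c * t) ^ k * (k.factorial * m k)) := by
        simp only [pow_add, mul_pow, div_pow]
        ring
    _ ≤ K * A * 1 * ((2 * (2 * A) * Real.exp 1 / c * t) ^ k * (k.factorial * m k)) := by
        gcongr
        exact pow_le_one₀ (by positivity) (by rw [hκA]; norm_num)
    _ = K * A * ((4 * A * Real.exp 1 / c * t) ^ k * (k.factorial * m k)) := by ring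

lemma IsHolomorphicApprox.norm_apply_zero_le (h : IsHolomorphicApprox Λ c K κ r f G)
    (hs : IsGrowthScale m Λ C A) (hκA : κ * A = 1 / 2) (hc : 0 < c) (hr : 0 ≤ r) :
    ‖f 0‖ ≤ 3 * (K * A * m 0) := by
  have hrad : 0 ≤ c / Λ 1 := div_nonneg hc.le (hs.scale_pos 1).le
  have hGf := h.norm_sub_le 1 0 le_rfl hr hrad
  have hG := h.norm_le 1 0 (by rwa [norm_zero])
  have hK : 0 ≤ K := (norm_nonneg _).trans hG
  have hm : 1 ≤ A * m 0 := by simpa using hs.scale_pow_le 1 le_rfl 0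
  have hκ : κ ≤ 1 := by nlinarith [hs.one_le_right]
  have := norm_le_norm_add_norm_sub (G 1 0) (f 0)
  rw [Complex.ofReal_zero, norm_sub_rev, pow_one] at hGf
  nlinarith

/- The index `N` is chosen such that the `k` steps of length `t` just fit into the disc on which
`G N` is controlled. -/
lemma IsHolomorphicApprox.norm_fwdDiff_iter_le (h : IsHolomorphicApprox Λ c K κ r f G)
    (hs : IsGrowthScale m Λ C A) (hκA : κ * A = 1 / 2) (hc : 0 < c) (hK : 0 ≤ K) (ht : 0 < t)
    (hktr : k * t ≤ r) (hkt : k * t ≤ c / Λ 1 / 2) :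
    ‖Δ_[t] ^[k] f 0‖ ≤
      3 * K * A * (4 * A * Real.exp 1 / c) ^ k * (k.factorial * m k) * t ^ k := by
  rcases Nat.eq_zero_or_pos k with rfl | hk
  · have := h.norm_apply_zero_le hs hκA hc (by simpa using hktr)
    simpa [mul_assoc] using this
  have hradius : Tendsto (fun n => c / Λ n / 2) atTop (𝓝 0) := by
    simpa using (hs.tendsto_scale.const_div_atTop c).div_const 2
  obtain ⟨N, hN, hle, hlt⟩ := exists_forall_le_and_succ_lt hradius (by positivity) hkt
  have happrox := h.norm_fwdDiff_iter_approx_le hs hκA hc ht.le hle hN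
  have hrem := h.norm_fwdDiff_iter_sub_le hs hκA hc hK ht.le hktr (hle N hN le_rfl) hlt
  have := norm_le_norm_add_norm_sub (Δ_[t] ^[k] (fun s : ℝ => G N s) 0) (Δ_[t] ^[k] f 0)
  rw [norm_sub_rev] at this
  have := hs.seq_pos k
  have := hs.one_le_right
  have hpos : 0 ≤ (1 / 2 : ℝ) ^ N *
      (K * A * ((4 * A * Real.exp 1 / c * t) ^ k * (k.factorial * m k))) := by positivity
  calc ‖Δ_[t] ^[k] f 0‖
      ≤ 3 * (K * A * ((4 * A * Real.exp 1 / c * t) ^ k * (k.factorial * m k))) := by linarith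
    _ = 3 * K * A * (4 * A * Real.exp 1 / c) ^ k * (k.factorial * m k) * t ^ k := by
        rw [mul_pow]
        ring

theorem exists_norm_fwdDiff_iter_le_of_hasTaylorBounds (hs : IsGrowthScale m Λ C A) (hj : j ≠ 0)
    (hC₀ : 1 ≤ C₀) (hσ : 0 < σ) :
    ∃ D S : ℝ, 0 < D ∧ 0 < S ∧ ∀ r > 0, ∀ k : ℕ, ∃ T > 0, ∀ (f : ℝ → ℂ) (a b : ℕ → ℂ),
      HasTaylorBounds m C₀ σ (fun t => f t ^ j) a r →
      HasTaylorBounds m C₀ σ (fun t => f t ^ (j + 1)) b r →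
      ∀ t, 0 < t → t < T → ‖Δ_[t] ^[k] f 0‖ ≤ D * S ^ k * (k.factorial * m k) * t ^ k := by
  have hA := hs.one_le_right
  obtain ⟨c, K, hc, hK, hG⟩ := exists_isHolomorphicApprox hs hj hC₀ hσ
    (κ := 1 / (2 * A)) (by positivity) (div_le_one_of_le₀ (by linarith) (by positivity))
  refine ⟨3 * K * A, 4 * A * Real.exp 1 / c, by positivity, by positivity, fun r hr k => ?_⟩
  have := hs.scale_pos 1
  refine ⟨min r (c / Λ 1 / 2) / (k + 1), by positivity, fun f a b ha hb t ht htT => ?_⟩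
  obtain ⟨G, hG⟩ := hG r f a b hr ha hb
  have hkt : k * t ≤ min r (c / Λ 1 / 2) := by
    rw [lt_div_iff₀ (by positivity)] at htT
    linarith
  exact hG.norm_fwdDiff_iter_le hs (by field_simp) hc hK.le ht (hkt.trans (min_le_left _ _))
    (hkt.trans (min_le_right _ _))

end DifferenceBounds

section PropertyD

lemma continuousWithinAt_of_pow_of_pow_succ {X 𝕜 : Type*} [TopologicalSpace X] [NormedField 𝕜]
    {f : X → 𝕜} {s : Set X} {x : X} {j : ℕ} (hj : j ≠ 0) (h : ContinuousWithinAt (f ^ j) s x)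
    (h_succ : ContinuousWithinAt (f ^ (j + 1)) s x) : ContinuousWithinAt f s x := by
  by_cases hx : f x = 0
  · rw [Metric.continuousWithinAt_iff'] at h ⊢
    intro ε hε
    filter_upwards [h (ε ^ j) (by positivity)] with y hy
    rw [Pi.pow_apply, Pi.pow_apply, hx, zero_pow hj, dist_zero_right, norm_pow] at hy
    rw [hx, dist_zero_right]
    exact lt_of_pow_lt_pow_left₀ j hε.le hy
  · have hpow : (f ^ j) x ≠ 0 := pow_ne_zero j hx
    have hquot (y : X) (hy : (f ^ j) y ≠ 0) : f y = (f ^ (j + 1)) y / (f ^ j) y := by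
      rw [eq_div_iff hy, Pi.pow_apply, Pi.pow_apply, pow_succ']
    refine (h_succ.div h hpow).congr_of_eventuallyEq ?_ (hquot x hpow)
    filter_upwards [h.eventually_ne hpow] with y hy using hquot y hy

variable {M m Λ : ℕ → ℝ} {C A σ ρ r : ℝ} {j : ℕ}

lemma HasTaylorBounds.congr {g₁ g₂ : ℝ → ℂ} {a : ℕ → ℂ} (h : HasTaylorBounds m C σ g₁ a r)
    (hg : EqOn g₂ g₁ (Icc 0 r)) : HasTaylorBounds m C σ g₂ a r :=
  ⟨h.norm_coeff_le, fun n t ht htr => by rw [hg ⟨ht, htr⟩]; exact h.norm_sub_le n t ht htr⟩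

/- Only the remainder needs `2 * σ`: the factor `n + 1` by which it exceeds the `m`-bound is
absorbed by `2 ^ (n + 1)`. -/
lemma hasTaylorBounds_of_norm_iteratedDeriv_le {ψ : ℝ → ℂ} (hψ : ContDiff ℝ ∞ ψ) (hr : 0 < r)
    (h : ∀ k, ∀ t ∈ Icc 0 r, ‖iteratedDeriv k ψ t‖ ≤ C * σ ^ k * M k) :
    HasTaylorBounds (mseq M) C (2 * σ) ψ (fun k => iteratedDeriv k ψ 0 / k.factorial) r := by
  have h₀ : (0 : ℝ) ∈ Icc 0 r := left_mem_Icc.mpr hr.le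
  have hnonneg (k : ℕ) : 0 ≤ C * σ ^ k * mseq M k := by
    have := (norm_nonneg _).trans (h k 0 h₀)
    rw [mseq, ← mul_div_assoc]
    positivity
  have hwithin (k : ℕ) {t : ℝ} (ht : t ∈ Icc 0 r) :
      iteratedDerivWithin k ψ (Icc 0 r) t = iteratedDeriv k ψ t :=
    iteratedDerivWithin_eq_iteratedDeriv (uniqueDiffOn_Icc hr)
      (hψ.contDiffAt.of_le (by exact_mod_cast le_top)) ht
  refine ⟨fun k => ?_, fun n t ht htr => ?_⟩
  · rw [norm_div, Complex.norm_natCast, div_le_iff₀ (by positivity)]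
    calc ‖iteratedDeriv k ψ 0‖ ≤ C * σ ^ k * M k := h k 0 h₀
      _ = C * σ ^ k * mseq M k * k.factorial := by rw [mul_assoc _ (mseq M k), mseq_mul_factorial]
      _ ≤ 2 ^ k * (C * σ ^ k * mseq M k * k.factorial) :=
          le_mul_of_one_le_left (mul_nonneg (hnonneg k) (by positivity))
            (one_le_pow₀ one_le_two)
      _ = C * (2 * σ) ^ k * mseq M k * k.factorial := by rw [mul_pow]; ring
  · have htaylor := taylor_mean_remainder_bound (n := n) hr.le
      (hψ.contDiffOn.of_le (by exact_mod_cast le_top)) ⟨ht, htr⟩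
      fun y hy => (congrArg norm (hwithin (n + 1) hy)).trans_le (h (n + 1) y hy)
    have hpoly : taylorWithinEval ψ n (Icc 0 r) 0 t =
        (partialSum (fun k => iteratedDeriv k ψ 0 / k.factorial) n).eval (t : ℂ) := by
      rw [taylor_within_apply, eval_partialSum]
      refine Finset.sum_congr rfl fun k _ => ?_
      rw [hwithin k h₀, Complex.real_smul, sub_zero]
      push_cast
      ring
    have htwo : ((n + 1 : ℕ) : ℝ) ≤ 2 ^ (n + 1) := by exact_mod_cast Nat.lt_two_pow_self.le
    rw [hpoly, sub_zero, ← mseq_mul_factorial M, Nat.factorial_succ] at htaylor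
    calc ‖ψ t - (partialSum (fun k => iteratedDeriv k ψ 0 / k.factorial) n).eval (t : ℂ)‖
        ≤ C * σ ^ (n + 1) * (mseq M (n + 1) * ((n + 1) * n.factorial : ℕ)) * t ^ (n + 1) /
            n.factorial := htaylor
      _ = (n + 1 : ℕ) * (C * σ ^ (n + 1) * mseq M (n + 1)) * t ^ (n + 1) := by
          push_cast
          field_simp
      _ ≤ 2 ^ (n + 1) * (C * σ ^ (n + 1) * mseq M (n + 1)) * t ^ (n + 1) := by
          gcongr
          exact hnonneg (n + 1)
      _ = C * (2 * σ) ^ (n + 1) * mseq M (n + 1) * t ^ (n + 1) := by rw [mul_pow]; ring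

variable {E : Type*} [NormedAddCommGroup E] [NormedSpace ℝ E] {f g : E → ℂ} {U V W : Set E}

/-- `g` is smooth on `V`, with derivatives bounded in terms of the weight sequence `M`; this is
the estimate in `RoumieuOn` with explicit constants. -/
structure HasDerivBounds (M : ℕ → ℝ) (C σ : ℝ) (g : E → ℂ) (V : Set E) : Prop where
  contDiffOn : ContDiffOn ℝ ∞ g V
  norm_iteratedFDeriv_le : ∀ x ∈ V, ∀ k, ‖iteratedFDeriv ℝ k g x‖ ≤ C * σ ^ k * M k

lemma HasDerivBounds.mono (h : HasDerivBounds M C σ g V) (hWV : W ⊆ V) :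
    HasDerivBounds M C σ g W :=
  ⟨h.contDiffOn.mono hWV, fun x hx => h.norm_iteratedFDeriv_le x (hWV hx)⟩

lemma HasDerivBounds.mono_const (h : HasDerivBounds M C σ g V) (hM : ∀ k, 0 ≤ M k) {C' σ' : ℝ}
    (hC : 0 ≤ C) (hσ : 0 ≤ σ) (hCC' : C ≤ C') (hσσ' : σ ≤ σ') : HasDerivBounds M C' σ' g V := by
  refine ⟨h.contDiffOn, fun x hx k => (h.norm_iteratedFDeriv_le x hx k).trans ?_⟩
  have := hM k
  have := hC.trans hCC'
  gcongr

lemma RoumieuOn.exists_hasDerivBounds (h : RoumieuOn M g U) (hU : IsOpen U) (hV : IsOpen V)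
    (hVc : IsCompact (closure V)) (hVU : closure V ⊆ U) :
    ∃ C σ : ℝ, 0 < C ∧ 0 < σ ∧ HasDerivBounds M C σ g V := by
  obtain ⟨C, σ, hC, hσ, hbound⟩ := h.2 V hV hVc hVU
  refine ⟨C, σ, hC, hσ, h.1.mono (subset_closure.trans hVU), fun x hx k => ?_⟩
  rw [← iteratedFDerivWithin_of_isOpen k hU (hVU (subset_closure hx))]
  exact hbound x hx k

lemma HasDerivBounds.roumieuOn (h : HasDerivBounds M C σ g U) (hU : IsOpen U) (hC : 0 < C)
    (hσ : 0 < σ) : RoumieuOn M g U := by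
  refine ⟨h.contDiffOn, fun V _ _ hVU => ⟨C, σ, hC, hσ, fun x hx k => ?_⟩⟩
  have hxU := hVU (subset_closure hx)
  rw [iteratedFDerivWithin_of_isOpen k hU hxU]
  exact h.norm_iteratedFDeriv_le x hxU k

lemma RoumieuOn.exists_hasDerivBounds_pair {g₁ g₂ : E → ℂ} {U₁ U₂ : Set E}
    (h₁ : RoumieuOn M g₁ U₁) (h₂ : RoumieuOn M g₂ U₂) (hU₁ : IsOpen U₁) (hU₂ : IsOpen U₂)
    (hM : ∀ k, 0 ≤ M k) (hV : IsOpen V) (hVc : IsCompact (closure V))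
    (hVU : closure V ⊆ U₁ ∩ U₂) :
    ∃ C σ : ℝ, 1 ≤ C ∧ 0 < σ ∧ HasDerivBounds M C σ g₁ V ∧ HasDerivBounds M C σ g₂ V := by
  obtain ⟨C₁, σ₁, hC₁, hσ₁, hg₁⟩ :=
    h₁.exists_hasDerivBounds hU₁ hV hVc (hVU.trans inter_subset_left)
  obtain ⟨C₂, σ₂, hC₂, hσ₂, hg₂⟩ :=
    h₂.exists_hasDerivBounds hU₂ hV hVc (hVU.trans inter_subset_right)
  exact ⟨max 1 (max C₁ C₂), max σ₁ σ₂, le_max_left _ _, hσ₁.trans_le (le_max_left _ _),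
    hg₁.mono_const hM hC₁.le hσ₁.le (by simp) (by simp),
    hg₂.mono_const hM hC₂.le hσ₂.le (by simp) (by simp)⟩

variable [FiniteDimensional ℝ E]

lemma HasDerivBounds.exists_hasTaylorBounds {x : E} {R : ℝ}
    (h : HasDerivBounds M C σ g (Metric.ball x R)) (hr : 0 < r) (hrR : r < R) {v : E}
    (hv : ‖v‖ ≤ 1) : ∃ a, HasTaylorBounds (mseq M) C (2 * σ) (fun t => g (x + t • v)) a r := by
  obtain ⟨s, hrs, hsR⟩ := exists_between hrR
  obtain ⟨G, hG, hGg⟩ := exists_contDiff_eqOn_ball (hr.trans hrs) hsR h.contDiffOn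
  have hline {t : ℝ} (ht : t ∈ Icc 0 r) : x + t • v ∈ Metric.ball x s := by
    rw [mem_ball_iff_norm, add_sub_cancel_left, norm_smul, Real.norm_of_nonneg ht.1]
    nlinarith [ht.1, ht.2, norm_nonneg v]
  refine ⟨_, (hasTaylorBounds_of_norm_iteratedDeriv_le (ψ := fun t => G (x + t • v))
    (hG.comp (by fun_prop)) hr fun k t ht => ?_).congr fun t ht => (hGg (hline ht)).symm⟩
  have hGg_near : G =ᶠ[𝓝 (x + t • v)] g :=
    hGg.eventuallyEq_of_mem (Metric.isOpen_ball.mem_nhds (hline ht))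
  rw [iteratedDeriv_comp_line (hG.of_le (by exact_mod_cast le_top)),
    (hGg_near.iteratedFDeriv ℝ k).eq_of_nhds]
  refine (ContinuousMultilinearMap.le_opNorm_mul_pow_of_le _
    ((pi_norm_le_iff_of_nonneg zero_le_one).mpr fun _ => hv)).trans ?_
  rw [one_pow, mul_one]
  exact h.norm_iteratedFDeriv_le _ (Metric.ball_subset_ball hsR.le (hline ht)) k

theorem exists_hasDerivBounds_of_pow_of_pow_succ (hs : IsGrowthScale (mseq M) Λ C A)
    (hj : j ≠ 0) {C₀ : ℝ} (hC₀ : 1 ≤ C₀) (hσ : 0 < σ) (hρ : 0 < ρ) {x₀ : E}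
    (h : HasDerivBounds M C₀ σ (f ^ j) (Metric.ball x₀ ρ))
    (h_succ : HasDerivBounds M C₀ σ (f ^ (j + 1)) (Metric.ball x₀ ρ)) :
    ∃ D S : ℝ, 0 < D ∧ 0 < S ∧ HasDerivBounds M D S f (Metric.ball x₀ (ρ / 2)) := by
  obtain ⟨D, S, hD, hS, hdiff⟩ :=
    exists_norm_fwdDiff_iter_le_of_hasTaylorBounds hs hj hC₀ (by positivity : 0 < 2 * σ)
  have hhalf : Metric.ball x₀ (ρ / 2) ⊆ Metric.ball x₀ ρ := Metric.ball_subset_ball (by linarith)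
  have hcont : ContinuousOn f (Metric.ball x₀ (ρ / 2)) := fun x hx =>
    continuousWithinAt_of_pow_of_pow_succ hj ((h.contDiffOn.mono hhalf).continuousOn x hx)
      ((h_succ.contDiffOn.mono hhalf).continuousOn x hx)
  have hsmooth := contDiffOn_of_norm_fwdDiff_iter_le
    (B := fun k => D * S ^ k * (k.factorial * mseq M k)) Metric.isOpen_ball hcont fun k => by
      obtain ⟨T, hT, hfT⟩ := hdiff (ρ / 4) (by positivity) k
      refine ⟨T, hT, fun x hx v hv t ht htT => ?_⟩
      have hball : Metric.ball x (ρ / 2) ⊆ Metric.ball x₀ ρ :=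
        Metric.ball_subset_ball' (by linarith [Metric.mem_ball.mp hx])
      obtain ⟨a, ha⟩ := (h.mono hball).exists_hasTaylorBounds (r := ρ / 4) (by positivity)
        (by linarith) hv
      obtain ⟨b, hb⟩ := (h_succ.mono hball).exists_hasTaylorBounds (r := ρ / 4) (by positivity)
        (by linarith) hv
      rw [← fwdDiff_iter_comp_line]
      exact hfT (fun s => f (x + s • v)) a b ha hb t ht htT
  refine ⟨D, Real.exp 1 * S, hD, by positivity, hsmooth.1, fun x hx k => ?_⟩
  refine (hsmooth.2 k x hx).trans_eq ?_
  rw [mul_comm (k.factorial : ℝ), mseq_mul_factorial, mul_pow]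
  ring

theorem statement1_general (hM : IsWeightSeq M) (hreg : RegularWS M) (hmg : ModerateGrowth M)
    (f : E → ℂ) (j : ℕ) (hj : 1 ≤ j)
    (h1 : ∃ U : Set E, IsOpen U ∧ 0 ∈ U ∧ RoumieuOn M (f ^ j) U)
    (h2 : ∃ U : Set E, IsOpen U ∧ 0 ∈ U ∧ RoumieuOn M (f ^ (j + 1)) U) :
    ∃ U : Set E, IsOpen U ∧ 0 ∈ U ∧ RoumieuOn M f U := by
  obtain ⟨U₁, hU₁, h0U₁, hfU₁⟩ := h1
  obtain ⟨U₂, hU₂, h0U₂, hfU₂⟩ := h2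
  obtain ⟨ρ, hρ, hρU⟩ := Metric.nhds_basis_closedBall.mem_iff.mp
    ((hU₁.inter hU₂).mem_nhds ⟨h0U₁, h0U₂⟩)
  have hclosure : closure (Metric.ball (0 : E) ρ) ⊆ Metric.closedBall 0 ρ :=
    Metric.closure_ball_subset_closedBall
  obtain ⟨C₀, σ, hC₀, hσ, hf, hf_succ⟩ := hfU₁.exists_hasDerivBounds_pair hfU₂ hU₁ hU₂
    (fun k => (hM.pos k).le) Metric.isOpen_ball
    ((isCompact_closedBall _ _).of_isClosed_subset isClosed_closure hclosure)
    (hclosure.trans hρU)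
  obtain ⟨C, A, hs⟩ := hM.exists_isGrowthScale hreg hmg
  obtain ⟨D, S, hD, hS, hfDS⟩ := exists_hasDerivBounds_of_pow_of_pow_succ hs
    (Nat.one_le_iff_ne_zero.mp hj) hC₀ hσ hρ hf hf_succ
  exact ⟨Metric.ball 0 (ρ / 2), Metric.isOpen_ball, Metric.mem_ball_self (half_pos hρ),
    hfDS.roumieuOn Metric.isOpen_ball hD hS⟩

end PropertyD

/-- the ring of germs at `0 ∈ ℝ^d` of `E^{M}`-functions has property (D)
for a non-quasianalytic regular weight sequence `M` of moderate growth. -/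
theorem statement1 (d : ℕ) (hd : 1 ≤ d) (M : ℕ → ℝ)
    (hM : IsWeightSeq M) (hreg : RegularWS M) (hnq : NonQuasianalytic M)
    (hmg : ModerateGrowth M)
    (f : EuclideanSpace ℝ (Fin d) → ℂ) (j : ℕ) (hj : 1 ≤ j)
    (h1 : ∃ U : Set (EuclideanSpace ℝ (Fin d)), IsOpen U ∧ 0 ∈ U ∧ RoumieuOn M (f ^ j) U)
    (h2 : ∃ U : Set (EuclideanSpace ℝ (Fin d)), IsOpen U ∧ 0 ∈ U ∧
      RoumieuOn M (f ^ (j + 1)) U) :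
    ∃ U : Set (EuclideanSpace ℝ (Fin d)), IsOpen U ∧ 0 ∈ U ∧ RoumieuOn M f U :=
  statement1_general hM hreg hmg f j hj h1 h2
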